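/- Let j be a positive real number. Then the following are equivalent: (a) rank_ℤ E^{(D)}(ℚ) < 2j for every nonzero integer D (i.e., for every nonzero integer D there is no ℤ-linearly independent family of ⌈2j⌉ points in the abelian group E^{(D)}(ℚ)); (b) S_E(j,k,X) converges for some real k ≥ 1 and some broad set X ⊆ ℝ; (c) S_E(j,k) converges for every real k ≥ 1. -/

import Mathlib

noncomputable section

/-- `F(u,v) = v·(u³ + au²v + buv² + cv³) = v⁴ f(u/v)`. -/
def Fbin (a b c u v : ℤ) : ℤ := v * (u^3 + a*u^2*v + b*u*v^2 + c*v^3)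

/-- `Ψ = {(u,v) ∈ ℤ² : gcd(u,v) = 1 and F(u,v) ≠ 0}`. -/
def Psi (a b c : ℤ) : Set (ℤ × ℤ) := {p | Int.gcd p.1 p.2 = 1 ∧ Fbin a b c p.1 p.2 ≠ 0}

/-- `h(u/v) = max(1, log|u|, log|v|)` for coprime `u, v`. -/
def ht (u v : ℤ) : ℝ := max 1 (max (Real.log |(u : ℝ)|) (Real.log |(v : ℝ)|))

/-- the polynomial `f(x) = x³ + ax² + bx + c` has three distinct complex roots. -/
def DistinctRoots (a b c : ℤ) : Prop :=
  ∃ r₁ r₂ r₃ : ℂ, r₁ ≠ r₂ ∧ r₁ ≠ r₃ ∧ r₂ ≠ r₃ ∧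
    ∀ z : ℂ, z^3 + a*z^2 + b*z + c = (z - r₁) * (z - r₂) * (z - r₃)

/-- `sq` is a squarefree-part function: for nonzero `n`, `sq n` is squarefree and
`n = sq n · m²` for some rational `m`. -/
def IsSqfreePart (sq : ℤ → ℤ) : Prop :=
  ∀ n : ℤ, n ≠ 0 → Squarefree (sq n) ∧ ∃ m : ℚ, (n : ℚ) = sq n * m^2

/-- the general term `|s(F(u,v))|^{-k} · h(u/v)^{-j}` of `S_E(j,k)`. -/
def STerm (a b c : ℤ) (sq : ℤ → ℤ) (j k : ℝ) (p : ℤ × ℤ) : ℝ :=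
  |(sq (Fbin a b c p.1 p.2) : ℝ)| ^ (-k) * ht p.1 p.2 ^ (-j)

/-- index set of `S_E(j,k,X)`: `(u,v) ∈ Ψ` with `u/v ∈ X`. -/
def SIdx (a b c : ℤ) (X : Set ℝ) : Set (ℤ × ℤ) :=
  {p | p ∈ Psi a b c ∧ ((p.1 : ℝ) / (p.2 : ℝ)) ∈ X}

/-- `S_E(j,k,X)` converges. -/
def SConv (a b c : ℤ) (sq : ℤ → ℤ) (j k : ℝ) (X : Set ℝ) : Prop :=
  Summable fun p : SIdx a b c X => STerm a b c sq j k p.1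

/-- index set of `R_E(j,k,X)`: `t ≥ 1`, `(u,v) ∈ Ψ`, `u/v ∈ X`, `t² ∣ F(u,v)`. -/
def RIdx (a b c : ℤ) (X : Set ℝ) : Set (ℕ × ℤ × ℤ) :=
  {q | 1 ≤ q.1 ∧ q.2 ∈ Psi a b c ∧ ((q.2.1 : ℝ) / (q.2.2 : ℝ)) ∈ X ∧
    (q.1 : ℤ)^2 ∣ Fbin a b c q.2.1 q.2.2}

/-- the general term `t^{2k} · |F(u,v)|^{-k} · h(u/v)^{-j}` of `R_E(j,k)`. -/
def RTerm (a b c : ℤ) (j k : ℝ) (q : ℕ × ℤ × ℤ) : ℝ :=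
  (q.1 : ℝ) ^ (2*k) * |(Fbin a b c q.2.1 q.2.2 : ℝ)| ^ (-k) * ht q.2.1 q.2.2 ^ (-j)

/-- `R_E(j,k,X)` converges. -/
def RConv (a b c : ℤ) (j k : ℝ) (X : Set ℝ) : Prop :=
  Summable fun q : RIdx a b c X => RTerm a b c j k q.1

/-- `Ω_d = {α ∈ ℤ/d²ℤ : f(α) ≡ 0 (mod d²)}`. -/
def OmegaSet (a b c : ℤ) (d : ℕ) : Set (ZMod (d^2)) :=
  {α | α^3 + (a : ZMod (d^2))*α^2 + (b : ZMod (d^2))*α + (c : ZMod (d^2)) = 0}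

/-- the lattice `L_{α,d,d'} = {(u,v) : u ≡ αv (mod d²), v ≡ 0 (mod d'²)}`. -/
def latL (d d' : ℕ) (α : ZMod (d^2)) : Set (ℤ × ℤ) :=
  {p | ((p.1 : ZMod (d^2)) = α * (p.2 : ZMod (d^2))) ∧ ((d' : ℤ))^2 ∣ p.2}

/-- `ω` is a choice, for coprime `d, d' ≥ 1` and `α ∈ Ω_d`, of a shortest nonzero
vector `ω_{α,d,d'}` of the lattice `L_{α,d,d'}` for the Euclidean norm. -/
def IsShortestChoice (a b c : ℤ) (ω : (d d' : ℕ) → ZMod (d^2) → ℤ × ℤ) : Prop :=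
  ∀ d d' : ℕ, 0 < d → 0 < d' → Nat.Coprime d d' → ∀ α ∈ OmegaSet a b c d,
    ω d d' α ∈ latL d d' α ∧ ω d d' α ≠ 0 ∧
    ∀ p ∈ latL d d' α, p ≠ 0 →
      (ω d d' α).1^2 + (ω d d' α).2^2 ≤ p.1^2 + p.2^2

/-- index set of `Q_E(j,k)`: coprime `d, d' ≥ 1`, `α ∈ Ω_d`, `ω_{α,d,d'} ∈ Ψ`. -/
def QIdx (a b c : ℤ) (ω : (d d' : ℕ) → ZMod (d^2) → ℤ × ℤ) :
    Set (Σ d : ℕ, ℕ × ZMod (d^2)) :=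
  {x | 0 < x.1 ∧ 0 < x.2.1 ∧ Nat.Coprime x.1 x.2.1 ∧ x.2.2 ∈ OmegaSet a b c x.1 ∧
    ω x.1 x.2.1 x.2.2 ∈ Psi a b c}

/-- the general term `(dd')^{2k} · max(1, log(dd'))^{-j} · ‖ω_{α,d,d'}‖^{-4k}` of `Q_E(j,k)`. -/
def QTerm (j k : ℝ) (ω : (d d' : ℕ) → ZMod (d^2) → ℤ × ℤ)
    (x : Σ d : ℕ, ℕ × ZMod (d^2)) : ℝ :=
  ((x.1 : ℝ) * (x.2.1 : ℝ)) ^ (2*k) * max 1 (Real.log ((x.1 : ℝ) * (x.2.1 : ℝ))) ^ (-j) *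
    Real.sqrt (((ω x.1 x.2.1 x.2.2).1 : ℝ)^2 + ((ω x.1 x.2.1 x.2.2).2 : ℝ)^2) ^ (-(4*k))

/-- `Q_E(j,k)` converges. -/
def QConv (a b c : ℤ) (j k : ℝ) (ω : (d d' : ℕ) → ZMod (d^2) → ℤ × ℤ) : Prop :=
  Summable fun x : QIdx a b c ω => QTerm j k ω x.1

/-- the quadratic twist `E^{(D)} : Dy² = f(x)`, in Weierstrass form
`y² = x³ + aDx² + bD²x + cD³` (isomorphic via `(x,y) ↦ (Dx, D²y)`). -/
def twist (a b c D : ℤ) : WeierstrassCurve.Affine ℚ :=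
  { a₁ := 0, a₂ := a*D, a₃ := 0, a₄ := b*D^2, a₆ := c*D^3 }

/-- `rank_ℤ E^{(D)}(ℚ) < 2j` for every nonzero integer `D`: there is no
ℤ-linearly independent family of `⌈2j⌉` rational points on `E^{(D)}`. -/
def RankBound (a b c : ℤ) (j : ℝ) : Prop :=
  ∀ D : ℤ, D ≠ 0 →
    ¬ ∃ P : Fin ⌈2*j⌉₊ → (twist a b c D).Point, LinearIndependent ℤ P

/-- `X ⊆ ℝ` is broad: open, and meets both `(e_max, ∞)` and `(-∞, e_min)`. -/
def Broad (a b c : ℤ) (X : Set ℝ) : Prop :=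
  IsOpen X ∧ (∃ x ∈ X, ∀ r : ℝ, r^3 + a*r^2 + b*r + c = 0 → r < x) ∧
    (∃ x ∈ X, ∀ r : ℝ, r^3 + a*r^2 + b*r + c = 0 → x < r)

/-- the set of triples `(α, d, d')` with `d, d'` coprime positive integers,
`dd' = t`, and `α ∈ Ω_d`. -/
def TripSet (a b c : ℤ) (t : ℕ) : Set (Σ d : ℕ, ℕ × ZMod (d^2)) :=
  {x | 0 < x.1 ∧ 0 < x.2.1 ∧ Nat.Coprime x.1 x.2.1 ∧ x.1 * x.2.1 = t ∧
    x.2.2 ∈ OmegaSet a b c x.1}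

end


namespace RS

/-- parallelogram law -/
def Para {G : Type*} [AddCommGroup G] (q : G → ℝ) : Prop :=
  ∀ P Q : G, q (P + Q) + q (P - Q) = 2 * q P + 2 * q Q

section abstr
variable {G : Type*} [AddCommGroup G]

theorem Para.zero {q : G → ℝ} (h : Para q) : q 0 = 0 := by
  have := h 0 0
  simp at this; linarith

theorem Para.neg {q : G → ℝ} (h : Para q) (P : G) : q (-P) = q P := by
  have := h 0 P
  simp [h.zero] at this; linarith

theorem Para.nsmul {q : G → ℝ} (h : Para q) (P : G) (n : ℕ) : q (n • P) = n ^ 2 * q P := by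
  induction n using Nat.strong_induction_on with
  | _ n ih =>
    match n with
    | 0 => simp [h.zero]
    | 1 => simp
    | (k+2) =>
      have h1 := ih (k+1) (by omega)
      have h0 := ih k (by omega)
      have := h ((k+1) • P) P
      have e1 : (k+1) • P + P = (k+2) • P := by rw [add_smul, add_smul, add_assoc, ← add_smul]; simp [add_smul, two_smul]
      have e2 : (k+1) • P - P = k • P := by rw [add_smul]; simp
      rw [e1, e2, h1, h0] at this
      push_cast at this ⊢
      linarith

theorem Para.zsmul {q : G → ℝ} (h : Para q) (P : G) (n : ℤ) : q (n • P) = n ^ 2 * q P := by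
  obtain ⟨k, rfl | rfl⟩ := n.eq_nat_or_neg
  · simpa using h.nsmul P k
  · rw [neg_smul, h.neg]; simpa using h.nsmul P k

theorem Para.tors {q : G → ℝ} (h : Para q) {P : G} {n : ℤ} (hn : n ≠ 0) (hP : n • P = 0) :
    q P = 0 := by
  have := h.zsmul P n
  rw [hP, h.zero] at this
  have : (n:ℝ)^2 ≠ 0 := by positivity
  grind

theorem Para.add_le {q : G → ℝ} (h : Para q) (h0 : ∀ P, 0 ≤ q P) (P Q : G) :
    q (P + Q) ≤ 2 * q P + 2 * q Q := by
  have := h P Q; have := h0 (P - Q); linarith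

theorem Para.sub_le {q : G → ℝ} (h : Para q) (h0 : ∀ P, 0 ≤ q P) (P Q : G) :
    q (P - Q) ≤ 2 * q P + 2 * q Q := by
  have := h P Q; have := h0 (P + Q); linarith

theorem Para.add_tors {q : G → ℝ} (h : Para q) {P T : G} {n : ℤ} (hn : n ≠ 0) (hT : n • T = 0) :
    q (P + T) = q P := by
  have h1 := h.zsmul (P + T) n
  rw [smul_add, hT, add_zero, h.zsmul] at h1
  have : (n:ℝ)^2 ≠ 0 := by positivity
  exact (mul_left_cancel₀ this h1).symm

theorem Para.dep {q : G → ℝ} (h : Para q) (h0 : ∀ P, 0 ≤ q P) {P Q : G} {m n : ℤ}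
    (hmn : m ≠ 0 ∨ n ≠ 0) (hd : m • P + n • Q = 0) :
    q (P + Q) = (√(q P) - √(q Q)) ^ 2 ∨ q (P - Q) = (√(q P) - √(q Q)) ^ 2 := by
  wlog hn : n ≠ 0 generalizing P Q m n
  · have hm : m ≠ 0 := by tauto
    have := this (P := Q) (Q := P) (m := n) (n := m) (by tauto) (by rw [add_comm]; exact hd) hm
    rw [add_comm Q P, ← neg_sub P Q, h.neg, ← neg_sub √(q P) √(q Q), neg_sq] at this
    exact this
  have hn2 : (n:ℝ)^2 ≠ 0 := by positivity
  have e0 : n • Q = (-m) • P := by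
    rw [neg_smul]; exact (neg_eq_of_add_eq_zero_right hd).symm
  have e1 : n • (P + Q) = (n - m) • P := by rw [smul_add, e0, ← add_smul]; congr 1
  have e2 : n • (P - Q) = (n + m) • P := by rw [smul_sub, e0, ← sub_smul]; congr 1; ring
  have f0 := congrArg q e0
  have f1 := congrArg q e1
  have f2 := congrArg q e2
  rw [h.zsmul, h.zsmul] at f0 f1 f2
  push_cast at f0 f1 f2
  set A := √(q P) with hA
  set B := √(q Q) with hB
  have hA2 : q P = A^2 := (Real.sq_sqrt (h0 P)).symm
  have hB2 : q Q = B^2 := (Real.sq_sqrt (h0 Q)).symm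
  have hA0 : 0 ≤ A := Real.sqrt_nonneg _
  have hB0 : 0 ≤ B := Real.sqrt_nonneg _
  rw [hA2, hB2] at f0
  rw [hA2] at f1 f2
  have : (n * B - m * A) * (n * B + m * A) = 0 := by linear_combination f0
  rcases mul_eq_zero.1 this with h3 | h3
  · left
    apply mul_left_cancel₀ hn2
    rw [f1]
    have : (n:ℝ) * B = m * A := by linarith
    have : (n:ℝ)^2 * (A - B)^2 = (n * A - n * B)^2 := by ring
    rw [this, ‹(n:ℝ) * B = m * A›]; ring
  · right
    apply mul_left_cancel₀ hn2
    rw [f2]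
    have h4 : (n:ℝ) * B = -(m * A) := by linarith
    have : (n:ℝ)^2 * (A - B)^2 = (n * A - n * B)^2 := by ring
    rw [this, h4]; ring

theorem Para.sum_le {q : G → ℝ} (h : Para q) (h0 : ∀ P, 0 ≤ q P) {n : ℕ} (P : Fin n → G)
    (m : Fin n → ℤ) : q (∑ i, m i • P i) ≤ 2 ^ n * ∑ i, (m i : ℝ) ^ 2 * q (P i) := by
  induction n with
  | zero => simp [h.zero]
  | succ n ih =>
    rw [Fin.sum_univ_succ, Fin.sum_univ_succ]
    refine (h.add_le h0 _ _).trans ?_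
    have := ih (fun i => P i.succ) (fun i => m i.succ)
    rw [h.zsmul]
    have h1 : 0 ≤ (m 0 : ℝ)^2 * q (P 0) := mul_nonneg (sq_nonneg _) (h0 _)
    have h2 : (1:ℝ) ≤ 2 ^ n := one_le_pow₀ (by norm_num)
    rw [pow_succ (2:ℝ) n]
    nlinarith

theorem exists_para {h : G → ℝ} {C : ℝ} (hh : ∀ P, 0 ≤ h P)
    (hC : ∀ P Q, |h (P + Q) + h (P - Q) - 2 * h P - 2 * h Q| ≤ C) :
    ∃ q : G → ℝ, Para q ∧ (∀ P, 0 ≤ q P) ∧ ∀ P, |q P - h P| ≤ C := by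
  have hC0 : 0 ≤ C := (abs_nonneg _).trans (hC 0 0)
  have h00 : |h 0| ≤ C / 2 := by
    have := hC 0 0
    simp only [add_zero, sub_zero] at this
    rw [abs_le] at this ⊢
    constructor <;> linarith [this.1, this.2]
  have hd : ∀ P, |h (2 • P) - 4 * h P| ≤ 3 / 2 * C := by
    intro P
    have := hC P P
    rw [sub_self, ← two_smul ℕ P] at this
    rw [abs_le] at this h00 ⊢
    constructor <;> linarith [this.1, this.2, h00.1, h00.2]
  let s : G → ℕ → ℝ := fun P n => h (2 ^ n • P) / 4 ^ n
  have hs : ∀ P n, dist (s P n) (s P (n+1)) ≤ (3/8 * C) * (1/4) ^ n := by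
    intro P n
    rw [Real.dist_eq]
    have := hd (2 ^ n • P)
    rw [smul_smul, ← pow_succ'] at this
    have e : s P n - s P (n+1) = - (h (2 ^ (n+1) • P) - 4 * h (2 ^ n • P)) / 4 ^ (n+1) := by
      simp only [s]; field_simp; ring
    rw [e, abs_div, abs_neg, abs_of_pos (show (0:ℝ) < 4 ^ (n+1) by positivity),
      div_le_iff₀ (by positivity)]
    refine this.trans (le_of_eq ?_)
    rw [pow_succ, one_div, inv_pow]; field_simp; ring
  have hlim : ∀ P, ∃ l, Filter.Tendsto (s P) Filter.atTop (nhds l) := fun P =>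
    cauchySeq_tendsto_of_complete (cauchySeq_of_le_geometric _ _ (by norm_num) (hs P))
  choose q hq using hlim
  refine ⟨q, ?_, ?_, ?_⟩
  · intro P Q
    have h1 := ((hq (P + Q)).add (hq (P - Q))).sub (((hq P).const_mul 2).add ((hq Q).const_mul 2))
    have h2 : Filter.Tendsto (fun n => s (P+Q) n + s (P-Q) n - (2 * s P n + 2 * s Q n))
        Filter.atTop (nhds 0) := by
      have hz : Filter.Tendsto (fun n : ℕ => C * (1/4:ℝ) ^ n) Filter.atTop (nhds 0) := by
        simpa using (tendsto_pow_atTop_nhds_zero_of_lt_one (r := (1/4:ℝ)) (by norm_num)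
          (by norm_num)).const_mul C
      refine squeeze_zero_norm (fun n => ?_) hz
      have := hC (2 ^ n • P) (2 ^ n • Q)
      rw [← smul_add, ← smul_sub] at this
      have e : s (P+Q) n + s (P-Q) n - (2 * s P n + 2 * s Q n) =
        (h (2 ^ n • (P + Q)) + h (2 ^ n • (P - Q)) - 2 * h (2 ^ n • P) - 2 * h (2 ^ n • Q)) / 4 ^ n := by
        simp only [s]; field_simp; ring
      rw [Real.norm_eq_abs, e, abs_div, abs_of_pos (show (0:ℝ) < 4 ^ n by positivity),
        div_le_iff₀ (by positivity)]
      refine this.trans (le_of_eq ?_)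
      rw [one_div, inv_pow]; field_simp
    have := tendsto_nhds_unique h1 h2
    linarith
  · intro P
    exact ge_of_tendsto' (hq P) fun n => div_nonneg (hh _) (by positivity)
  · intro P
    have := dist_le_of_le_geometric_of_tendsto₀ _ _ (by norm_num) (hs P) (hq P)
    rw [dist_comm, Real.dist_eq] at this
    simp only [s, pow_zero, one_smul, div_one] at this
    refine this.trans ?_
    norm_num; linarith
end abstr
end RS

namespace RS
open Height WeierstrassCurve WeierstrassCurve.Affine

section
variable {a b c D : ℤ}

@[simp] lemma tw_a1 : (twist a b c D).a₁ = 0 := rfl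
@[simp] lemma tw_a2 : (twist a b c D).a₂ = a * D := rfl
@[simp] lemma tw_a3 : (twist a b c D).a₃ = 0 := rfl
@[simp] lemma tw_a4 : (twist a b c D).a₄ = b * D ^ 2 := rfl
@[simp] lemma tw_a6 : (twist a b c D).a₆ = c * D ^ 3 := rfl

/-- discriminant-like quantity -/
def disc (a b c : ℤ) : ℤ := a^2*b^2 - 4*b^3 - 4*a^3*c - 27*c^2 + 18*a*b*c

lemma tw_Δ : (twist a b c D).Δ = 16 * D^6 * disc a b c := by
  simp only [WeierstrassCurve.Δ, WeierstrassCurve.b₂, WeierstrassCurve.b₄, WeierstrassCurve.b₆,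
    WeierstrassCurve.b₈, tw_a1, tw_a2, tw_a3, tw_a4, tw_a6, disc]
  push_cast; ring

lemma disc_ne (hf : DistinctRoots a b c) : disc a b c ≠ 0 := by
  obtain ⟨r, s, t, h1, h2, h3, h⟩ := hf
  have e0 := h 0
  have e1 := h 1
  have e2 := h (-1)
  have hc : (c:ℂ) = - (r*s*t) := by linear_combination e0
  have ha : (a:ℂ) = - (r+s+t) := by linear_combination (e1 + e2) / 2 - e0
  have hb : (b:ℂ) = r*s+r*t+s*t := by linear_combination (e1 - e2) / 2
  intro hd
  have : ((disc a b c : ℤ) : ℂ) = ((r-s)*(r-t)*(s-t))^2 := by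
    simp only [disc]; push_cast; rw [ha, hb, hc]; ring
  rw [hd] at this
  have h4 : ((r-s)*(r-t)*(s-t)) ≠ 0 := mul_ne_zero (mul_ne_zero (sub_ne_zero.2 h1) (sub_ne_zero.2 h2)) (sub_ne_zero.2 h3)
  exact pow_ne_zero 2 h4 (by simpa using this.symm)

lemma tw_Δ_ne (hf : disc a b c ≠ 0) (hD : D ≠ 0) : (twist a b c D).Δ ≠ 0 := by
  rw [tw_Δ]
  have : (D:ℚ) ≠ 0 := by exact_mod_cast hD
  have : (disc a b c:ℚ) ≠ 0 := by exact_mod_cast hf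
  positivity

lemma tw_eq {x y : ℚ} : (twist a b c D).Equation x y ↔
    y^2 = x^3 + a*D*x^2 + b*D^2*x + c*D^3 := by
  rw [equation_iff]; simp

lemma tw_ns (hf : disc a b c ≠ 0) (hD : D ≠ 0) {x y : ℚ}
    (h : y^2 = x^3 + a*D*x^2 + b*D^2*x + c*D^3) : (twist a b c D).Nonsingular x y :=
  (equation_iff_nonsingular_of_Δ_ne_zero (tw_Δ_ne hf hD)).1 (tw_eq.2 h)

lemma tw_ns_eq {x y : ℚ} (h : (twist a b c D).Nonsingular x y) :
    y^2 = x^3 + a*D*x^2 + b*D^2*x + c*D^3 := tw_eq.1 h.1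

@[simp] lemma tw_negY {x y : ℚ} : (twist a b c D).negY x y = -y := by simp [negY]

lemma tw_neg {x y : ℚ} (h : (twist a b c D).Nonsingular x y) :
    ∃ h', -(Point.some x y h) = Point.some x (-y) h' := by
  rw [Point.neg_some]
  have := (nonsingular_neg (W' := twist a b c D) x y).2 h
  rw [tw_negY] at this
  refine ⟨this, ?_⟩
  congr 1
  simp

lemma tw_add {x₁ y₁ x₂ y₂ : ℚ} (h₁ : (twist a b c D).Nonsingular x₁ y₁)
    (h₂ : (twist a b c D).Nonsingular x₂ y₂) (hx : x₁ ≠ x₂) :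
    ∃ y h, Point.some x₁ y₁ h₁ + Point.some x₂ y₂ h₂ =
      Point.some (((y₁ - y₂)/(x₁ - x₂))^2 - a*D - x₁ - x₂) y h := by
  rw [Point.add_of_X_ne hx]
  have e : (twist a b c D).addX x₁ x₂ ((twist a b c D).slope x₁ x₂ y₁ y₂) =
     (((y₁ - y₂)/(x₁ - x₂))^2 - a*D - x₁ - x₂) := by
    rw [slope_of_X_ne hx]; simp [addX]
  have hn := nonsingular_add h₁ h₂ (fun h => hx h.1)
  rw [e] at hn
  exact ⟨_, hn, by congr 1⟩

lemma tw_sub {x₁ y₁ x₂ y₂ : ℚ} (h₁ : (twist a b c D).Nonsingular x₁ y₁)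
    (h₂ : (twist a b c D).Nonsingular x₂ y₂) (hx : x₁ ≠ x₂) :
    ∃ y h, Point.some x₁ y₁ h₁ - Point.some x₂ y₂ h₂ =
      Point.some (((y₁ + y₂)/(x₁ - x₂))^2 - a*D - x₁ - x₂) y h := by
  obtain ⟨h', e⟩ := tw_neg h₂
  rw [sub_eq_add_neg (Point.some x₁ y₁ h₁), e]
  have := tw_add h₁ h' hx
  rw [sub_neg_eq_add y₁ y₂] at this
  exact this

lemma tw_dbl {x₁ y₁ : ℚ} (h₁ : (twist a b c D).Nonsingular x₁ y₁) (hy : y₁ ≠ 0) :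
    ∃ y h, Point.some x₁ y₁ h₁ + Point.some x₁ y₁ h₁ =
      Point.some (((3*x₁^2+2*a*D*x₁+b*D^2)/(2*y₁))^2 - a*D - 2*x₁) y h := by
  have hy' : y₁ ≠ (twist a b c D).negY x₁ y₁ := by
    rw [tw_negY]; intro h; apply hy; linarith
  rw [Point.add_self_of_Y_ne hy']
  have e : (twist a b c D).addX x₁ x₁ ((twist a b c D).slope x₁ x₁ y₁ y₁) =
     (((3*x₁^2+2*a*D*x₁+b*D^2)/(2*y₁))^2 - a*D - 2*x₁) := by
    rw [slope_of_Y_ne rfl hy', tw_negY]; simp [addX]; ring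
  have hn := nonsingular_add h₁ h₁ (fun h => hy' h.2)
  rw [e] at hn
  exact ⟨_, hn, by congr 1⟩

lemma tw_dbl0 {x₁ : ℚ} (h₁ : (twist a b c D).Nonsingular x₁ 0) :
    Point.some x₁ 0 h₁ + Point.some x₁ 0 h₁ = 0 :=
  Point.add_self_of_Y_eq (by simp)

/-- scaled projective x-coordinate -/
noncomputable def xs (P : (twist a b c D).Point) : Fin 2 → ℚ := ![P.xRep 0, D * P.xRep 1]

noncomputable def hN (P : (twist a b c D).Point) : ℝ := logHeight (xs P)

lemma xs_zero : xs (0 : (twist a b c D).Point) = ![1, 0] := by simp [xs]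
lemma xs_some {x y : ℚ} (h : (twist a b c D).Nonsingular x y) : xs (Point.some x y h) = ![x, D] := by
  simp [xs]

lemma hN_zero : hN (0 : (twist a b c D).Point) = 0 := by
  rw [hN, xs_zero, ← logHeight₁_div_eq_logHeight]; simp
lemma hN_some {x y : ℚ} (h : (twist a b c D).Nonsingular x y) :
    hN (Point.some x y h) = logHeight₁ (x / D) := by
  rw [hN, xs_some, ← logHeight₁_div_eq_logHeight]

lemma xs_ne (hD : D ≠ 0) (P : (twist a b c D).Point) : xs P ≠ 0 := by
  have hD' : (D:ℚ) ≠ 0 := by exact_mod_cast hD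
  cases P with
  | zero => rw [← Point.zero_def, xs_zero]; simp
  | some x y h => rw [xs_some]; simp [hD']

noncomputable def sv (P Q : (twist a b c D).Point) : Fin 3 → ℚ :=
  ![xs P 0 * xs Q 0, xs P 0 * xs Q 1 + xs P 1 * xs Q 0, xs P 1 * xs Q 1]

lemma sv_comm (P Q : (twist a b c D).Point) : sv P Q = sv Q P := by
  simp only [sv]; congr 1 <;> [ring; congr 1] <;> [ring; (congr 1; ring)]

lemma sv_neg (P Q : (twist a b c D).Point) : sv P (-Q) = sv P Q := by
  simp [sv, xs]

noncomputable def asm (a b c : ℤ) (x : Fin 3 → ℚ) : Fin 3 → ℚ :=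
  ![x 0 ^2 - 2*b* x 0 * x 2 - 4*c*x 1*x 2 - (4*a*c-b^2)*x 2 ^2,
    2*x 1*x 0 + 4*a*x 0*x 2 + 2*b*x 1*x 2+4*c*x 2^2, x 1^2-4*x 0*x 2]

lemma asm_eq (x : Fin 3 → ℚ) : (fun i ↦ (addSubMap (twist a b c 1) i).eval x) = asm a b c x := by
  ext i
  fin_cases i <;> simp [addSubMap, asm, b₂, b₄, b₆, b₈] <;> ring

lemma asm_sv (hf : disc a b c ≠ 0) (hD : D ≠ 0) (P Q : (twist a b c D).Point) :
    ∃ l : ℚ, l ≠ 0 ∧ sv (P + Q) (P - Q) = l • asm a b c (sv P Q) := by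
  have hD' : (D:ℚ) ≠ 0 := by exact_mod_cast hD
  cases P with
  | zero =>
    rw [← Point.zero_def, zero_add, zero_sub, sv_neg]
    refine ⟨1, one_ne_zero, ?_⟩
    ext i
    fin_cases i <;> simp [sv, asm, xs_zero] <;> ring
  | some x₁ y₁ h₁ =>
  cases Q with
  | zero =>
    rw [← Point.zero_def, add_zero, sub_zero]
    refine ⟨1, one_ne_zero, ?_⟩
    ext i
    fin_cases i <;> simp [sv, asm, xs_zero] <;> ring
  | some x₂ y₂ h₂ =>
  have q1 := tw_ns_eq h₁
  have q2 := tw_ns_eq h₂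
  by_cases hx : x₁ = x₂
  · subst hx
    have key : ∀ (y : ℚ) (h : (twist a b c D).Nonsingular x₁ y), ∃ l : ℚ, l ≠ 0 ∧
        sv (Point.some x₁ y h + Point.some x₁ y h) (Point.some x₁ y h - Point.some x₁ y h) =
          l • asm a b c (sv (Point.some x₁ y h) (Point.some x₁ y h)) := by
      intro y h
      have q := tw_ns_eq h
      rw [sub_self]
      by_cases hy : y = 0
      · subst hy
        rw [tw_dbl0]
        have hns := ((nonsingular_iff ..).1 h).2
        simp at hns
        have hm : (x₁^2 - b * D^2)^2 - 8*c*D^3*x₁ - 4*a*c*D^4 = (3*x₁^2+2*a*D*x₁+b*D^2)^2 := by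
          linear_combination (8*x₁+4*a*D)*q
        have hne : (3*x₁^2+2*a*D*x₁+b*D^2) ≠ 0 := by
          intro h0; apply hns; linear_combination -h0
        refine ⟨((3*x₁^2+2*a*D*x₁+b*D^2)^2)⁻¹, by positivity, ?_⟩
        ext i
        fin_cases i
        · simp [sv, asm, xs_zero, xs_some]
          rw [eq_comm, inv_mul_eq_iff_eq_mul₀ (by positivity)]
          linear_combination hm
        · simp [sv, asm, xs_zero, xs_some]
          right; linear_combination (-4*D)*q
        · simp [sv, asm, xs_zero, xs_some]
          right; ring
      · obtain ⟨y', h', e⟩ := tw_dbl h hy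
        rw [e]
        refine ⟨(4*y^2)⁻¹, by positivity, ?_⟩
        ext i
        fin_cases i
        · simp [sv, asm, xs_zero, xs_some]
          field_simp
          linear_combination (-32*x₁-16*a*D)*q
        · simp [sv, asm, xs_zero, xs_some]
          field_simp
          linear_combination 4*q
        · simp [sv, asm, xs_zero, xs_some]
          right; ring
    have hyy : y₂ = y₁ ∨ y₂ = - y₁ := by
      have : (y₂ - y₁) * (y₂ + y₁) = 0 := by linear_combination q2 - q1
      rcases mul_eq_zero.1 this with h | h
      · left; linarith
      · right; linarith
    rcases hyy with h | h
    · subst h; exact key _ _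
    · subst h
      obtain ⟨h', e⟩ := tw_neg h₁
      have e' : Point.some x₁ (-y₁) h₂ = -(Point.some x₁ y₁ h₁) := e.symm
      rw [e', sv_neg, sub_neg_eq_add, ← sub_eq_add_neg, sv_comm]
      exact key _ _
  · obtain ⟨y3, h3, e3⟩ := tw_add h₁ h₂ hx
    obtain ⟨y4, h4, e4⟩ := tw_sub h₁ h₂ hx
    rw [e3, e4]
    have hx' : x₁ - x₂ ≠ 0 := sub_ne_zero.2 hx
    refine ⟨((x₁-x₂)^2)⁻¹, by positivity, ?_⟩
    have r1 : y₁^2 - (x₁^3 + a*D*x₁^2 + b*D^2*x₁ + c*D^3) = 0 := by linarith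
    have r2 : y₂^2 - (x₂^3 + a*D*x₂^2 + b*D^2*x₂ + c*D^3) = 0 := by linarith
    have s4 : y₁^4 = (x₁^3 + a*D*x₁^2 + b*D^2*x₁ + c*D^3)^2 := by rw [← q1]; ring
    have s5 : y₂^4 = (x₂^3 + a*D*x₂^2 + b*D^2*x₂ + c*D^3)^2 := by rw [← q2]; ring
    ext i
    fin_cases i
    · simp [sv, asm, xs_some]
      have hA : ((y₁ - y₂)/(x₁ - x₂))^2 * ((y₁ + y₂)/(x₁ - x₂))^2 * (x₁-x₂)^4= (y₁^2-y₂^2)^2 := by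
        field_simp; ring
      have hB : (((y₁ - y₂)/(x₁ - x₂))^2 + ((y₁ + y₂)/(x₁ - x₂))^2) * (x₁-x₂)^2 = 2*(y₁^2+y₂^2) := by
        field_simp; ring
      rw [eq_inv_mul_iff_mul_eq₀ (by positivity)]
      have : (x₁-x₂)^2 ≠ 0 := by positivity
      apply mul_left_cancel₀ this
      rw [q1, q2] at hA hB
      linear_combination hA - (a*D+x₁+x₂) * (x₁-x₂)^2 * hB
    · simp [sv, asm, xs_some]
      have hB : (((y₁ - y₂)/(x₁ - x₂))^2 + ((y₁ + y₂)/(x₁ - x₂))^2) * (x₁-x₂)^2 = 2*(y₁^2+y₂^2) := by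
        field_simp; ring
      rw [q1, q2] at hB
      rw [eq_inv_mul_iff_mul_eq₀ (by positivity)]
      linear_combination D * hB
    · simp [sv, asm, xs_some]
      field_simp
      ring

lemma fin2_eta (v : Fin 2 → ℚ) : ![v 0, v 1] = v := by
  ext i; fin_cases i <;> rfl

/-- Uniform approximate parallelogram law. -/
theorem approx_para (hf : disc a b c ≠ 0) : ∃ C : ℝ, ∀ D : ℤ, D ≠ 0 →
    ∀ P Q : (twist a b c D).Point, |hN (P + Q) + hN (P - Q) - 2 * hN P - 2 * hN Q| ≤ C := by
  haveI : (twist a b c 1).IsElliptic := ⟨(tw_Δ_ne hf one_ne_zero).isUnit⟩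
  obtain ⟨C1, h1⟩ := WeierstrassCurve.abs_logHeight_addSubMap_sub_two_mul_logHeight_le (twist a b c 1)
  obtain ⟨C2, h2⟩ := Height.abs_logHeight_sym2_sub_le ℚ
  refine ⟨C1 + 3 * C2, fun D hD P Q => ?_⟩
  have hs : ∀ P Q : (twist a b c D).Point, |logHeight (sv P Q) - (hN P + hN Q)| ≤ C2 := by
    intro P Q
    have := h2 (a := xs P 0) (b := xs P 1) (c := xs Q 0) (d := xs Q 1)
      (by rw [fin2_eta]; exact xs_ne hD P) (by rw [fin2_eta]; exact xs_ne hD Q)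
    rw [fin2_eta, fin2_eta] at this
    exact this
  obtain ⟨l, hl, e⟩ := asm_sv hf hD P Q
  have g1 := h1 (sv P Q)
  rw [asm_eq, ← logHeight_smul_eq_logHeight _ hl, ← e] at g1
  have g2 := hs P Q
  have g3 := hs (P+Q) (P-Q)
  rw [abs_le] at *
  constructor <;> linarith [g1.1, g1.2, g2.1, g2.2, g3.1, g3.2]
end
end RS

namespace RS
open Height WeierstrassCurve WeierstrassCurve.Affine

structure CH (a b c : ℤ) where
  C : ℝ
  q : ∀ D : ℤ, (twist a b c D).Point → ℝ
  C0 : 0 ≤ C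
  para : ∀ D : ℤ, D ≠ 0 → Para (q D)
  nn : ∀ D : ℤ, D ≠ 0 → ∀ P, 0 ≤ q D P
  close : ∀ D : ℤ, D ≠ 0 → ∀ P, |q D P - hN P| ≤ C

lemma hN_nn {a b c D : ℤ} (P : (twist a b c D).Point) : 0 ≤ hN P := by
  cases P with
  | zero => rw [← Point.zero_def, hN_zero]
  | some x y h => rw [hN_some]; exact zero_le_logHeight₁ _

lemma exists_CH {a b c : ℤ} (hf : disc a b c ≠ 0) : Nonempty (CH a b c) := by
  obtain ⟨C, hC⟩ := approx_para hf
  have : ∀ D : ℤ, ∃ q : (twist a b c D).Point → ℝ, D ≠ 0 →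
      Para q ∧ (∀ P, 0 ≤ q P) ∧ ∀ P, |q P - hN P| ≤ C := by
    intro D
    by_cases hD : D = 0
    · exact ⟨fun _ => 0, fun h => absurd hD h⟩
    · obtain ⟨q, h⟩ := exists_para (h := hN) hN_nn (hC D hD)
      exact ⟨q, fun _ => h⟩
  choose q hq using this
  refine ⟨⟨C, q, ?_, fun D hD => (hq D hD).1, fun D hD => (hq D hD).2.1, fun D hD => (hq D hD).2.2⟩⟩
  exact (abs_nonneg _).trans (hC 1 one_ne_zero 0 0)

lemma lh_div {u v : ℤ} (h : Int.gcd u v = 1) (hv : v ≠ 0) :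
    logHeight₁ ((u:ℚ)/v) = Real.log (max |(u:ℝ)| |(v:ℝ)|) := by
  have key : ∀ u v : ℤ, Int.gcd u v = 1 → 0 < v →
      logHeight₁ ((u:ℚ)/v) = Real.log (max |(u:ℝ)| |(v:ℝ)|) := by
    intro u v h hv
    rw [Rat.logHeight₁_eq_log_max]
    have h1 : ((u:ℚ)/v).num = u := Rat.num_div_eq_of_coprime hv h
    have h2 : (((u:ℚ)/v).den : ℤ) = v := Rat.den_div_eq_of_coprime hv h
    have h3 : ((((u:ℚ)/v).den : ℕ):ℝ) = v := by exact_mod_cast h2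
    have h4 : (0:ℝ) < v := by exact_mod_cast hv
    rw [h1]; push_cast
    rw [h3, Nat.cast_natAbs, abs_of_pos h4]; push_cast; rfl
  rcases lt_or_gt_of_ne hv with hv | hv
  · have := key (-u) (-v) (by simpa using h) (by omega)
    push_cast at this
    rwa [neg_div_neg_eq, abs_neg, abs_neg] at this
  · exact key u v h hv

lemma ht_eq {u v : ℤ} (h : Int.gcd u v = 1) (hv : v ≠ 0) :
    ht u v = max 1 (logHeight₁ ((u:ℚ)/v)) := by
  rw [lh_div h hv, ht]
  congr 1
  have hv1 : (1:ℝ) ≤ |(v:ℝ)| := by exact_mod_cast Int.one_le_abs hv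
  by_cases hu : u = 0
  · subst hu
    have := Real.log_nonneg hv1
    simp only [Int.cast_zero, abs_zero, Real.log_zero]
    rw [max_eq_right this, max_eq_right (by linarith)]
  · have hu1 : (1:ℝ) ≤ |(u:ℝ)| := by exact_mod_cast Int.one_le_abs hu
    rcases le_total |(u:ℝ)| |(v:ℝ)| with hle | hle
    · rw [max_eq_right hle, max_eq_right (Real.log_le_log (by linarith) hle)]
    · rw [max_eq_left hle, max_eq_left (Real.log_le_log (by linarith) hle)]

/-- Northcott, uniform in the twist. -/
lemma exists_pcount (a b c : ℤ) (B : ℝ) : ∃ T : ℕ, ∀ D : ℤ, D ≠ 0 →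
    ∀ S : Finset (twist a b c D).Point, (∀ P ∈ S, hN P ≤ B) → S.card ≤ T := by
  classical
  have hfin := NumberField.finite_setOfPred_logHeight₁_le ℚ B
  set N := hfin.toFinset
  refine ⟨((insert none (N.image some)) ×ˢ (Finset.univ : Finset Bool)).card, fun D hD S hS => ?_⟩
  have hD' : (D:ℚ) ≠ 0 := by exact_mod_cast hD
  let φ : (twist a b c D).Point → Option ℚ × Bool := fun P => match P with
    | .zero => (none, false)
    | .some x y _ => (some (x / D), decide (0 ≤ y))
  apply Finset.card_le_card_of_injOn φ
  · intro P hP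
    have := hS P hP
    cases P with
    | zero => simp [φ]
    | some x y h =>
      rw [hN_some] at this
      simp [φ, N]
      exact ⟨this, le_or_gt 0 y⟩
  · intro P hP Q hQ e
    cases P with
    | zero => cases Q with
      | zero => rfl
      | some x y h => simp [φ] at e
    | some x y h => cases Q with
      | zero => simp [φ] at e
      | some x' y' h' =>
        simp only [φ, Prod.mk.injEq, Option.some.injEq, decide_eq_decide] at e
        obtain ⟨e1, e2⟩ := e
        have hx : x = x' := by field_simp at e1; exact e1
        subst hx
        have hy : y^2 = y'^2 := by rw [tw_ns_eq h, tw_ns_eq h']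
        have : y = y' := by
          rcases sq_eq_sq_iff_eq_or_eq_neg.1 hy with h | h
          · exact h
          · rcases le_total 0 y with h0 | h0
            · have := e2.1 h0; linarith
            · have := e2.2 (by linarith); linarith
        subst this
        rfl

/-- The point on `E^{(D)}` with `u/v`. -/
lemma exists_pt {a b c D : ℤ} (hf : disc a b c ≠ 0) (hD : D ≠ 0) {u v : ℤ} (hv : v ≠ 0) {m : ℚ}
    (h : (Fbin a b c u v : ℚ) = D * m^2) :
    ∃ h', hN (Point.some (W' := twist a b c D) (D * ((u:ℚ)/v)) (D^2*m/v^2) h') = logHeight₁ ((u:ℚ)/v) := by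
  have hD' : (D:ℚ) ≠ 0 := by exact_mod_cast hD
  have hv' : (v:ℚ) ≠ 0 := by exact_mod_cast hv
  refine ⟨tw_ns hf hD ?_, ?_⟩
  · simp only [Fbin] at h
    push_cast at h
    field_simp
    linear_combination - h
  · rw [hN_some, mul_div_cancel_left₀ _ hD']

end RS

namespace RS
open Height WeierstrassCurve WeierstrassCurve.Affine

lemma exists_lb {α : Type*} {s : Set α} (hs : s.Finite) (f : α → ℝ) (h : ∀ x ∈ s, 0 < f x) :
    ∃ g : ℝ, 0 < g ∧ ∀ x ∈ s, g ≤ f x := by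
  rcases s.eq_empty_or_nonempty with rfl | hn
  · exact ⟨1, one_pos, by simp⟩
  · obtain ⟨x, hx, hm⟩ := Set.exists_min_image s f hs hn
    exact ⟨f x, h x hx, hm⟩

lemma sqfree_int {D F : ℤ} (hD : Squarefree D) {m : ℚ} (h : (F:ℚ) = D * m^2) : ∃ n : ℤ, m = n := by
  have hq : (m.den:ℚ) ≠ 0 := by exact_mod_cast m.den_nz
  have h1 : F * (m.den:ℤ)^2 = D * m.num^2 := by
    have : (F:ℚ) * (m.den:ℚ)^2 = D * (m.num:ℚ)^2 := by
      rw [h]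
      have e : m * m.den = m.num := Rat.mul_den_eq_num m
      rw [← e]; ring
    exact_mod_cast this
  have hc : IsCoprime ((m.den:ℤ)^2) (m.num^2) := (Rat.isCoprime_num_den m).symm.pow
  have h2 : (m.den:ℤ)^2 ∣ D := hc.dvd_of_dvd_mul_right ⟨F, by rw [← h1]; ring⟩
  have h3 := hD (m.den:ℤ) (by rw [← sq]; exact h2)
  have h4 : m.den = 1 := by
    have := Int.natAbs_of_isUnit h3
    simpa using this
  exact ⟨m.num, by
    conv_lhs => rw [← Rat.num_div_den m]
    rw [h4]; simp⟩

noncomputable def KK (a b c : ℤ) : ℝ := 1 + |(a:ℝ)| + |(b:ℝ)| + |(c:ℝ)|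

lemma F_le (a b c u v : ℤ) :
    |(Fbin a b c u v : ℝ)| ≤ KK a b c * (max |(u:ℝ)| |(v:ℝ)|)^4 := by
  set M := max |(u:ℝ)| |(v:ℝ)|
  have hu : |(u:ℝ)| ≤ M := le_max_left _ _
  have hv : |(v:ℝ)| ≤ M := le_max_right _ _
  have hM : 0 ≤ M := (abs_nonneg _).trans hu
  have u0 := abs_nonneg (u:ℝ)
  have v0 := abs_nonneg (v:ℝ)
  simp only [Fbin, KK]; push_cast
  rw [abs_mul]
  have h1 : |(u:ℝ)^3 + a*u^2*v + b*u*v^2 + c*v^3| ≤ M^3 + |(a:ℝ)| *M^3 + |(b:ℝ)| *M^3+|(c:ℝ)| *M^3 := by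
    refine (abs_add_le _ _).trans (add_le_add ((abs_add_le _ _).trans (add_le_add ((abs_add_le _ _).trans (add_le_add ?_ ?_)) ?_)) ?_)
    · rw [abs_pow]; gcongr
    · rw [abs_mul, abs_mul, abs_pow, mul_assoc]
      have : |(u:ℝ)|^2*|(v:ℝ)| ≤ M^2*M := by gcongr
      gcongr; linarith
    · rw [abs_mul, abs_mul, abs_pow, mul_assoc]
      have : |(u:ℝ)| *|(v:ℝ)|^2 ≤ M*M^2 := by gcongr
      gcongr; linarith
    · rw [abs_mul, abs_pow]; gcongr
  calc _ ≤ M * (M^3 + |(a:ℝ)| *M^3 + |(b:ℝ)| *M^3+|(c:ℝ)| *M^3) := by gcongr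
    _ = _ := by ring

lemma KK_ge (a b c : ℤ) : 1 ≤ KK a b c := by
  unfold KK; linarith [abs_nonneg (a:ℝ), abs_nonneg (b:ℝ), abs_nonneg (c:ℝ)]

lemma v_ne {a b c u v : ℤ} (h : Fbin a b c u v ≠ 0) : v ≠ 0 := by
  rintro rfl; simp [Fbin] at h

lemma logD_le {a b c D u v : ℤ} (hD : Squarefree D) (hF : Fbin a b c u v ≠ 0) (hg : Int.gcd u v = 1)
    {m : ℚ} (h : (Fbin a b c u v : ℚ) = D * m^2) :
    Real.log |(D:ℝ)| ≤ Real.log (KK a b c) + 4 * logHeight₁ ((u:ℚ)/v) := by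
  obtain ⟨n, rfl⟩ := sqfree_int hD h
  have h' : Fbin a b c u v = D * n^2 := by exact_mod_cast h
  have hn : n ≠ 0 := by rintro rfl; simp [h'] at hF
  have h1 : |D| ≤ |Fbin a b c u v| := by
    rw [h', abs_mul, abs_pow]
    have : 1 ≤ |n| := Int.one_le_abs hn
    nlinarith [abs_nonneg D, sq_nonneg (|n|), one_le_pow₀ (n := 2) this]
  have h2 : |(D:ℝ)| ≤ |(Fbin a b c u v : ℝ)| := by exact_mod_cast h1
  have hv := v_ne hF
  have hv1 : (1:ℝ) ≤ |(v:ℝ)| := by exact_mod_cast Int.one_le_abs hv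
  have hM : 0 < max |(u:ℝ)| |(v:ℝ)| := lt_of_lt_of_le (by linarith) (le_max_right _ _)
  have hK := KK_ge a b c
  rw [lh_div hg hv]
  have hD0 : 0 < |(D:ℝ)| := abs_pos.2 (by exact_mod_cast hD.ne_zero)
  calc _ ≤ Real.log (KK a b c * (max |(u:ℝ)| |(v:ℝ)|)^4) :=
        Real.log_le_log hD0 (h2.trans (F_le ..))
    _ = _ := by rw [Real.log_mul (by linarith) (by positivity), Real.log_pow]; norm_num

noncomputable def LL (D : ℤ) : ℝ := Real.log (|(D:ℝ)| + 2)

lemma LL_pos (D : ℤ) : 0 < LL D := Real.log_pos (by linarith [abs_nonneg (D:ℝ)])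

lemma LL_le {D : ℤ} (hD : D ≠ 0) : LL D ≤ Real.log |(D:ℝ)| + Real.log 3 := by
  have : (1:ℝ) ≤ |(D:ℝ)| := by exact_mod_cast Int.one_le_abs hD
  rw [← Real.log_mul (by linarith) (by norm_num)]
  exact Real.log_le_log (by linarith) (by linarith)

lemma exists_htlb (a b c : ℤ) : ∃ k : ℝ, 0 < k ∧ ∀ D u v : ℤ, Squarefree D → Fbin a b c u v ≠ 0 →
    Int.gcd u v = 1 → (∃ m : ℚ, (Fbin a b c u v : ℚ) = D * m^2) → k * LL D ≤ ht u v := by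
  have hK := Real.log_nonneg (KK_ge a b c)
  have h3 : 0 < Real.log 3 := Real.log_pos (by norm_num)
  refine ⟨1/(Real.log (KK a b c) + Real.log 3 + 4), by positivity, ?_⟩
  rintro D u v hD hF hg ⟨m, h⟩
  have h1 := logD_le hD hF hg h
  have h2 := LL_le hD.ne_zero
  rw [ht_eq hg (v_ne hF)]
  set H := logHeight₁ ((u:ℚ)/v)
  have i1 : 1 ≤ max 1 H := le_max_left _ _
  have i2 : H ≤ max 1 H := le_max_right _ _
  rw [div_mul_eq_mul_div, one_mul, div_le_iff₀ (by positivity)]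
  nlinarith

/-- every point with `y ≠ 0` comes from some `(u,v)` -/
lemma pt_uv {a b c D : ℤ} (hD : D ≠ 0) {x y : ℚ} (hy : y ≠ 0)
    (h : (twist a b c D).Nonsingular x y) :
    Int.gcd (x/D).num (x/D).den = 1 ∧ Fbin a b c (x/D).num (x/D).den ≠ 0 ∧
      ∃ m : ℚ, (Fbin a b c (x/D).num (x/D).den : ℚ) = D * m^2 := by
  have hD' : (D:ℚ) ≠ 0 := by exact_mod_cast hD
  have hq : ((x/D).den:ℚ) ≠ 0 := by exact_mod_cast (x/D).den_nz
  have e := tw_ns_eq h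
  set w := x / D with hw
  have hx : x = D * (w.num / w.den) := by rw [Rat.num_div_den, hw]; field_simp
  have key : (Fbin a b c w.num w.den : ℚ) = D * (w.den^2 * y / D^2)^2 := by
    simp only [Fbin]; push_cast
    rw [div_pow, mul_pow, e]
    clear_value w
    subst hx
    field_simp
  refine ⟨Int.isCoprime_iff_gcd_eq_one.mp (Rat.isCoprime_num_den w), ?_, _, key⟩
  intro h0
  rw [h0] at key
  have : (D * (w.den^2 * y / D^2)^2 : ℚ) ≠ 0 := by positivity
  exact this (by simpa using key.symm)

lemma CH.q_le {a b c D : ℤ} (H : CH a b c) (hD : D ≠ 0) (P : (twist a b c D).Point) :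
    H.q D P ≤ hN P + H.C := by
  have := abs_le.1 (H.close D hD P); linarith [this.2]
lemma CH.hN_le {a b c D : ℤ} (H : CH a b c) (hD : D ≠ 0) (P : (twist a b c D).Point) :
    hN P ≤ H.q D P + H.C := by
  have := abs_le.1 (H.close D hD P); linarith [this.1]

lemma q_lb {a b c D : ℤ} (H : CH a b c) (hD : Squarefree D) (P : (twist a b c D).Point) :
    H.q D P = 0 ∨ Real.log |(D:ℝ)| ≤ Real.log (KK a b c) + 4 * (H.q D P + H.C) := by
  cases P with
  | zero => left; rw [← Point.zero_def]; exact (H.para D hD.ne_zero).zero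
  | some x y h =>
    by_cases hy : y = 0
    · left
      subst hy
      exact (H.para D hD.ne_zero).tors (n := 2) two_ne_zero (by rw [two_zsmul]; exact tw_dbl0 h)
    · right
      obtain ⟨h1, h2, m, h3⟩ := pt_uv hD.ne_zero hy h
      have := logD_le hD h2 h1 h3
      have h4 := H.hN_le hD.ne_zero (Point.some x y h)
      rw [hN_some] at h4
      have e : (((x/D).num : ℤ):ℚ) / (((x/D).den : ℤ):ℚ) = x / D := by
        push_cast; exact Rat.num_div_den _
      rw [e] at this
      linarith

lemma hN_finite (a b c D : ℤ) (hD : D ≠ 0) (B : ℝ) : {P : (twist a b c D).Point | hN P ≤ B}.Finite := by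
  obtain ⟨T, hT⟩ := exists_pcount a b c B
  by_contra hinf
  obtain ⟨S, hS, hc⟩ := Set.Infinite.exists_subset_card_eq hinf (T+1)
  have := hT D hD S (fun P hP => hS hP)
  omega

lemma gap1 {a b c D : ℤ} (H : CH a b c) (hD : D ≠ 0) :
    ∃ g : ℝ, 0 < g ∧ ∀ P : (twist a b c D).Point, H.q D P < g → H.q D P = 0 := by
  have hfin : {P : (twist a b c D).Point | H.q D P ≤ 1 ∧ H.q D P ≠ 0}.Finite :=
    (hN_finite a b c D hD (1 + H.C)).subset (fun P hP => by
      have := H.hN_le hD P; have := hP.1; simp only [Set.mem_ofPred_eq]; linarith)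
  obtain ⟨g, hg, h⟩ := exists_lb hfin (H.q D) (fun P hP => lt_of_le_of_ne (H.nn D hD P) (Ne.symm hP.2))
  refine ⟨min g 1, by positivity, fun P hP => ?_⟩
  by_contra hne
  have h1 := h P ⟨(hP.trans_le (min_le_right _ _)).le, hne⟩
  have h2 := hP.trans_le (min_le_left _ _)
  linarith

lemma gap {a b c : ℤ} (H : CH a b c) : ∃ g : ℝ, 0 < g ∧ ∀ D : ℤ, Squarefree D →
    ∀ P : (twist a b c D).Point, H.q D P < g * LL D → H.q D P = 0 := by
  set A := Real.log 3 + Real.log (KK a b c) + 4 * H.C with hA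
  -- large `D`: `LL D > 2 A`
  have hfin : {D : ℤ | D ≠ 0 ∧ LL D ≤ 2 * A}.Finite := by
    apply (Set.finite_Icc (-⌈Real.exp (2*A)⌉) (⌈Real.exp (2*A)⌉)).subset
    rintro D ⟨_, hD⟩
    have h1 : |(D:ℝ)| + 2 ≤ Real.exp (2*A) :=
      (Real.log_le_iff_le_exp (by positivity)).1 hD
    have h2 : ((|D| : ℤ):ℝ) ≤ (⌈Real.exp (2*A)⌉ : ℤ) := by
      push_cast; linarith [Int.le_ceil (Real.exp (2*A))]
    exact abs_le.1 (by exact_mod_cast h2)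
  have hg : ∀ D : ℤ, ∃ g : ℝ, 0 < g ∧ (D ≠ 0 → ∀ P : (twist a b c D).Point, H.q D P < g * LL D → H.q D P = 0) := by
    intro D
    by_cases hD : D = 0
    · exact ⟨1, one_pos, fun h => absurd hD h⟩
    · obtain ⟨g, h0, h⟩ := gap1 H hD
      refine ⟨g / LL D, div_pos h0 (LL_pos D), fun _ P hP => h P ?_⟩
      rwa [div_mul_cancel₀ _ (LL_pos D).ne'] at hP
  choose G hG0 hG using hg
  obtain ⟨g, hg0, hg⟩ := exists_lb hfin G (fun D _ => hG0 D)
  refine ⟨min g (1/8), by positivity, fun D hD P hP => ?_⟩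
  have hL := LL_pos D
  by_cases hs : LL D ≤ 2 * A
  · apply hG D hD.ne_zero P (hP.trans_le _)
    gcongr
    exact (min_le_left _ _).trans (hg D ⟨hD.ne_zero, hs⟩)
  · rcases q_lb H hD P with h | h
    · exact h
    · exfalso
      have h2 := LL_le hD.ne_zero
      have h3 : min g (1/8) * LL D ≤ 1/8 * LL D := by gcongr; exact min_le_right _ _
      linarith

end RS

namespace RS

theorem count {G : Type*} [AddCommGroup G] {q : G → ℝ} (hq : Para q) (h0 : ∀ P, 0 ≤ q P) {r T : ℕ}
    {g B : ℝ} (hr : ¬ ∃ P : Fin (r+1) → G, LinearIndependent ℤ P)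
    (hT : ∀ S : Finset G, (∀ P ∈ S, q P = 0) → S.card ≤ T) (hgap : ∀ P, q P < g → q P = 0)
    (N : ℕ) (hN : 0 < N) (hB : 8 * B < g * (N:ℝ)^2) (S : Finset G) (hS : ∀ P ∈ S, q P ≤ B) :
    S.card ≤ T * N ^ r := by
  classical
  let K : Submodule ℤ G :=
    { carrier := {P | q P = 0}
      add_mem' := fun {P Q} hP hQ => by
        have := hq.add_le h0 P Q
        have h1 : q P = 0 := hP
        have h2 : q Q = 0 := hQ
        exact le_antisymm (by linarith) (h0 _)
      zero_mem' := hq.zero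
      smul_mem' := fun n P hP => by
        have h1 : q P = 0 := hP
        show q (n • P) = 0
        rw [hq.zsmul, h1, mul_zero] }
  have hK : ∀ P, P ∈ K ↔ q P = 0 := fun P => Iff.rfl
  let A : Submodule ℤ (G ⧸ K) := Submodule.span ℤ ((S.image K.mkQ : Finset (G ⧸ K)) : Set (G ⧸ K))
  have : Module.IsTorsionFree ℤ (G ⧸ K) := by
    apply Module.IsTorsionFree.of_smul_eq_zero
    intro n x hx
    obtain ⟨P, rfl⟩ := K.mkQ_surjective x
    by_cases hn : n = 0
    · left; exact hn
    right
    rw [← map_smul] at hx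
    simp only [Submodule.mkQ_apply, Submodule.Quotient.mk_eq_zero, hK] at hx ⊢
    rw [hq.zsmul] at hx
    have : (n:ℝ) ≠ 0 := by exact_mod_cast hn
    simpa [this] using hx
  have : Module.Finite ℤ A := Module.Finite.span_of_finite ℤ (Finset.finite_toSet _)
  have : Module.Free ℤ A := Module.free_of_finite_type_torsion_free'
  let bs := Module.finBasis ℤ A
  set s := Module.finrank ℤ A
  have hsr : s ≤ r := by
    by_contra hlt
    push Not at hlt
    apply hr
    choose f hf using fun i : Fin s => K.mkQ_surjective (bs i : G ⧸ K)
    have li : LinearIndependent ℤ (fun i => (bs i : G ⧸ K)) :=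
      bs.linearIndependent.map' A.subtype (Submodule.ker_subtype _)
    have li2 : LinearIndependent ℤ f := by
      apply LinearIndependent.of_comp K.mkQ
      have : (K.mkQ ∘ f) = (fun i => (bs i : G ⧸ K)) := funext hf
      rw [this]; exact li
    exact ⟨f ∘ Fin.castLE hlt, li2.comp _ (Fin.castLE_injective hlt)⟩
  have hmem : ∀ P ∈ S, K.mkQ P ∈ A := fun P hP => Submodule.subset_span (by
    simp only [Finset.coe_image]; exact Set.mem_image_of_mem _ hP)
  have : NeZero N := ⟨hN.ne'⟩
  let φ : G → (Fin s → ZMod N) := fun P i =>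
    if h : K.mkQ P ∈ A then ((bs.repr ⟨K.mkQ P, h⟩ i : ℤ) : ZMod N) else 0
  have hφ : S.card ≤ T * (Finset.univ : Finset (Fin s → ZMod N)).card := by
    apply Finset.card_le_mul_card_image_of_maps_to (f := φ) (fun _ _ => Finset.mem_univ _)
    intro z _
    rcases Finset.eq_empty_or_nonempty (S.filter (fun x => φ x = z)) with h | ⟨P₀, hP₀⟩
    · simp [h]
    rw [Finset.mem_filter] at hP₀
    have : ((S.filter (fun x => φ x = z)).image (fun P => P - P₀)).card ≤ T := by
      apply hT
      intro Q hQ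
      obtain ⟨P, hP, rfl⟩ := Finset.mem_image.1 hQ
      rw [Finset.mem_filter] at hP
      have e : φ P = φ P₀ := hP.2.trans hP₀.2.symm
      have m1 := hmem P hP.1
      have m0 := hmem P₀ hP₀.1
      have hdiv : ∀ i, ∃ t : ℤ, bs.repr ⟨K.mkQ P, m1⟩ i - bs.repr ⟨K.mkQ P₀, m0⟩ i = N * t := by
        intro i
        have := congrFun e i
        simp only [φ, dif_pos m1, dif_pos m0] at this
        have := (ZMod.intCast_eq_intCast_iff_dvd_sub _ _ _).1 this.symm
        exact this
      choose t ht using hdiv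
      let R : A := ∑ i, t i • bs i
      have hR : (⟨K.mkQ P, m1⟩ : A) - ⟨K.mkQ P₀, m0⟩ = (N:ℤ) • R := by
        apply bs.repr.injective
        ext i
        rw [map_sub, Finsupp.sub_apply, ht, map_smul, Finsupp.smul_apply, smul_eq_mul]
        congr 1
        simp [R, Finsupp.single_apply]
      obtain ⟨R', hR'⟩ := K.mkQ_surjective (R : G ⧸ K)
      have hk : P - P₀ - (N:ℤ) • R' ∈ K := by
        rw [← Submodule.Quotient.mk_eq_zero, ← Submodule.mkQ_apply, map_sub, map_sub, map_smul, hR',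
          sub_eq_zero]
        exact congrArg (fun x : A => (x : G ⧸ K)) hR
      set k := P - P₀ - (N:ℤ) • R' with hkdef
      have hk0 : q k = 0 := hk
      have e1 : (N:ℤ) • R' = (P - P₀) - k := by rw [hkdef]; abel
      have e2 : P - P₀ = (N:ℤ) • R' + k := by rw [hkdef]; abel
      have i1 := hq.sub_le h0 (P - P₀) k
      rw [← e1, hq.zsmul, hk0] at i1
      have i2 := hq.sub_le h0 P P₀
      have i3 := hS P hP.1
      have i4 := hS P₀ hP₀.1
      have hN2 : (0:ℝ) < (N:ℝ)^2 := by positivity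
      have hRz : q R' = 0 := by
        apply hgap
        push_cast at i1
        have : (N:ℝ)^2 * q R' < (N:ℝ)^2 * g := by linarith
        exact lt_of_mul_lt_mul_left this hN2.le
      have i5 := hq.add_le h0 ((N:ℤ) • R') k
      rw [← e2, hq.zsmul, hk0, hRz] at i5
      exact le_antisymm (by linarith) (h0 _)
    rwa [Finset.card_image_of_injective _ (sub_left_injective)] at this
  refine hφ.trans ?_
  rw [Finset.card_univ, Fintype.card_fun, ZMod.card, Fintype.card_fin]
  exact Nat.mul_le_mul_left _ (Nat.pow_le_pow_right hN hsr)

theorem dyadic {α : Type*} (S : Finset α) (h : α → ℝ) {L K ρ j : ℝ} (hL : 0 < L) (hK : 0 ≤ K)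
    (hρ : ρ < j) (hS : ∀ x ∈ S, L ≤ h x)
    (hc : ∀ i : ℕ, ((S.filter (fun x => h x ≤ 2^(i+1) * L)).card : ℝ) ≤ K * ((2:ℝ)^i)^ρ) (hj : 0 < j) :
    ∑ x ∈ S, h x ^ (-j) ≤ K * (1 - (2:ℝ)^(ρ - j))⁻¹ * L^(-j) := by
  classical
  let f : α → ℕ := fun x => Nat.log 2 ⌊h x / L⌋₊
  have hf1 : ∀ x ∈ S, 2^(f x) * L ≤ h x ∧ h x ≤ 2^(f x + 1) * L := by
    intro x hx
    have h1 : 1 ≤ h x / L := by rw [le_div_iff₀ hL]; linarith [hS x hx]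
    have h2 : ⌊h x / L⌋₊ ≠ 0 := by
      have := Nat.floor_pos.2 h1; omega
    constructor
    · rw [← le_div_iff₀ hL]
      calc (2:ℝ)^(f x) ≤ ⌊h x / L⌋₊ := by exact_mod_cast Nat.pow_log_le_self 2 h2
        _ ≤ h x / L := Nat.floor_le (by linarith)
    · rw [← div_le_iff₀ hL]
      have : ⌊h x / L⌋₊ + 1 ≤ 2^(f x + 1) := Nat.lt_pow_succ_log_self (by norm_num) _
      calc h x / L ≤ ⌊h x / L⌋₊ + 1 := (Nat.lt_floor_add_one _).le
        _ ≤ _ := by exact_mod_cast this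
  have hr0 : (0:ℝ) ≤ (2:ℝ)^(ρ - j) := by positivity
  have hr1 : (2:ℝ)^(ρ - j) < 1 := Real.rpow_lt_one_of_one_lt_of_neg (by norm_num) (by linarith)
  rw [← Finset.sum_fiberwise_of_maps_to (g := f) (t := S.image f) (fun x hx => Finset.mem_image_of_mem f hx)]
  calc _ ≤ ∑ i ∈ S.image f, K * L^(-j) * ((2:ℝ)^(ρ - j))^i := by
        apply Finset.sum_le_sum
        intro i _
        have hb : ∀ x ∈ S.filter (fun x => f x = i), h x ^ (-j) ≤ (2^i * L)^(-j) := by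
          intro x hx
          rw [Finset.mem_filter] at hx
          have := (hf1 x hx.1).1
          rw [hx.2] at this
          exact Real.rpow_le_rpow_of_nonpos (by positivity) this (by linarith)
        refine (Finset.sum_le_card_nsmul _ _ _ hb).trans ?_
        rw [nsmul_eq_mul]
        have hcard : ((S.filter (fun x => f x = i)).card : ℝ) ≤ K * ((2:ℝ)^i)^ρ := by
          refine le_trans ?_ (hc i)
          rw [Nat.cast_le]
          apply Finset.card_le_card
          intro x hx
          rw [Finset.mem_filter] at hx ⊢
          refine ⟨hx.1, ?_⟩
          have := (hf1 x hx.1).2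
          rwa [hx.2] at this
        calc _ ≤ K * ((2:ℝ)^i)^ρ * (2^i * L)^(-j) := by gcongr
          _ = _ := by
            rw [Real.mul_rpow (by positivity) hL.le, ← Real.rpow_natCast ((2:ℝ)^(ρ-j)), ← Real.rpow_mul (by norm_num),
              mul_comm (ρ - j), Real.rpow_mul (by norm_num), Real.rpow_natCast, sub_eq_add_neg,
              Real.rpow_add (by positivity)]
            ring
    _ = K * L^(-j) * ∑ i ∈ S.image f, ((2:ℝ)^(ρ - j))^i := by rw [Finset.mul_sum]
    _ ≤ K * L^(-j) * (1 - (2:ℝ)^(ρ - j))⁻¹ := by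
        gcongr
        rw [← tsum_geometric_of_lt_one hr0 hr1]
        exact (summable_geometric_of_lt_one hr0 hr1).sum_le_tsum _ (fun i _ => by positivity)
    _ = _ := by ring

lemma summable_w {j : ℝ} (hj : 1 < j) : Summable (fun D : ℤ => |(D:ℝ)|⁻¹ * LL D ^ (-j)) := by
  have h : Summable (fun n : ℕ => (n:ℝ)⁻¹ * Real.log (n + 2) ^ (-j)) := by
    rw [← summable_condensed_iff_of_nonneg]
    · have h1 : Summable (fun k : ℕ => (Real.log 2)^(-j) * (k:ℝ)^(-j)) :=
        (Real.summable_nat_rpow.2 (by linarith)).mul_left _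
      rw [← summable_nat_add_iff 1] at h1 ⊢
      refine Summable.of_nonneg_of_le (fun k => ?_) (fun k => ?_) h1
      · have : 0 ≤ Real.log (((2^(k+1) : ℕ):ℝ) + 2) := Real.log_nonneg (by
          have : (0:ℝ) ≤ ((2^(k+1) : ℕ):ℝ) := by positivity
          linarith)
        positivity
      · push_cast
        rw [← mul_assoc, mul_inv_cancel₀ (by positivity), one_mul, ← Real.mul_rpow (Real.log_nonneg (by norm_num)) (by positivity)]
        apply Real.rpow_le_rpow_of_nonpos _ _ (by linarith)
        · have : 0 < Real.log 2 := Real.log_pos (by norm_num)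
          positivity
        · rw [mul_comm]
          have : ((k:ℝ)+1) * Real.log 2 = Real.log (2^(k+1)) := by rw [Real.log_pow]; push_cast; rfl
          rw [this]
          exact Real.log_le_log (by positivity) (by linarith)
    · intro n
      have : 0 ≤ Real.log ((n:ℝ) + 2) := Real.log_nonneg (by
          have : (0:ℝ) ≤ (n:ℝ) := by positivity
          linarith)
      positivity
    · intro m n hm hmn
      have hm' : (0:ℝ) < m := by exact_mod_cast hm
      have hmn' : (m:ℝ) ≤ n := by exact_mod_cast hmn
      have h1 : 0 < Real.log ((m:ℝ) + 2) := Real.log_pos (by linarith)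
      have h2 : Real.log ((m:ℝ) + 2) ≤ Real.log ((n:ℝ) + 2) := Real.log_le_log (by linarith) (by linarith)
      exact mul_le_mul (inv_anti₀ hm' hmn') (Real.rpow_le_rpow_of_nonpos h1 h2 (by linarith))
        (Real.rpow_nonneg (h1.le.trans h2) _) (by positivity)
  apply Summable.of_nat_of_neg
  · refine h.congr (fun n => ?_)
    simp [LL]
  · refine h.congr (fun n => ?_)
    simp [LL]

end RS

namespace RS
open Height WeierstrassCurve WeierstrassCurve.Affine

lemma uv_eq {u v u' v' : ℤ} (h : Int.gcd u v = 1) (h' : Int.gcd u' v' = 1) (hv : v ≠ 0) (hv' : v' ≠ 0)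
    (e : (u:ℚ)/v = u'/v') : (u', v') = (u, v) ∨ (u', v') = (-u, -v) := by
  have e1 : u * v' = u' * v := by
    have h1 : (v:ℚ) ≠ 0 := by exact_mod_cast hv
    have h2 : (v':ℚ) ≠ 0 := by exact_mod_cast hv'
    field_simp at e
    exact_mod_cast (by linarith : (u:ℚ) * v' = u' * v)
  have c1 : IsCoprime u v := Int.isCoprime_iff_gcd_eq_one.2 h
  have c2 : IsCoprime u' v' := Int.isCoprime_iff_gcd_eq_one.2 h'
  have d1 : v ∣ v' := c1.symm.dvd_of_dvd_mul_left (Dvd.intro_left u' e1.symm)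
  have d2 : v' ∣ v := c2.symm.dvd_of_dvd_mul_left (Dvd.intro_left u e1)
  rcases (Int.associated_iff.1 (associated_of_dvd_dvd d1 d2)) with h | h
  · left
    subst h
    have := mul_right_cancel₀ hv e1
    rw [this]
  · right
    have hv2 : v' = -v := by omega
    subst hv2
    have : u' = -u := by
      apply mul_right_cancel₀ hv; linarith
    rw [this]

theorem fiber_bound {a b c : ℤ} (hf : disc a b c ≠ 0) {j : ℝ} (hj : 0 < j)
    (hR : RankBound a b c j) : ∃ K : ℝ, 0 ≤ K ∧ ∀ D : ℤ, Squarefree D → ∀ S : Finset (ℤ × ℤ),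
      (∀ p ∈ S, p ∈ Psi a b c ∧ ∃ m : ℚ, (Fbin a b c p.1 p.2 : ℚ) = D * m^2) →
      ∑ p ∈ S, ht p.1 p.2 ^ (-j) ≤ K * LL D ^ (-j) := by
  classical
  obtain ⟨H⟩ := exists_CH hf
  obtain ⟨g, hg, hgap⟩ := gap H
  obtain ⟨k, hk, hlb⟩ := exists_htlb a b c
  obtain ⟨T, hT⟩ := exists_pcount a b c H.C
  have hn : 0 < ⌈2*j⌉₊ := Nat.ceil_pos.2 (by linarith)
  obtain ⟨r, hr⟩ : ∃ r, ⌈2*j⌉₊ = r + 1 := ⟨⌈2*j⌉₊ - 1, by omega⟩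
  have hrj : (r:ℝ)/2 < j := by
    have : (r:ℝ) < 2*j := by
      rw [← Nat.lt_ceil]; omega
    linarith
  have hC := H.C0
  set X := 16 * ((1 + H.C) * k) / g with hX
  have hX0 : 0 < X := by positivity
  set K1 := 2 * T * (√X + 1)^r with hK1
  refine ⟨K1 * (1 - (2:ℝ)^((r:ℝ)/2 - j))⁻¹ * k^(-j), ?_, ?_⟩
  · have hr1 : (2:ℝ)^((r:ℝ)/2 - j) < 1 := Real.rpow_lt_one_of_one_lt_of_neg (by norm_num) (by linarith)
    have : 0 ≤ (1 - (2:ℝ)^((r:ℝ)/2 - j))⁻¹ := inv_nonneg.2 (by linarith)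
    positivity
  intro D hD S hS
  have hD0 := hD.ne_zero
  have hD' : (D:ℚ) ≠ 0 := by exact_mod_cast hD0
  have hL := LL_pos D
  rw [mul_assoc, ← Real.mul_rpow hk.le hL.le]
  apply dyadic S (fun p => ht p.1 p.2) (by positivity) (by positivity) hrj _ _ hj
  · intro p hp
    obtain ⟨h1, h2⟩ := hS p hp
    exact hlb D p.1 p.2 hD h1.2 h1.1 h2
  intro i
  set S' := S.filter (fun p => ht p.1 p.2 ≤ 2^(i+1) * (k * LL D)) with hS'
  choose! m hm using fun p hp => (hS p hp).2
  let φ : ℤ × ℤ → (twist a b c D).Point := fun p =>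
    if h : (twist a b c D).Nonsingular (D * ((p.1:ℚ)/p.2)) (D^2 * m p/p.2^2) then Point.some _ _ h else 0
  have hφ : ∀ p ∈ S, ∃ h, φ p = Point.some (D * ((p.1:ℚ)/p.2)) (D^2 * m p/p.2^2) h ∧
      hN (φ p) = logHeight₁ ((p.1:ℚ)/p.2) := by
    intro p hp
    obtain ⟨h', e⟩ := exists_pt hf hD0 (v_ne (hS p hp).1.2) (hm p hp)
    have : φ p = Point.some (D * ((p.1:ℚ)/p.2)) (D^2 * m p/p.2^2) h' := dif_pos h'
    exact ⟨h', this, by rw [this, e]⟩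
  have hcard : S'.card ≤ 2 * (S'.image φ).card := by
    apply Finset.card_le_mul_card_image
    intro P hP
    obtain ⟨p, hp, rfl⟩ := Finset.mem_image.1 hP
    have hpS := (Finset.mem_filter.1 hp).1
    have : S'.filter (fun x => φ x = φ p) ⊆ {(p.1, p.2), (-p.1, -p.2)} := by
      intro x hx
      obtain ⟨hx1, hx2⟩ := Finset.mem_filter.1 hx
      have hxS := (Finset.mem_filter.1 hx1).1
      obtain ⟨n1, e1, _⟩ := hφ p hpS
      obtain ⟨n2, e2, _⟩ := hφ x hxS
      rw [e1, e2, Point.some.injEq] at hx2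
      have := mul_left_cancel₀ hD' hx2.1
      rcases uv_eq (hS p hpS).1.1 (hS x hxS).1.1 (v_ne (hS p hpS).1.2) (v_ne (hS x hxS).1.2) this.symm with h | h
      · simp; left; exact h
      · simp; right; exact h
    exact (Finset.card_le_card this).trans Finset.card_le_two
  set N := ⌊√(X * 2^i)⌋₊ + 1 with hN
  have hNlt : √(X * 2^i) < N := by rw [hN]; push_cast; exact Nat.lt_floor_add_one _
  have hN2 : X * 2^i < (N:ℝ)^2 := by
    rw [← Real.sqrt_lt_sqrt_iff (by positivity), Real.sqrt_sq (by positivity)]; exact hNlt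
  have hcount : (S'.image φ).card ≤ T * N^r := by
    apply count (H.para D hD0) (H.nn D hD0) (g := g * LL D) (B := (1+H.C) * (2^(i+1) * (k * LL D)))
      (T := T) (r := r)
    · have := hR D hD0
      rw [hr] at this
      exact this
    · intro Q hQ
      apply hT D hD0
      intro P hP
      have := H.hN_le hD0 P
      rw [hQ P hP] at this; linarith
    · exact hgap D hD
    · omega
    · have : 8 * ((1 + H.C) * (2 ^ (i + 1) * (k * LL D))) = g * LL D * (X * 2^i) := by
        rw [hX, pow_succ]; field_simp; ring
      rw [this]
      gcongr
    · intro P hP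
      obtain ⟨p, hp, rfl⟩ := Finset.mem_image.1 hP
      obtain ⟨hpS, hp2⟩ := Finset.mem_filter.1 hp
      obtain ⟨_, _, e⟩ := hφ p hpS
      have h1 := H.q_le hD0 (φ p)
      rw [e] at h1
      have h2 := ht_eq (hS p hpS).1.1 (v_ne (hS p hpS).1.2)
      have h3 : 1 ≤ ht p.1 p.2 := by rw [h2]; exact le_max_left _ _
      have h4 : logHeight₁ ((p.1:ℚ)/p.2) ≤ ht p.1 p.2 := by rw [h2]; exact le_max_right _ _
      calc H.q D (φ p) ≤ (1 + H.C) * ht p.1 p.2 := by nlinarith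
        _ ≤ _ := by gcongr
  have hNle : (N:ℝ) ≤ (√X + 1) * ((2:ℝ)^i)^((1:ℝ)/2) := by
    rw [← Real.sqrt_eq_rpow, hN]; push_cast
    have h1 : (⌊√(X * 2^i)⌋₊ : ℝ) ≤ √(X * 2^i) := Nat.floor_le (by positivity)
    rw [Real.sqrt_mul hX0.le] at h1 ⊢
    have : 1 ≤ √((2:ℝ)^i) := by
      rw [Real.one_le_sqrt]; exact one_le_pow₀ (by norm_num)
    linarith
  calc (S'.card : ℝ) ≤ ((2 * (T * N^r) : ℕ) : ℝ) := by
        exact_mod_cast hcard.trans (Nat.mul_le_mul_left _ hcount)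
    _ = 2 * (T * (N:ℝ)^r) := by push_cast; ring
    _ ≤ 2 * (T * ((√X + 1) * ((2:ℝ)^i)^((1:ℝ)/2))^r) := by gcongr
    _ = K1 * ((2:ℝ)^i)^((r:ℝ)/2) := by
      rw [mul_pow, ← Real.rpow_natCast (((2:ℝ)^i)^((1:ℝ)/2)), ← Real.rpow_mul (by positivity), hK1]
      rw [show (1:ℝ)/2 * r = r/2 by ring]; ring

theorem ac_big {a b c : ℤ} (hf : disc a b c ≠ 0) {sq : ℤ → ℤ} (hsq : IsSqfreePart sq) {j : ℝ} (hj : 1 < j)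
    (hR : RankBound a b c j) (k : ℝ) (hk : 1 ≤ k) : SConv a b c sq j k Set.univ := by
  classical
  obtain ⟨K, hK, hb⟩ := fiber_bound hf (by linarith) hR
  have hw := summable_w hj
  apply summable_of_sum_le (c := K * ∑' D : ℤ, |(D:ℝ)|⁻¹ * LL D ^ (-j))
  · intro p
    have : 0 ≤ ht p.1.1 p.1.2 := le_trans zero_le_one (le_max_left _ _)
    simp only [STerm, Pi.zero_apply]; positivity
  intro u
  let ψ : SIdx a b c Set.univ → ℤ := fun p => sq (Fbin a b c p.1.1 p.1.2)
  rw [← Finset.sum_fiberwise_of_maps_to (g := ψ) (t := u.image ψ) (fun x hx => Finset.mem_image_of_mem ψ hx)]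
  calc _ ≤ ∑ D ∈ u.image ψ, K * (|(D:ℝ)|⁻¹ * LL D ^ (-j)) := by
        apply Finset.sum_le_sum
        intro D hD
        obtain ⟨p0, hp0, hpD⟩ := Finset.mem_image.1 hD
        have hDs : Squarefree D := by rw [← hpD]; exact (hsq _ p0.2.1.2).1
        have h1 : (1:ℝ) ≤ |(D:ℝ)| := by exact_mod_cast Int.one_le_abs hDs.ne_zero
        have hS := hb D hDs ((u.filter (fun p => ψ p = D)).image Subtype.val) (by
          intro p hp
          obtain ⟨q, hq, rfl⟩ := Finset.mem_image.1 hp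
          obtain ⟨_, hq2⟩ := Finset.mem_filter.1 hq
          refine ⟨q.2.1, ?_⟩
          have := (hsq _ q.2.1.2).2
          rw [← hq2]; exact this)
        rw [Finset.sum_image (fun x _ y _ h => Subtype.ext h)] at hS
        calc ∑ p ∈ u.filter (fun p => ψ p = D), STerm a b c sq j k p.1
            = |(D:ℝ)|^(-k) * ∑ p ∈ u.filter (fun p => ψ p = D), ht p.1.1 p.1.2 ^ (-j) := by
              rw [Finset.mul_sum]
              apply Finset.sum_congr rfl
              intro p hp
              have := (Finset.mem_filter.1 hp).2
              simp only [STerm]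
              rw [← this]
          _ ≤ |(D:ℝ)|⁻¹ * (K * LL D ^ (-j)) := by
              apply mul_le_mul _ hS _ (by positivity)
              · rw [← Real.rpow_neg_one]
                exact Real.rpow_le_rpow_of_exponent_le h1 (by linarith)
              · apply Finset.sum_nonneg
                intro p _
                have : 0 ≤ ht p.1.1 p.1.2 := le_trans zero_le_one (le_max_left _ _)
                positivity
          _ = _ := by ring
    _ = K * ∑ D ∈ u.image ψ, (|(D:ℝ)|⁻¹ * LL D ^ (-j)) := by rw [Finset.mul_sum]
    _ ≤ _ := by
      gcongr
      apply hw.sum_le_tsum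
      intro D _
      have := (LL_pos D).le
      positivity

end RS

namespace RS
open Filter

def gg (α β γ x : ℝ) : ℝ := x^3 + α*x^2 + β*x + γ
def gd (α β x : ℝ) : ℝ := 3*x^2 + 2*α*x + β
def hh (s t x : ℝ) : ℝ := x^2 + s*x + t

/-- `e` is the largest root, `g = (x-e)(x²+sx+t)` with second factor `≥ κ > 0` on `[e,∞)`. -/
structure Top (α β γ e s t κ : ℝ) : Prop where
  ha : α = s - e
  hb : β = t - e*s
  hc : γ = -(e*t)
  k0 : 0 < κ
  hk : ∀ x, e ≤ x → κ ≤ hh s t x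

lemma Top.g_eq {α β γ e s t κ : ℝ} (h : Top α β γ e s t κ) (x : ℝ) : gg α β γ x = (x - e) * hh s t x := by
  rw [gg, hh, h.ha, h.hb, h.hc]; ring

lemma Top.g_ge {α β γ e s t κ : ℝ} (h : Top α β γ e s t κ) {x : ℝ} (hx : e ≤ x) :
    κ * (x - e) ≤ gg α β γ x := by
  rw [h.g_eq]; have := h.hk x hx; nlinarith

lemma exists_root (α β γ : ℝ) : ∃ x, gg α β γ x = 0 := by
  set S := 1 + |α| + |β| + |γ| with hS
  have hS1 : 1 ≤ S := by rw [hS]; linarith [abs_nonneg α, abs_nonneg β, abs_nonneg γ]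
  have hα := abs_le.1 (le_refl |α|)
  have hβ := abs_le.1 (le_refl |β|)
  have hγ := abs_le.1 (le_refl |γ|)
  have hc : Continuous (gg α β γ) := by unfold gg; fun_prop
  have h1 : 0 ≤ gg α β γ S := by
    have e : gg α β γ S = S^2 + (|α|+α)*S^2 + (|β| *S+β)*S + (|γ| *S^2+γ) := by
      rw [gg]; nth_rw 1 [pow_succ]; nth_rw 2 [hS]; ring
    rw [e]
    have i1 : 0 ≤ |β| *S+β := by nlinarith [abs_nonneg β]
    have i2 : 0 ≤ |γ| *S^2+γ := by nlinarith [mul_nonneg (abs_nonneg γ) (by nlinarith : (0:ℝ) ≤ S^2 - 1)]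
    have i3 : 0 ≤ |α|+α := by linarith
    positivity
  have h2 : gg α β γ (-S) ≤ 0 := by
    have e : gg α β γ (-S) = -(S^2 + (|α|-α)*S^2 + (|β| *S+β)*S + (|γ| *S^2-γ)) := by
      rw [gg]
      have : S^3 = S^2*(1 + |α| + |β| + |γ|) := by rw [← hS]; ring
      linear_combination -this
    rw [e]
    have i1 : 0 ≤ |β| *S+β := by nlinarith [abs_nonneg β]
    have i2 : 0 ≤ |γ| *S^2-γ := by nlinarith [mul_nonneg (abs_nonneg γ) (by nlinarith : (0:ℝ) ≤ S^2 - 1)]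
    have i3 : 0 ≤ |α|-α := by linarith
    have : 0 ≤ (S^2 + (|α|-α)*S^2 + (|β| *S+β)*S + (|γ| *S^2-γ)) := by positivity
    linarith
  have := intermediate_value_Icc (by linarith : -S ≤ S) hc.continuousOn ⟨h2, h1⟩
  obtain ⟨x, _, hx⟩ := this
  exact ⟨x, hx⟩

lemma exists_top (α β γ : ℝ) (hd : α^2*β^2 - 4*β^3 - 4*α^3*γ - 27*γ^2 + 18*α*β*γ ≠ 0) :
    ∃ e s t κ, Top α β γ e s t κ := by
  -- the set of roots is finite
  have hfin : {x | gg α β γ x = 0}.Finite := by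
    let p : Polynomial ℝ := Polynomial.X^3 + Polynomial.C α * Polynomial.X^2 + Polynomial.C β * Polynomial.X + Polynomial.C γ
    have hp : p ≠ 0 := by
      intro h
      have : p.coeff 3 = 0 := by rw [h]; simp
      simp [p, Polynomial.coeff_X, Polynomial.coeff_C] at this
    apply (p.roots.toFinset.finite_toSet).subset
    intro x hx
    simp [hp]
    simpa [p, gg] using hx
  obtain ⟨e, he, hmax⟩ := Set.exists_max_image _ id hfin (exists_root α β γ)
  have he' : gg α β γ e = 0 := he
  set s := α + e with hs
  set t := β + e*s with ht
  have ha : α = s - e := by rw [hs]; ring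
  have hb : β = t - e*s := by rw [ht]; ring
  have hc : γ = -(e*t) := by
    rw [ht, hs]; rw [gg] at he'; linarith
  have hge : ∀ x, gg α β γ x = (x - e) * hh s t x := by
    intro x; rw [gg, hh, ha, hb, hc]; ring
  clear_value s t
  have hne : ∀ x, e ≤ x → hh s t x ≠ 0 := by
    intro x hx h0
    have hr : gg α β γ x = 0 := by rw [hge, h0, mul_zero]
    have := hmax x hr
    simp only [id] at this
    have hxe : x = e := le_antisymm this hx
    subst hxe
    apply hd
    have : α^2*β^2 - 4*β^3 - 4*α^3*γ - 27*γ^2 + 18*α*β*γ = (hh s t x)^2*(s^2-4*t) := by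
      rw [ha, hb, hc, hh]; ring
    rw [this, h0]; ring
  have hpos : ∀ x, e ≤ x → 0 < hh s t x := by
    intro x hx
    by_contra hle
    push Not at hle
    set Y := 1 + |x| + |s| + |t|
    have hxY : x ≤ Y := by linarith [le_abs_self x, abs_nonneg s, abs_nonneg t]
    have hY : 0 ≤ hh s t Y := by
      have h1 : |s| + |t| + 1 ≤ Y := by linarith [abs_nonneg x]
      rw [hh]
      have := neg_abs_le s
      have := neg_abs_le t
      nlinarith [abs_nonneg s, abs_nonneg t]
    have hc : Continuous (hh s t) := by unfold hh; fun_prop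
    obtain ⟨z, hz, hz0⟩ := intermediate_value_Icc hxY hc.continuousOn ⟨hle, hY⟩
    exact hne z (hx.trans hz.1) hz0
  by_cases hv : -s/2 ≤ e
  · exact ⟨e, s, t, hh s t e, ha, hb, hc, hpos e le_rfl, fun x hx => by
      simp only [hh]; nlinarith⟩
  · push Not at hv
    exact ⟨e, s, t, hh s t (-s/2), ha, hb, hc, hpos _ hv.le, fun x hx => by
      simp only [hh]; nlinarith [sq_nonneg (x + s/2)]⟩

/-- x-coordinate of the sum -/
noncomputable def ax (α x y q r : ℝ) : ℝ := ((y - r)/(x - q))^2 - α - x - q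

lemma ax_eq {α β γ x y q r : ℝ} (hy : y^2 = gg α β γ x) (hr : r^2 = gg α β γ q) (hq : x ≠ q) :
    (ax α x y q r - x) * (x - q)^2 = q * gd α β x - 2*(y*r) + (β*x + 2*γ - x^3) := by
  have : x - q ≠ 0 := sub_ne_zero.2 hq
  rw [ax]
  field_simp
  rw [gg] at hy hr
  rw [gd]
  linear_combination hy + hr

lemma exists_bd (α β γ e R : ℝ) : ∃ K : ℝ, 1 ≤ K ∧ ∀ x, e ≤ x → x ≤ R →
    |gd α β x| ≤ K ∧ |β*x + 2*γ - x^3| ≤ K ∧ |gg α β γ x| ≤ K := by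
  obtain ⟨K1, h1⟩ := (isCompact_Icc (a := e) (b := R)).exists_bound_of_continuousOn (f := gd α β)
    (by unfold gd; fun_prop)
  obtain ⟨K2, h2⟩ := (isCompact_Icc (a := e) (b := R)).exists_bound_of_continuousOn (f := fun x => β*x + 2*γ - x^3)
    (by fun_prop)
  obtain ⟨K3, h3⟩ := (isCompact_Icc (a := e) (b := R)).exists_bound_of_continuousOn (f := gg α β γ)
    (by unfold gg; fun_prop)
  refine ⟨max 1 (max K1 (max K2 K3)), le_max_left _ _, fun x hx hR => ⟨?_, ?_, ?_⟩⟩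
  · exact (h1 x ⟨hx, hR⟩).trans (by simp)
  · exact (h2 x ⟨hx, hR⟩).trans (by simp)
  · exact (h3 x ⟨hx, hR⟩).trans (by simp)

lemma g_bounds (α β γ : ℝ) {q : ℝ} (hq : 1 ≤ q) :
    gg α β γ q ≤ (1 + (|α|+|β|+|γ|)) * q^3 ∧ q^3 - (|α|+|β|+|γ|)*q^2 ≤ gg α β γ q := by
  have hα := abs_le.1 (le_refl |α|)
  have hβ := abs_le.1 (le_refl |β|)
  have hγ := abs_le.1 (le_refl |γ|)
  have q2 : q ≤ q^2 := by nlinarith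
  have q3 : q^2 ≤ q^3 := by nlinarith
  have q1 : 1 ≤ q^2 := by linarith
  rw [gg]
  have b0 := abs_nonneg β
  have c0 := abs_nonneg γ
  have a0 := abs_nonneg α
  have i1 : |α*q^2| ≤ |α| * q^2 := by rw [abs_mul, abs_of_nonneg (by positivity : (0:ℝ) ≤ q^2)]
  have i2 : |β*q| ≤ |β| * q^2 := by rw [abs_mul, abs_of_nonneg (by linarith : (0:ℝ) ≤ q)]; gcongr
  have i3 : |γ| ≤ |γ| * q^2 := by nlinarith
  have j1 := abs_le.1 i1
  have j2 := abs_le.1 i2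
  have j3 := abs_le.1 i3
  constructor
  · have : (|α|+|β|+|γ|)*q^2 ≤ (|α|+|β|+|γ|)*q^3 := by gcongr
    linarith
  · linarith

lemma ev_r_ge (α β γ c : ℝ) (hc : 0 ≤ c) : ∀ᶠ q in atTop, ∀ r, r^2 = gg α β γ q → c * q ≤ |r| := by
  filter_upwards [eventually_ge_atTop 1, eventually_ge_atTop (c^2 + (|α|+|β|+|γ|))] with q h1 h2 r hr
  have := (g_bounds α β γ h1).2
  have h3 : (c*q)^2 ≤ r^2 := by
    rw [hr]
    refine le_trans ?_ this
    have : (c^2 + (|α|+|β|+|γ|)) * q^2 ≤ q * q^2 := by gcongr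
    linarith [this, (by ring : q * q^2 = q^3), (by ring : (c*q)^2 = c^2*q^2)]
  exact (le_abs_self _).trans (sq_le_sq.1 h3)

lemma ev_r_le (α β γ : ℝ) {η : ℝ} (hη : 0 < η) :
    ∀ᶠ q in atTop, ∀ r, r^2 = gg α β γ q → |r| ≤ η * q^2 := by
  filter_upwards [eventually_ge_atTop 1, eventually_ge_atTop ((1+(|α|+|β|+|γ|))/η^2)] with q h1 h2 r hr
  have := (g_bounds α β γ h1).1
  rw [div_le_iff₀ (by positivity)] at h2
  have h3 : r^2 ≤ (η*q^2)^2 := by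
    rw [hr]
    calc _ ≤ _ := this
      _ ≤ (q * η^2) * q^3 := by gcongr
      _ = _ := by ring
  exact abs_le_of_sq_le_sq h3 (by positivity)

lemma jump (α β γ e R : ℝ) {ε : ℝ} (hε : 0 < ε) : ∀ᶠ q in atTop, R < q ∧ ∀ r, r^2 = gg α β γ q →
    ∀ x y, e ≤ x → x ≤ R → y^2 = gg α β γ x → |ax α x y q r - x| ≤ ε := by
  obtain ⟨K, hK, hb⟩ := exists_bd α β γ e R
  filter_upwards [eventually_ge_atTop 1, eventually_gt_atTop R, eventually_ge_atTop (2*R),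
    eventually_ge_atTop (16*K/ε), ev_r_le α β γ (η := ε/(16*K)) (by positivity)] with q h1 hR h2 h3 h4
  refine ⟨hR, fun r hr x y hx hxR hy => ?_⟩
  obtain ⟨b1, b2, b3⟩ := hb x hx hxR
  have hxq : x < q := by linarith
  have e1 := ax_eq hy hr hxq.ne
  have e2 := h4 r hr
  have hyK : |y| ≤ K := by
    apply abs_le_of_sq_le_sq _ (by linarith)
    rw [hy]; have := (abs_le.1 b3).2; nlinarith
  have hsq : q^2/4 ≤ (x-q)^2 := by nlinarith
  have hN : |q * gd α β x - 2*(y*r) + (β*x + 2*γ - x^3)| ≤ ε * (q^2/4) := by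
    have t1 : |q * gd α β x - 2*(y*r) + (β*x + 2*γ - x^3)| ≤ q*K + 2*(K * (ε/(16*K)*q^2)) + K := by
      refine (abs_add_le _ _).trans (add_le_add ((abs_sub _ _).trans (add_le_add ?_ ?_)) b2)
      · rw [abs_mul, abs_of_pos (by linarith : 0 < q)]; gcongr
      · rw [abs_mul, abs_mul, abs_two]; gcongr
    have t2 : K * (ε/(16*K)*q^2) = ε/16*q^2 := by field_simp
    rw [div_le_iff₀ hε] at h3
    rw [t2] at t1
    nlinarith
  have hp : 0 < (x-q)^2 := by nlinarith
  rw [← e1, abs_mul, abs_of_pos hp] at hN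
  have : |ax α x y q r - x| * (x-q)^2 ≤ ε * (x-q)^2 := hN.trans (by gcongr)
  exact le_of_mul_le_mul_right this hp

lemma right {α β γ e s t κ : ℝ} (h : Top α β γ e s t κ) (R : ℝ) :
    ∀ᶠ q in atTop, R < q ∧ ∃ δ > 0, ∀ r, r^2 = gg α β γ q →
    ∀ x y, e ≤ x → x ≤ R → y^2 = gg α β γ x → y*r ≤ 0 → δ ≤ ax α x y q r - x := by
  obtain ⟨K, hK, hb⟩ := exists_bd α β γ e R
  obtain ⟨B, hB⟩ := (isCompact_Icc (a := e) (b := R)).exists_bound_of_continuousOn (f := fun x => 2*x+s)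
    (by fun_prop)
  have hk0 := h.k0
  set B' := max B 0 with hB'
  have hB0 : 0 ≤ B' := le_max_right _ _
  -- |h'| ≤ B' on [e,R]
  set c := B' * √(R-e) / (2 * √κ) with hc
  filter_upwards [eventually_ge_atTop 1, eventually_gt_atTop R, eventually_ge_atTop ((K+1)/κ),
    ev_r_ge α β γ c (by positivity)] with q h1 hR h3 h4
  refine ⟨hR, ?_⟩
  by_cases hRe : e ≤ R
  swap
  · exact ⟨1, one_pos, fun r _ x y hx hxR => absurd (hx.trans hxR) hRe⟩
  refine ⟨1/(q-e)^2, ?_, fun r hr x y hx hxR hy hyr => ?_⟩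
  · have : 0 < q - e := by linarith
    positivity
  obtain ⟨b1, b2, b3⟩ := hb x hx hxR
  have hxq : x < q := by linarith
  have e1 := ax_eq hy hr hxq.ne
  have e4 := h4 r hr
  have hkx := h.hk x hx
  have hgd : gd α β x = hh s t x + (x-e)*(2*x+s) := by
    rw [gd, hh, h.ha, h.hb]; ring
  have hBx : -(B' * (x-e)) ≤ (x-e)*(2*x+s) := by
    have := hB x ⟨hx, hxR⟩
    have := (abs_le.1 this).1
    have hBB : B ≤ B' := le_max_left _ _
    nlinarith
  have hyabs : √κ * √(x-e) ≤ |y| := by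
    rw [← Real.sqrt_mul hk0.le, ← Real.sqrt_sq_eq_abs, hy]
    exact Real.sqrt_le_sqrt (h.g_ge hx)
  have hyr2 : -(y*r) = |y| *|r| := by rw [← abs_mul, abs_of_nonpos hyr]
  have hkey : q * (B' * (x-e)) ≤ 2 * (|y| *|r|) := by
    have s1 : x - e = √(x-e) * √(x-e) := (Real.mul_self_sqrt (by linarith)).symm
    have s2 : √(x-e) ≤ √(R-e) := Real.sqrt_le_sqrt (by linarith)
    have hsk : 0 < √κ := Real.sqrt_pos.2 hk0
    calc q * (B' * (x-e)) = q * B' * √(x-e) * √(x-e) := by rw [mul_assoc (q*B'), ← s1, mul_assoc]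
      _ ≤ q * B' * √(x-e) * √(R-e) := by gcongr
      _ = 2 * ((√κ * √(x-e)) * (c * q)) := by rw [hc]; field_simp
      _ ≤ _ := by gcongr
  rw [div_le_iff₀ hk0] at h3
  have hN : 1 ≤ (ax α x y q r - x) * (x - q)^2 := by
    rw [e1, hgd]
    have := (abs_le.1 b2).1
    nlinarith
  have hp : 0 < (x-q)^2 := by nlinarith
  have hp2 : (x-q)^2 ≤ (q-e)^2 := by nlinarith
  have : 1/(q-e)^2 ≤ 1/(x-q)^2 := one_div_le_one_div_of_le hp hp2
  refine this.trans ?_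
  rw [div_le_iff₀ hp]; exact hN

lemma left {α β γ e s t κ : ℝ} (h : Top α β γ e s t κ) {R β1 : ℝ} (hβ1 : e < β1) :
    ∀ᶠ q in atTop, R < q ∧ ∃ δ > 0, ∀ r, r^2 = gg α β γ q →
    ∀ x y, β1 ≤ x → x ≤ R → y^2 = gg α β γ x → 0 ≤ y*r → ax α x y q r - x ≤ -δ := by
  obtain ⟨K, hK, hb⟩ := exists_bd α β γ e R
  have hk0 := h.k0
  have hm : 0 < κ * (β1 - e) := mul_pos hk0 (by linarith)
  set c := 3*K / √(κ * (β1 - e)) with hc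
  have hsm : 0 < √(κ * (β1 - e)) := Real.sqrt_pos.2 hm
  filter_upwards [eventually_ge_atTop 1, eventually_gt_atTop R,
    ev_r_ge α β γ c (by positivity)] with q h1 hR h4
  refine ⟨hR, ?_⟩
  by_cases hRe : e ≤ R
  swap
  · exact ⟨1, one_pos, fun r _ x y hx hxR => absurd (hβ1.le.trans (hx.trans hxR)) hRe⟩
  refine ⟨1/(q-e)^2, ?_, fun r hr x y hx hxR hy hyr => ?_⟩
  · have : 0 < q - e := by linarith
    positivity
  have hxe : e ≤ x := by linarith
  obtain ⟨b1, b2, b3⟩ := hb x hxe hxR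
  have hxq : x < q := by linarith
  have e1 := ax_eq hy hr hxq.ne
  have e4 := h4 r hr
  have hyabs : √(κ * (β1 - e)) ≤ |y| := by
    rw [← Real.sqrt_sq_eq_abs, hy]
    apply Real.sqrt_le_sqrt
    refine le_trans ?_ (h.g_ge hxe)
    gcongr
  have hyr2 : y*r = |y| *|r| := by rw [← abs_mul, abs_of_nonneg hyr]
  have hkey : 3*K*q ≤ y*r := by
    rw [hyr2]
    calc 3*K*q = √(κ * (β1 - e)) * (c * q) := by rw [hc]; field_simp
      _ ≤ _ := by gcongr
  have hN : (ax α x y q r - x) * (x - q)^2 ≤ -1 := by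
    rw [e1]
    have t1 := (abs_le.1 b2).2
    have t2 := (abs_le.1 b1).2
    have t3 : q * gd α β x ≤ q * K := by gcongr
    nlinarith
  have hp : 0 < (x-q)^2 := by nlinarith
  have hp2 : (x-q)^2 ≤ (q-e)^2 := by nlinarith
  have : 1/(q-e)^2 ≤ 1/(x-q)^2 := one_div_le_one_div_of_le hp hp2
  have h5 : 1/(x-q)^2 ≤ -(ax α x y q r - x) := by
    rw [div_le_iff₀ hp]; linarith
  linarith

end RS

namespace RS
open Filter

structure Cur {G : Type*} [AddCommGroup G] (α β γ : ℝ) (x y : G → ℝ) : Prop where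
  on : ∀ P, P ≠ 0 → y P ^ 2 = gg α β γ (x P)
  xneg : ∀ P, x (-P) = x P
  yneg : ∀ P, y (-P) = - y P
  add : ∀ P Q, P ≠ 0 → Q ≠ 0 → x P ≠ x Q → P + Q ≠ 0 ∧ x (P + Q) = ax α (x P) (y P) (x Q) (y Q)
  xeq : ∀ P Q, P ≠ 0 → Q ≠ 0 → x P = x Q → P = Q ∨ P = -Q

variable {G : Type*} [AddCommGroup G] {α β γ e s t κ : ℝ} {x y : G → ℝ}

lemma Cur.sgn (C : Cur α β γ x y) {A : AddSubgroup G} (P Q : G) (hQ : Q ∈ A) (hQ0 : Q ≠ 0) :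
    ∃ m : ℤ, |m| ≤ 1 ∧ m • Q ∈ A ∧ m • Q ≠ 0 ∧ x (m • Q) = x Q ∧ y P * y (m • Q) ≤ 0 := by
  rcases le_total (y P * y Q) 0 with h | h
  · exact ⟨1, by simp, by simpa using hQ, by simpa using hQ0, by simp, by simpa using h⟩
  · exact ⟨-1, by simp, by simpa using hQ, by simpa using hQ0, by simp [C.xneg], by simpa [C.yneg] using h⟩

lemma Cur.sgn' (C : Cur α β γ x y) {A : AddSubgroup G} (P Q : G) (hQ : Q ∈ A) (hQ0 : Q ≠ 0) :
    ∃ m : ℤ, |m| ≤ 1 ∧ m • Q ∈ A ∧ m • Q ≠ 0 ∧ x (m • Q) = x Q ∧ 0 ≤ y P * y (m • Q) := by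
  rcases le_total 0 (y P * y Q) with h | h
  · exact ⟨1, by simp, by simpa using hQ, by simpa using hQ0, by simp, by simpa using h⟩
  · exact ⟨-1, by simp, by simpa using hQ, by simpa using hQ0, by simp [C.xneg], by simpa [C.yneg] using h⟩

lemma Cur.large (C : Cur α β γ x y) (h : Top α β γ e s t κ) (A : AddSubgroup G)
    (hA : ∀ P ∈ A, P ≠ 0 → e ≤ x P) (Q : G) (hQA : Q ∈ A) (hQ : ∀ n : ℤ, n ≠ 0 → n • Q ≠ 0) (M : ℝ) :
    ∃ P ∈ A, P ≠ 0 ∧ M < x P := by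
  by_contra hcon
  push Not at hcon
  have hk0 := h.k0
  set T := |α| + 3 * |M| + 1 with hT
  have hT0 : 0 < T := by positivity
  set ε := κ / T with hε
  have hε0 : 0 < ε := by positivity
  have hin : ∀ n : ℕ, ((n:ℤ)+1) • Q ∈ A := fun n => A.zsmul_mem hQA _
  have hne : ∀ n : ℕ, ((n:ℤ)+1) • Q ≠ 0 := fun n => hQ _ (by omega)
  obtain ⟨n, -, m, -, hnm, hfl⟩ := Set.Infinite.exists_ne_map_eq_of_mapsTo (s := (Set.univ : Set ℕ))
    (t := Set.Icc ⌊e/ε⌋ ⌊M/ε⌋) (f := fun n => ⌊x (((n:ℤ)+1) • Q)/ε⌋) Set.infinite_univ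
    (fun n _ => ⟨Int.floor_le_floor (by gcongr; exact hA _ (hin n) (hne n)),
      Int.floor_le_floor (by gcongr; exact hcon _ (hin n) (hne n))⟩) (Set.finite_Icc _ _)
  have hfl := hfl
  have habs := Int.abs_sub_lt_one_of_floor_eq_floor hfl
  set P := ((n:ℤ)+1) • Q with hP
  set P' := ((m:ℤ)+1) • Q with hP'
  rw [← sub_div, abs_div, abs_of_pos hε0, div_lt_one hε0] at habs
  have hxne : x P ≠ x P' := by
    intro hx
    rcases C.xeq _ _ (hne n) (hne m) hx with h1 | h1
    · refine hQ ((n:ℤ) - m) (by omega) ?_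
      have : P - P' = 0 := sub_eq_zero.2 h1
      rw [← this, hP, hP', ← sub_smul]; congr 1; ring
    · refine hQ ((n:ℤ) + m + 2) (by omega) ?_
      have : P + P' = 0 := eq_neg_iff_add_eq_zero.1 h1
      rw [← this, hP, hP', ← add_smul]; congr 1; ring
  obtain ⟨σ, -, hA', h0', hx', hy'⟩ := C.sgn P P' (hin m) (hne m)
  set P'' := σ • P' with hP''
  obtain ⟨g1, g2⟩ := C.add P P'' (hne n) h0' (by rw [hx']; exact hxne)
  have g3 := hcon _ (A.add_mem (hin n) hA') g1
  have on1 := C.on P (hne n)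
  have on2 := C.on P'' h0'
  have ge1 := h.g_ge (hA P (hin n) (hne n))
  have ge2 := h.g_ge (hA P'' hA' h0')
  rw [← on1] at ge1
  rw [← on2] at ge2
  have e1 := hA P (hin n) (hne n)
  have e2 := hA P'' hA' h0'
  have u1 := hcon P (hin n) (hne n)
  have u2 := hcon P'' hA' h0'
  rw [← hx'] at habs hxne
  set d := x P - x P'' with hd
  have hd0 : d ≠ 0 := sub_ne_zero.2 hxne
  have hdp : 0 < |d| := abs_pos.2 hd0
  have hnum : κ * |d| ≤ (y P - y P'')^2 := by
    have : |d| ≤ (x P - e) + (x P'' - e) := by rw [abs_le]; constructor <;> linarith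
    nlinarith
  have hq : T ≤ ((y P - y P'')/d)^2 := by
    rw [div_pow, le_div_iff₀ (by positivity), ← sq_abs d]
    refine le_trans ?_ hnum
    have : T * ε = κ := by rw [hε]; field_simp
    nlinarith [mul_le_mul_of_nonneg_left habs.le hT0.le]
  rw [ax] at g2
  have := neg_abs_le α
  have := le_abs_self α
  have := le_abs_self M
  have := abs_nonneg M
  linarith

lemma Cur.cover (C : Cur α β γ x y) (h : Top α β γ e s t κ) (A : AddSubgroup G)
    (hA : ∀ P ∈ A, P ≠ 0 → e ≤ x P) (Q : G) (hQA : Q ∈ A) (hQ : ∀ n : ℤ, n ≠ 0 → n • Q ≠ 0)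
    {β1 β2 : ℝ} (hb1 : e < β1) (hb2 : β1 < β2) :
    ∃ Fs : Finset G, ∀ P ∈ A, ∃ F ∈ Fs, P + F ≠ 0 ∧ β1 < x (P + F) ∧ x (P + F) < β2 := by
  classical
  have hQ0 : Q ≠ 0 := by simpa using hQ 1 one_ne_zero
  have heQ := hA Q hQA hQ0
  obtain ⟨q0, hq0⟩ := eventually_atTop.1 (jump α β γ e (x Q) one_pos)
  set R := max q0 (max (x Q + 1) β2) with hR
  have hR1 : q0 ≤ R := le_max_left _ _
  have hR2 : x Q + 1 ≤ R := (le_max_left _ _).trans (le_max_right _ _)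
  have hR3 : β2 ≤ R := (le_max_right _ _).trans (le_max_right _ _)
  clear_value R
  have hε : 0 < (β2-β1)/2 := by linarith
  obtain ⟨q1, hq1⟩ := eventually_atTop.1 ((jump α β γ e R hε).and ((right h R).and (left h (R := R) hb1)))
  obtain ⟨Q1, hQ1A, hQ10, hQ1x⟩ := C.large h A hA Q hQA hQ q1
  obtain ⟨⟨hRq, hj⟩, ⟨-, δ1, hδ1, hr⟩, ⟨-, δ2, hδ2, hl⟩⟩ := hq1 _ hQ1x.le
  -- walking right
  have W : ∀ n : ℕ, ∀ P ∈ A, P ≠ 0 → x P < β2 → β1 < x P + n * δ1 →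
      ∃ m : ℤ, |m| ≤ n ∧ P + m • Q1 ≠ 0 ∧ β1 < x (P + m • Q1) ∧ x (P + m • Q1) < β2 := by
    intro n
    induction n with
    | zero =>
      intro P hP hP0 h1 h2
      refine ⟨0, by simp, by simpa using hP0, ?_, ?_⟩ <;> simp at h2 ⊢ <;> assumption
    | succ n ih =>
      intro P hP hP0 h1 h2
      by_cases hx : β1 < x P
      · refine ⟨0, by simp; positivity, by simpa using hP0, ?_, ?_⟩ <;> simp <;> assumption
      push Not at hx
      obtain ⟨σ, hσ, hA', h0', hx', hy'⟩ := C.sgn P Q1 hQ1A hQ10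
      have heP := hA P hP hP0
      have hPR : x P ≤ R := by linarith
      obtain ⟨g1, g2⟩ := C.add P (σ • Q1) hP0 h0' (by rw [hx']; linarith)
      have on1 := C.on P hP0
      have on2 := C.on _ h0'
      rw [hx'] at g2 on2
      have j1 := hj _ on2 _ _ heP hPR on1
      have j2 := hr _ on2 _ _ heP hPR on1 hy'
      rw [← g2] at j1 j2
      have j3 := (abs_le.1 j1).2
      push_cast at h2
      obtain ⟨m, hm, k1, k2, k3⟩ := ih (P + σ • Q1) (A.add_mem hP hA') g1 (by linarith) (by linarith)
      rw [add_assoc, ← add_smul] at k1 k2 k3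
      refine ⟨σ + m, (abs_add_le _ _).trans ?_, k1, k2, k3⟩
      push_cast; linarith
  have V : ∀ n : ℕ, ∀ P ∈ A, P ≠ 0 → β1 < x P → x P ≤ R → x P < β2 + n * δ2 →
      ∃ m : ℤ, |m| ≤ n ∧ P + m • Q1 ≠ 0 ∧ β1 < x (P + m • Q1) ∧ x (P + m • Q1) < β2 := by
    intro n
    induction n with
    | zero =>
      intro P hP hP0 h1 h3 h2
      refine ⟨0, by simp, by simpa using hP0, ?_, ?_⟩ <;> simp at h2 ⊢ <;> assumption
    | succ n ih =>
      intro P hP hP0 h1 hPR h2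
      by_cases hx : x P < β2
      · refine ⟨0, by simp; positivity, by simpa using hP0, ?_, ?_⟩ <;> simp <;> assumption
      push Not at hx
      obtain ⟨σ, hσ, hA', h0', hx', hy'⟩ := C.sgn' P Q1 hQ1A hQ10
      have heP := hA P hP hP0
      obtain ⟨g1, g2⟩ := C.add P (σ • Q1) hP0 h0' (by rw [hx']; linarith)
      have on1 := C.on P hP0
      have on2 := C.on _ h0'
      rw [hx'] at g2 on2
      have j1 := hj _ on2 _ _ heP hPR on1
      have j2 := hl _ on2 _ _ h1.le hPR on1 hy'
      rw [← g2] at j1 j2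
      have j3 := (abs_le.1 j1).1
      push_cast at h2
      obtain ⟨m, hm, k1, k2, k3⟩ := ih (P + σ • Q1) (A.add_mem hP hA') g1 (by linarith) (by linarith) (by linarith)
      rw [add_assoc, ← add_smul] at k1 k2 k3
      refine ⟨σ + m, (abs_add_le _ _).trans ?_, k1, k2, k3⟩
      push_cast; linarith
  obtain ⟨N1, hN1⟩ := exists_nat_gt ((β1 - e)/δ1)
  obtain ⟨N2, hN2⟩ := exists_nat_gt ((R - β2)/δ2)
  rw [div_lt_iff₀ hδ1] at hN1
  rw [div_lt_iff₀ hδ2] at hN2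
  have U : ∀ P ∈ A, P ≠ 0 → x P ≤ R →
      ∃ m : ℤ, |m| ≤ (N1 + N2 : ℕ) ∧ P + m • Q1 ≠ 0 ∧ β1 < x (P + m • Q1) ∧ x (P + m • Q1) < β2 := by
    intro P hP hP0 hPR
    by_cases hx : x P < β2
    · obtain ⟨m, hm, k⟩ := W N1 P hP hP0 hx (by linarith [hA P hP hP0])
      exact ⟨m, hm.trans (by push_cast; omega), k⟩
    · push Not at hx
      obtain ⟨m, hm, k⟩ := V N2 P hP hP0 (by linarith) hPR (by linarith)
      exact ⟨m, hm.trans (by push_cast; omega), k⟩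
  set N : ℤ := ((N1 + N2 : ℕ) : ℤ) with hN
  refine ⟨(Finset.Icc (-N) N).image (fun m => m • Q1) ∪ (Finset.Icc (-N) N).image (fun m => Q + m • Q1), ?_⟩
  have key : ∀ P ∈ A, P + Q ≠ 0 → x (P + Q) ≤ R → ∃ F ∈ (Finset.Icc (-N) N).image (fun m => m • Q1) ∪ (Finset.Icc (-N) N).image (fun m => Q + m • Q1), P + F ≠ 0 ∧ β1 < x (P + F) ∧ x (P + F) < β2 := by
    intro P hP h1 h2
    obtain ⟨m, hm, k⟩ := U _ (A.add_mem hP hQA) h1 h2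
    rw [add_assoc] at k
    exact ⟨_, Finset.mem_union_right _ (Finset.mem_image_of_mem _ (Finset.mem_Icc.2 (abs_le.1 hm))), k⟩
  intro P hP
  by_cases hP0 : P = 0
  · subst hP0
    exact key 0 hP (by simpa using hQ0) (by simp; linarith)
  by_cases hPR : x P ≤ R
  · obtain ⟨m, hm, k⟩ := U P hP hP0 hPR
    exact ⟨_, Finset.mem_union_left _ (Finset.mem_image_of_mem _ (Finset.mem_Icc.2 (abs_le.1 hm))), k⟩
  push Not at hPR
  obtain ⟨g1, g2⟩ := C.add Q P hQ0 hP0 (by linarith)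
  have j := (hq0 (x P) (by linarith)).2 _ (C.on P hP0) _ _ heQ le_rfl (C.on Q hQ0)
  rw [← g2] at j
  rw [add_comm] at g1 g2 j
  refine key P hP g1 ?_
  have := (abs_le.1 j).2
  linarith

end RS

namespace RS
open Filter Height WeierstrassCurve WeierstrassCurve.Affine

section
variable {a b c D : ℤ}

def xq : (twist a b c D).Point → ℚ
  | .zero => 0
  | .some x _ _ => x
def yq : (twist a b c D).Point → ℚ
  | .zero => 0
  | .some _ y _ => y

lemma tw_cur : Cur ((a:ℝ)*D) ((b:ℝ)*D^2) ((c:ℝ)*D^3) (fun P : (twist a b c D).Point => (xq P : ℝ))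
    (fun P => (yq P : ℝ)) where
  on P hP := by
    cases P with
    | zero => exact absurd rfl hP
    | some x y h =>
      have := tw_ns_eq h
      simp only [xq, yq, gg]
      exact_mod_cast this
  xneg P := by
    cases P with
    | zero => rfl
    | some x y h => obtain ⟨h', e⟩ := tw_neg h; rw [e]; rfl
  yneg P := by
    cases P with
    | zero => simp [yq, ← Point.zero_def]
    | some x y h => obtain ⟨h', e⟩ := tw_neg h; rw [e]; simp [yq]
  add P Q hP hQ hx := by
    cases P with
    | zero => exact absurd rfl hP
    | some x y h =>
      cases Q with
      | zero => exact absurd rfl hQ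
      | some x' y' h' =>
        simp only [xq] at hx
        obtain ⟨y'', h'', e⟩ := tw_add h h' (by intro h; exact hx (by rw [h]))
        rw [e]
        refine ⟨Point.some_ne_zero _, ?_⟩
        simp only [xq, yq, ax]
        push_cast; ring
  xeq P Q hP hQ hx := by
    cases P with
    | zero => exact absurd rfl hP
    | some x y h =>
      cases Q with
      | zero => exact absurd rfl hQ
      | some x' y' h' =>
        simp only [xq] at hx
        have hx' : x = x' := by exact_mod_cast hx
        subst hx'
        have e1 := tw_ns_eq h
        have e2 := tw_ns_eq h'
        rw [← e2, sq_eq_sq_iff_eq_or_eq_neg] at e1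
        rcases e1 with rfl | rfl
        · left; rfl
        · right; obtain ⟨h3, e⟩ := tw_neg h'; rw [e]

lemma dbl_ge {e s t κ : ℝ} (T : Top ((a:ℝ)*D) ((b:ℝ)*D^2) ((c:ℝ)*D^3) e s t κ)
    (P : (twist a b c D).Point) (hP : P + P ≠ 0) : e ≤ xq (P + P) := by
  cases P with
  | zero => exact absurd (by rw [← Point.zero_def, add_zero]) hP
  | some x y h =>
    have hy : y ≠ 0 := by rintro rfl; exact hP (tw_dbl0 h)
    obtain ⟨y', h', e1⟩ := tw_dbl h hy
    rw [e1]
    simp only [xq]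
    have e2 := tw_ns_eq h
    have e3 : (y:ℝ)^2 = (x - e) * hh s t x := by
      rw [← T.g_eq, gg]; exact_mod_cast e2
    have hy' : (y:ℝ) ≠ 0 := by exact_mod_cast hy
    have ha := T.ha
    have hb := T.hb
    push_cast
    have : (((3*x^2+2*a*D*x+b*D^2)/(2*y))^2 - a*D - 2*x : ℝ) - e = (((x-e)^2 - (e^2+s*e+t))/(2*y))^2 := by
      rw [show (3*x^2+2*a*D*x+b*D^2 : ℝ) = 3*x^2+2*(a*D)*x+b*D^2 by ring, ha, hb]
      field_simp
      rw [e3, hh]; ring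
    have := sq_nonneg ((((x:ℝ)-e)^2 - (e^2+s*e+t))/(2*y))
    linarith

noncomputable def pr (P : (twist a b c D).Point) : ℤ × ℤ := ((xq P / D).num, ((xq P / D).den : ℤ))

lemma pr_inj (hD : D ≠ 0) {P Q : (twist a b c D).Point} (h : pr P = pr Q) : xq P = xq Q := by
  have hD' : (D:ℚ) ≠ 0 := by exact_mod_cast hD
  simp only [pr, Prod.mk.injEq] at h
  have : xq P / D = xq Q / D := Rat.ext h.1 (by exact_mod_cast h.2)
  field_simp at this
  exact this

lemma pr_idx (hD : D ≠ 0) {X : Set ℝ} {sq : ℤ → ℤ} (hsq : IsSqfreePart sq) {j k : ℝ} (hj : 0 < j) (hk : 1 ≤ k)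
    {P : (twist a b c D).Point} (h0 : P ≠ 0) (hX : (xq P : ℝ) / D ∈ X) (hy : yq P ≠ 0) :
    pr P ∈ SIdx a b c X ∧ |(D:ℝ)|^(-k) * (max 1 (hN P))^(-j) ≤ STerm a b c sq j k (pr P) := by
  cases P with
  | zero => exact absurd rfl h0
  | some x y h =>
    simp only [xq, yq] at hX hy
    obtain ⟨g1, g2, m, g3⟩ := pt_uv hD hy h
    have hD' : (D:ℚ) ≠ 0 := by exact_mod_cast hD
    have hden : ((x/D).den : ℤ) ≠ 0 := by exact_mod_cast (x/D).den_nz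
    have e : (((x/D).num : ℤ):ℚ) / (((x/D).den : ℤ):ℚ) = x / D := by
      push_cast; exact Rat.num_div_den _
    refine ⟨⟨⟨g1, g2⟩, ?_⟩, ?_⟩
    · simp only [pr, xq]
      have : (((x/D).num : ℤ):ℝ) / (((x/D).den : ℤ):ℝ) = x / D := by exact_mod_cast congrArg (Rat.cast : ℚ → ℝ) e
      rw [this]; exact hX
    · simp only [STerm, pr, xq]
      rw [ht_eq g1 hden, e, hN_some]
      obtain ⟨q1, r, q2⟩ := hsq _ g2
      set S := sq (Fbin a b c (x/D).num (x/D).den) with hS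
      have hF : (Fbin a b c (x/D).num (x/D).den : ℚ) ≠ 0 := by exact_mod_cast g2
      have hm : m ≠ 0 := by rintro rfl; rw [g3] at hF; simp at hF
      have hr : r ≠ 0 := by rintro rfl; rw [q2] at hF; simp at hF
      have e5 : (D:ℚ) = S * (r/m)^2 := by
        field_simp; rw [← g3, q2]
      obtain ⟨n, hn⟩ := sqfree_int q1 e5
      rw [hn] at e5
      have e6 : D = S * n^2 := by exact_mod_cast e5
      have hn0 : n ≠ 0 := by rintro rfl; rw [e6] at hD; simp at hD
      have hS0 : S ≠ 0 := q1.ne_zero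
      have hle : |(S:ℝ)| ≤ |(D:ℝ)| := by
        have : |S| ≤ |D| := by
          rw [e6, abs_mul]
          have : 1 ≤ |n^2| := Int.one_le_abs (pow_ne_zero 2 hn0)
          nlinarith [abs_nonneg S]
        exact_mod_cast this
      have hSp : 0 < |(S:ℝ)| := abs_pos.2 (by exact_mod_cast hS0)
      gcongr ?_ * _
      exact Real.rpow_le_rpow_of_nonpos hSp hle (by linarith)

lemma exists_interval (hf : disc a b c ≠ 0) (hD : D ≠ 0) {X : Set ℝ} (hX : Broad a b c X) :
    ∃ e s t κ β1 β2, Top ((a:ℝ)*D) ((b:ℝ)*D^2) ((c:ℝ)*D^3) e s t κ ∧ e < β1 ∧ β1 < β2 ∧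
      ∀ x, β1 < x → x < β2 → x / D ∈ X := by
  have hD' : (D:ℝ) ≠ 0 := by exact_mod_cast hD
  obtain ⟨e, s, t, κ, T⟩ := exists_top ((a:ℝ)*D) ((b:ℝ)*D^2) ((c:ℝ)*D^3) (by
    have : ((D:ℝ)^6 * disc a b c) ≠ 0 := mul_ne_zero (pow_ne_zero _ hD') (by exact_mod_cast hf)
    intro h; apply this; rw [← h, disc]; push_cast; ring)
  obtain ⟨hO, ⟨x1, hx1, hr1⟩, ⟨x2, hx2, hr2⟩⟩ := hX
  have hroot : (e/D)^3 + a*(e/D)^2 + b*(e/D) + c = 0 := by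
    have h1 := T.g_eq e
    rw [sub_self, zero_mul, gg] at h1
    field_simp
    linear_combination h1
  have : ∃ x0 : ℝ, e < x0 ∧ x0 / D ∈ X := by
    rcases lt_or_gt_of_ne hD' with h | h
    · refine ⟨x2 * D, ?_, by rwa [mul_div_cancel_right₀ _ hD']⟩
      have := hr2 _ hroot
      rwa [lt_div_iff_of_neg h] at this
    · refine ⟨x1 * D, ?_, by rwa [mul_div_cancel_right₀ _ hD']⟩
      have := hr1 _ hroot
      rwa [div_lt_iff₀ h] at this
  obtain ⟨x0, h0, h0X⟩ := this
  have hU : IsOpen {x : ℝ | x / D ∈ X} := hO.preimage (by fun_prop)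
  obtain ⟨l, u, hlu, hsub⟩ := mem_nhds_iff_exists_Ioo_subset.1 (hU.mem_nhds h0X)
  exact ⟨e, s, t, κ, x0, u, T, h0, hlu.2, fun x hx hxu => hsub ⟨hlu.1.trans hx, hxu⟩⟩

end
end RS

namespace RS
open Filter Height WeierstrassCurve WeierstrassCurve.Affine

theorem ba {a b c : ℤ} (hf : disc a b c ≠ 0) {sq : ℤ → ℤ} (hsq : IsSqfreePart sq) {j : ℝ} (hj : 0 < j)
    {k : ℝ} (hk : 1 ≤ k) {X : Set ℝ} (hX : Broad a b c X) (hS : SConv a b c sq j k X) :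
    RankBound a b c j := by
  classical
  intro D hD hex
  have hnj : 2*j ≤ ⌈2*j⌉₊ := Nat.le_ceil _
  have hn0 : 0 < ⌈2*j⌉₊ := Nat.ceil_pos.2 (by linarith)
  generalize ⌈2*j⌉₊ = n at hnj hn0 hex
  obtain ⟨P, hP⟩ := hex
  obtain ⟨e, s, t, κ, β1, β2, T, hb1, hb2, hI⟩ := exists_interval hf hD hX
  obtain ⟨H⟩ := exists_CH hf
  have C := tw_cur (a := a) (b := b) (c := c) (D := D)
  set A : AddSubgroup (twist a b c D).Point := (zsmulAddGroupHom (2:ℤ)).range with hA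
  have hAe : ∀ R ∈ A, R ≠ 0 → e ≤ (xq R : ℝ) := by
    rintro _ ⟨R, rfl⟩ h0
    simp only [zsmulAddGroupHom_apply, two_zsmul] at h0 ⊢
    exact dbl_ge T R h0
  have hPi : ∀ m : Fin n → ℤ, ∑ i, m i • P i = 0 → ∀ i, m i = 0 := Fintype.linearIndependent_iff.1 hP
  have hinf : ∀ m : ℤ, m ≠ 0 → m • ((2:ℤ) • P ⟨0, hn0⟩) ≠ 0 := by
    intro m hm h0
    have := hPi (Pi.single ⟨0, hn0⟩ (m * 2)) (by
      rw [Finset.sum_eq_single ⟨0, hn0⟩]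
      · simp; rw [mul_smul]; exact h0
      · intro i _ hi; simp [Pi.single_eq_of_ne hi]
      · simp) ⟨0, hn0⟩
    simp at this; exact hm this
  obtain ⟨Fs, hFs⟩ := C.cover T A hAe ((2:ℤ) • P ⟨0, hn0⟩) ⟨P ⟨0, hn0⟩, rfl⟩ hinf hb1 hb2
  have hFne : 0 < Fs.card := by
    obtain ⟨F, hF, _⟩ := hFs 0 A.zero_mem
    exact Finset.card_pos.2 ⟨F, hF⟩
  let Pm : (Fin n → ℕ) → (twist a b c D).Point := fun m => ∑ i, (m i : ℤ) • ((2:ℤ) • P i)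
  have hPmA : ∀ m, Pm m ∈ A := fun m => A.sum_mem fun i _ => A.zsmul_mem ⟨P i, rfl⟩ _
  have hPminj : Function.Injective Pm := by
    intro m m' h
    have h2 : ∑ i, (((m i : ℤ) - m' i) * 2) • P i = 0 := by
      rw [← sub_eq_zero] at h
      rw [← h]
      simp only [Pm]
      rw [← Finset.sum_sub_distrib]
      apply Finset.sum_congr rfl
      intro i _
      rw [mul_smul, sub_smul]
    ext i
    have := hPi _ h2 i
    omega
  choose Fm hFm1 hFm2 hFm3 hFm4 using fun m => hFs (Pm m) (hPmA m)
  let Tm : (Fin n → ℕ) → (twist a b c D).Point := fun m => Pm m + Fm m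
  have hy : ∀ m, yq (Tm m) ≠ 0 := by
    intro m h
    have h1 := C.on (Tm m) (hFm2 m)
    simp only [h] at h1
    have h2 := T.g_ge (x := (xq (Tm m) : ℝ)) (by linarith [hFm3 m])
    have h3 : 0 < κ * ((xq (Tm m) : ℝ) - e) := mul_pos T.k0 (by have := hFm3 m; simp only [Tm]; linarith)
    rw [← h1] at h2
    simp at h2; linarith
  -- heights
  obtain ⟨QF, hQF⟩ : ∃ QF : ℝ, ∀ F ∈ Fs, H.q D F ≤ QF := by
    obtain ⟨Q, hQ⟩ := (Fs.finite_toSet.image (H.q D)).bddAbove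
    exact ⟨Q, fun F hF => hQ ⟨F, hF, rfl⟩⟩
  set K1 := 2 ^ n * ∑ i, H.q D ((2:ℤ) • P i) with hK1
  have hK1' : 0 ≤ K1 := mul_nonneg (by positivity) (Finset.sum_nonneg fun i _ => H.nn D hD _)
  set K2 := 2 * K1 + 2 * |QF| + H.C + 1 with hK2
  have hC0 := H.C0
  have hK2' : 1 ≤ K2 := by rw [hK2]; have := abs_nonneg QF; linarith
  have hht : ∀ N : ℕ, ∀ m : Fin n → ℕ, (∀ i, m i ≤ N) → max 1 (hN (Tm m)) ≤ K2 * ((N:ℝ)+1)^2 := by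
    intro N m hm
    have hN1 : (1:ℝ) ≤ ((N:ℝ)+1)^2 := by nlinarith [(Nat.cast_nonneg N : (0:ℝ) ≤ N)]
    apply max_le
    · nlinarith
    have h1 := H.hN_le hD (Tm m)
    have h2 := (H.para D hD).add_le (H.nn D hD) (Pm m) (Fm m)
    have h3 := (H.para D hD).sum_le (H.nn D hD) (fun i => (2:ℤ) • P i) (fun i => (m i : ℤ))
    have h4 : 2 ^ n * ∑ i, (((m i : ℤ):ℝ))^2 * H.q D ((2:ℤ) • P i) ≤ K1 * ((N:ℝ)+1)^2 := by
      rw [hK1, mul_assoc, Finset.sum_mul]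
      refine mul_le_mul_of_nonneg_left (Finset.sum_le_sum fun i _ => ?_) (by positivity)
      rw [mul_comm]
      have : ((m i:ℤ):ℝ) ≤ (N:ℝ) + 1 := by have := hm i; push_cast; exact_mod_cast this.trans (Nat.le_succ N)
      have := H.nn D hD ((2:ℤ) • P i)
      gcongr
    have h5 := hQF _ (hFm1 m)
    have h6 := le_abs_self QF
    have h7 : |QF| ≤ |QF| * ((N:ℝ)+1)^2 := le_mul_of_one_le_right (abs_nonneg _) hN1
    have h8 : H.C ≤ H.C * ((N:ℝ)+1)^2 := le_mul_of_one_le_right hC0 hN1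
    have e2 : K2 * ((N:ℝ)+1)^2 = 2 * (K1 * ((N:ℝ)+1)^2) + 2 * (|QF| * ((N:ℝ)+1)^2) + H.C * ((N:ℝ)+1)^2 + ((N:ℝ)+1)^2 := by
      rw [hK2]; ring
    rw [e2]
    simp only [Tm] at h1 ⊢
    have h9 : H.q D (Pm m) ≤ K1 * ((N:ℝ)+1)^2 := h3.trans h4
    linarith
  have hidx := fun m => pr_idx (X := X) hD hsq hj hk (hFm2 m) (hI _ (hFm3 m) (hFm4 m)) (hy m)
  let φ : (Fin n → ℕ) → SIdx a b c X := fun m => ⟨pr (Tm m), (hidx m).1⟩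
  have hfib : ∀ S : Finset (Fin n → ℕ), S.card ≤ 2 * Fs.card * (S.image φ).card := by
    intro S
    apply Finset.card_le_mul_card_image
    intro p hp
    obtain ⟨m0, _, rfl⟩ := Finset.mem_image.1 hp
    have hsub : (S.filter (fun m => φ m = φ m0)).image Pm ⊆
        Fs.image (fun F => Tm m0 - F) ∪ Fs.image (fun F => -Tm m0 - F) := by
      intro R hR
      obtain ⟨m, hm, rfl⟩ := Finset.mem_image.1 hR
      have h1 : pr (Tm m) = pr (Tm m0) := congrArg Subtype.val (Finset.mem_filter.1 hm).2
      have h2 := pr_inj hD h1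
      rw [Finset.mem_union]
      rcases C.xeq (Tm m) (Tm m0) (hFm2 m) (hFm2 m0) (by simp only [h2]) with h3 | h3
      · left; exact Finset.mem_image.2 ⟨Fm m, hFm1 m, by rw [← h3]; simp [Tm]⟩
      · right; exact Finset.mem_image.2 ⟨Fm m, hFm1 m, by rw [← h3]; simp [Tm]⟩
    rw [← Finset.card_image_of_injective _ hPminj]
    refine (Finset.card_le_card hsub).trans ((Finset.card_union_le _ _).trans ?_)
    have i1 := Finset.card_image_le (s := Fs) (f := fun F => Tm m0 - F)
    have i2 := Finset.card_image_le (s := Fs) (f := fun F => -Tm m0 - F)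
    omega
  -- contradiction
  have hDp : 0 < |(D:ℝ)| := abs_pos.2 (by exact_mod_cast hD)
  set c0 := |(D:ℝ)|^(-k) * K2^(-j) with hc0
  have hc0' : 0 < c0 := by positivity
  set f0 : ℝ := (Fs.card : ℝ) with hf0
  have hf0' : 0 < f0 := by rw [hf0]; exact_mod_cast hFne
  have hvan := summable_iff_vanishing_norm.1 hS (c0 / (4 * f0)) (by positivity)
  obtain ⟨s0, hs0⟩ := hvan
  obtain ⟨N, hN⟩ := exists_nat_ge (4 * f0 * s0.card)
  set M : ℝ := (N:ℝ)+1 with hM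
  have hM1 : 1 ≤ M := by rw [hM]; linarith [(Nat.cast_nonneg N : (0:ℝ) ≤ N)]
  let S : Finset (Fin n → ℕ) := Fintype.piFinset (fun _ => Finset.range (N+1))
  have hSc : (S.card : ℝ) = M^n := by
    simp [S, Fintype.card_piFinset, hM]
  have h1 := hs0 (S.image φ \ s0) Finset.sdiff_disjoint
  have hterm : ∀ p ∈ S.image φ \ s0, c0 * M^(-(n:ℝ)) ≤ STerm a b c sq j k p.1 := by
    intro p hp
    obtain ⟨m, hm, rfl⟩ := Finset.mem_image.1 (Finset.mem_sdiff.1 hp).1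
    have hm' : ∀ i, m i ≤ N := fun i => by
      have := Fintype.mem_piFinset.1 hm i
      have := Finset.mem_range.1 this; omega
    refine le_trans ?_ (hidx m).2
    have h2 := hht N m hm'
    have h3 : (K2 * M^2)^(-j) ≤ (max 1 (RS.hN (Tm m)))^(-j) :=
      Real.rpow_le_rpow_of_nonpos (by positivity) h2 (by linarith)
    have h4 : M^(-(n:ℝ)) ≤ M^(-(2*j)) := Real.rpow_le_rpow_of_exponent_le hM1 (by linarith)
    have h5 : (K2 * M^2)^(-j) = K2^(-j) * M^(-(2*j)) := by
      rw [Real.mul_rpow (by positivity) (by positivity), ← Real.rpow_natCast M 2, ← Real.rpow_mul (by positivity)]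
      congr 2; push_cast; ring
    calc c0 * M^(-(n:ℝ)) ≤ c0 * M^(-(2*j)) := by gcongr
      _ = |(D:ℝ)|^(-k) * (K2 * M^2)^(-j) := by rw [h5, hc0]; ring
      _ ≤ _ := by gcongr
  have hsum := Finset.card_nsmul_le_sum _ _ _ hterm
  have hcard : M^n ≤ 2 * f0 * (((S.image φ \ s0).card : ℝ) + s0.card) := by
    rw [← hSc]
    have i1 := hfib S
    have i2 : (S.image φ).card ≤ (S.image φ \ s0).card + s0.card := by
      have := Finset.le_card_sdiff s0 (S.image φ); omega
    have i3 : S.card ≤ 2 * Fs.card * ((S.image φ \ s0).card + s0.card) :=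
      i1.trans (Nat.mul_le_mul_left _ i2)
    rw [hf0]
    exact_mod_cast i3
  have hMn : M ≤ M^n := le_self_pow₀ hM1 hn0.ne'
  have hcard2 : M^n / (4*f0) ≤ ((S.image φ \ s0).card : ℝ) := by
    rw [div_le_iff₀ (by positivity)]
    have : 4 * f0 * s0.card ≤ M^n := by linarith
    nlinarith
  have hfin : c0 / (4*f0) ≤ ∑ p ∈ S.image φ \ s0, STerm a b c sq j k p.1 := by
    refine le_trans ?_ hsum
    rw [nsmul_eq_mul]
    calc c0 / (4*f0) = M^n / (4*f0) * (c0 * M^(-(n:ℝ))) := by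
          rw [Real.rpow_neg (by positivity), Real.rpow_natCast]; field_simp
      _ ≤ _ := by gcongr
  rw [Real.norm_eq_abs] at h1
  have := le_abs_self (∑ p ∈ S.image φ \ s0, STerm a b c sq j k p.1)
  linarith

end RS

namespace RS
open Height WeierstrassCurve WeierstrassCurve.Affine

def AA (a b : ℤ) : ℤ := 81*b - 27*a^2
def BB (a b c : ℤ) : ℤ := 729*c - 243*a*b + 54*a^3

lemma disc_AB (a b c : ℤ) : 4 * AA a b ^3 + 27 * BB a b c^2 = -531441 * disc a b c := by
  simp only [AA, BB, disc]; ring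

def Dep (a b c : ℤ) : Prop := ∀ D : ℤ, D ≠ 0 → ∀ P Q : (twist a b c D).Point,
  ∃ m n : ℤ, (m ≠ 0 ∨ n ≠ 0) ∧ m • P + n • Q = 0

lemma dep_of {a b c : ℤ} {j : ℝ} (hj : 0 < j) (hj1 : j ≤ 1) (hR : RankBound a b c j) : Dep a b c := by
  intro D hD P Q
  have h1 : ⌈2*j⌉₊ ≤ 2 := Nat.ceil_le.2 (by push_cast; linarith)
  by_contra hcon
  push Not at hcon
  apply hR D hD
  have hli : LinearIndependent ℤ ![P, Q] := by
    rw [LinearIndependent.pair_iff]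
    intro s t h
    by_contra h2
    refine hcon s t ?_ h
    by_cases hs : s = 0
    · right; intro ht; exact h2 ⟨hs, ht⟩
    · left; exact hs
  exact ⟨fun i => ![P, Q] (Fin.castLE h1 i), hli.comp _ (Fin.castLE_injective h1)⟩

def biq (A B : ℤ) (z w r : ℚ) : ℚ :=
  r^2*(z-w)^2 - 2*r*((z+w)*(A+z*w)+2*B) + ((z*w-A)^2 - 4*B*(z+w))

def Mst (A B : ℤ) : Prop := ∃ C g : ℝ, 0 < g ∧ ∀ z w s : ℚ, z ≠ w → w^3+A*w+B ≠ 0 →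
  z^3+A*z+B = s^2*(w^3+A*w+B) → ∃ r : ℚ, biq A B z w r = 0 ∧ ∃ q1 q2 q3 : ℝ, 0 ≤ q1 ∧ 0 ≤ q2 ∧ 0 ≤ q3 ∧
    |q1 - logHeight₁ z| ≤ C ∧ |q2 - logHeight₁ w| ≤ C ∧ |q3 - logHeight₁ r| ≤ C ∧
    q3 = (√q1 - √q2)^2 ∧ (q3 < g → q3 = 0)

lemma ht_shift (a : ℤ) : ∃ C : ℝ, ∀ z : ℚ, |logHeight₁ ((z - 3*a)/9) - logHeight₁ z| ≤ C := by
  set C0 := (totalWeight ℚ : ℝ) * Real.log 2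
  refine ⟨C0 + logHeight₁ (3*a:ℚ) + logHeight₁ (9:ℚ), fun z => ?_⟩
  have h1 := logHeight₁_mul_le (z-3*a) (9:ℚ)⁻¹
  rw [logHeight₁_inv, ← div_eq_mul_inv] at h1
  have h2 := logHeight₁_sub_le z (3*a)
  have h3 := logHeight₁_add_le (((z - 3*a)/9)*9) (3*a:ℚ)
  rw [show ((z - 3*a)/9)*9 + (3*a:ℚ) = z by ring] at h3
  have h4 := logHeight₁_mul_le ((z-3*a)/9) (9:ℚ)
  rw [abs_le]; constructor <;> linarith

lemma biq_alg {A B : ℤ} {z w r s e ε D : ℚ} (hε : ε^2 = 1) (hzw : z - w ≠ 0)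
    (e1 : z^3+A*z+B = D*(s*e)^2) (e2 : w^3+A*w+B = D*e^2)
    (hr : r * (z-w)^2 = D*(s*e+ε*e)^2 - (z+w)*(z-w)^2) : biq A B z w r = 0 := by
  have e3 : r*(z-w)^2 - ((z+w)*(A+z*w)+2*B) = 2*ε*D*(s*e)*e := by
    linear_combination hr - e1 - e2 + D*e^2*hε
  have e4 : (z-w)^2 * biq A B z w r = 0 := by
    have : (z-w)^2 * biq A B z w r = (r*(z-w)^2 - ((z+w)*(A+z*w)+2*B))^2 - 4*(z^3+A*z+B)*(w^3+A*w+B) := by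
      unfold biq; ring
    rw [this, e1, e2, e3]
    linear_combination 4*(D*(s*e)*e)^2*hε
  exact (mul_eq_zero.1 e4).resolve_left (pow_ne_zero 2 hzw)

lemma r_alg {a z w D s e ε X : ℚ} (hD' : D ≠ 0) (hzw : z - w ≠ 0) (hX : X = ((((D^2*(s*e)/27) + ε * (D^2*e/27))/(D*((z-3*a)/9) - D*((w-3*a)/9)))^2
        - a*D - D*((z-3*a)/9) - D*((w-3*a)/9))) :
    (9*(X/D)+3*a) * (z-w)^2 = D*(s*e+ε*e)^2 - (z+w)*(z-w)^2 := by
  rw [hX, show D*((z-3*a)/9) - D*((w-3*a)/9) = D*(z-w)/9 by ring]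
  field_simp; ring

theorem master {a b c : ℤ} (hf : disc a b c ≠ 0) {sq : ℤ → ℤ} (hsq : IsSqfreePart sq)
    (hd : Dep a b c) : Mst (AA a b) (BB a b c) := by
  obtain ⟨H⟩ := exists_CH hf
  obtain ⟨g, hg, hgap⟩ := gap H
  obtain ⟨C1, hC1⟩ := ht_shift a
  have hlog2 : 0 < Real.log 2 := Real.log_pos (by norm_num)
  refine ⟨H.C + C1, g * Real.log 2, by positivity, ?_⟩
  intro z w s hne hG hs
  set Gw : ℚ := w^3+AA a b*w+BB a b c with hGw
  have hn : Gw.num * Gw.den ≠ 0 := mul_ne_zero (Rat.num_ne_zero.2 hG) (by exact_mod_cast Gw.den_nz)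
  obtain ⟨hD, m, hm⟩ := hsq _ hn
  set D := sq (Gw.num * Gw.den)
  have hq : (Gw.den:ℚ) ≠ 0 := by exact_mod_cast Gw.den_nz
  have hD' : (D:ℚ) ≠ 0 := by exact_mod_cast hD.ne_zero
  set e : ℚ := m / Gw.den with he
  have hGe : Gw = D * e^2 := by
    push_cast at hm
    rw [he, div_pow, ← mul_div_assoc, ← hm]
    field_simp
    exact (Rat.mul_den_eq_num Gw)
  have c1 : (D^2*(s*e)/27)^2 = (D*((z-3*a)/9))^3 + a*D*(D*((z-3*a)/9))^2 + b*D^2*(D*((z-3*a)/9)) + c*(D:ℚ)^3 := by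
    rw [hGe] at hs
    simp only [AA, BB] at hs; push_cast at hs
    linear_combination (-(D:ℚ)^3/729) * hs
  have c2 : (D^2*e/27)^2 = (D*((w-3*a)/9))^3 + a*D*(D*((w-3*a)/9))^2 + b*D^2*(D*((w-3*a)/9)) + c*(D:ℚ)^3 := by
    rw [hGw] at hGe
    simp only [AA, BB] at hGe; push_cast at hGe
    linear_combination (-(D:ℚ)^3/729) * hGe
  have hx : (D:ℚ)*((z-3*a)/9) ≠ D*((w-3*a)/9) := by
    intro h
    have := mul_left_cancel₀ hD' h
    apply hne; linarith
  set P : (twist a b c D).Point := .some _ _ (tw_ns hf hD.ne_zero c1) with hP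
  set Q : (twist a b c D).Point := .some _ _ (tw_ns hf hD.ne_zero c2) with hQ
  have hzw : z - w ≠ 0 := sub_ne_zero.2 hne
  have hP1 : |H.q D P - logHeight₁ z| ≤ H.C + C1 := by
    have h1 := H.close D hD.ne_zero P
    rw [hP, hN_some, mul_div_cancel_left₀ _ hD'] at h1
    exact (abs_sub_le _ _ _).trans (add_le_add h1 (hC1 z))
  have hQ1 : |H.q D Q - logHeight₁ w| ≤ H.C + C1 := by
    have h1 := H.close D hD.ne_zero Q
    rw [hQ, hN_some, mul_div_cancel_left₀ _ hD'] at h1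
    exact (abs_sub_le _ _ _).trans (add_le_add h1 (hC1 w))
  have key : ∀ (R : (twist a b c D).Point) (ε X : ℚ), ε^2 = 1 → X = ((((D^2*(s*e)/27) + ε * (D^2*e/27))/(D*((z-3*a)/9) - D*((w-3*a)/9)))^2
        - a*D - D*((z-3*a)/9) - D*((w-3*a)/9)) →
      (∃ y h, R = Point.some X y h) → H.q D R = (√(H.q D P) - √(H.q D Q))^2 →
      ∃ r : ℚ, biq (AA a b) (BB a b c) z w r = 0 ∧ ∃ q1 q2 q3 : ℝ, 0 ≤ q1 ∧ 0 ≤ q2 ∧ 0 ≤ q3 ∧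
        |q1 - logHeight₁ z| ≤ H.C + C1 ∧ |q2 - logHeight₁ w| ≤ H.C + C1 ∧ |q3 - logHeight₁ r| ≤ H.C + C1 ∧
        q3 = (√q1 - √q2)^2 ∧ (q3 < g * Real.log 2 → q3 = 0) := by
    rintro R ε X hε hX ⟨y, h, hR⟩ hq3
    have hr := r_alg hD' hzw hX
    refine ⟨9 * (X/D) + 3*a, ?_, H.q D P, H.q D Q, H.q D R, H.nn _ hD.ne_zero _, H.nn _ hD.ne_zero _,
      H.nn _ hD.ne_zero _, hP1, hQ1, ?_, hq3, ?_⟩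
    · exact biq_alg hε hzw (by rw [hs, hGe]; ring) (by rw [← hGw, hGe]) hr
    · have h1 := H.close D hD.ne_zero R
      rw [hR, hN_some] at h1
      rw [hR]
      have h2 := hC1 (9 * (X/D) + 3*a)
      rw [show (9 * (X/D) + 3*a - 3*a)/9 = X/D by ring] at h2
      exact (abs_sub_le _ _ _).trans (add_le_add h1 h2)
    · intro hlt
      apply hgap D hD R
      apply hlt.trans_le
      have : Real.log 2 ≤ LL D := Real.log_le_log (by norm_num) (by linarith [abs_nonneg (D:ℝ)])
      gcongr
  obtain ⟨m1, n1, hmn, hz⟩ := hd D hD.ne_zero P Q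
  rcases (H.para D hD.ne_zero).dep (H.nn D hD.ne_zero) hmn hz with h | h
  · refine key (P+Q) (-1) _ (by norm_num) rfl ?_ h
    obtain ⟨y, h', e'⟩ := tw_add (tw_ns hf hD.ne_zero c1) (tw_ns hf hD.ne_zero c2) hx
    rw [neg_one_mul, ← sub_eq_add_neg]
    exact ⟨y, h', e'⟩
  · refine key (P-Q) 1 _ (by norm_num) rfl ?_ h
    obtain ⟨y, h', e'⟩ := tw_sub (tw_ns hf hD.ne_zero c1) (tw_ns hf hD.ne_zero c2) hx
    rw [one_mul]
    exact ⟨y, h', e'⟩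

end RS

namespace RS
open Height Filter Topology

lemma eqh {A B : ℤ} (hM : Mst A B) (z w s : ℕ → ℚ) (hne : ∀ᶠ n in atTop, z n ≠ w n)
    (hG : ∀ᶠ n in atTop, (w n)^3+A*w n+B ≠ 0)
    (hs : ∀ᶠ n in atTop, (z n)^3+A*z n+B = (s n)^2*((w n)^3+A*w n+B))
    (ht : Tendsto (fun n => logHeight₁ (z n)) atTop atTop) {C' : ℝ}
    (hC : ∀ᶠ n in atTop, |logHeight₁ (z n) - logHeight₁ (w n)| ≤ C') :
    ∃ r : ℚ, ∃ᶠ n in atTop, biq A B (z n) (w n) r = 0 := by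
  obtain ⟨C, g, hg, h⟩ := hM
  have hfin := NumberField.finite_setOfPred_logHeight₁_le ℚ C
  have key : ∀ᶠ n in atTop, ∃ r ∈ {x : ℚ | logHeight₁ x ≤ C}, biq A B (z n) (w n) r = 0 := by
    filter_upwards [hne, hG, hs, hC, ht.eventually_gt_atTop ((2*C+C')^2/g + C), ht.eventually_gt_atTop C]
      with n h1 h2 h3 h4 h5 h5'
    obtain ⟨r, hr, q1, q2, q3, p1, p2, p3, a1, a2, a3, e, hz⟩ := h _ _ _ h1 h2 h3
    refine ⟨r, ?_, hr⟩
    rw [abs_le] at a1 a2 a3 h4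
    have h6 : (2*C+C')^2/g < q1 := by linarith
    have h7 : (q1-q2)^2 ≤ (2*C+C')^2 := sq_le_sq' (by linarith) (by linarith)
    have h8 : q3 * q1 ≤ (q1-q2)^2 := by
      have s1 := Real.sq_sqrt p1
      have s2 := Real.sq_sqrt p2
      have n1 := Real.sqrt_nonneg q1
      have n2 := Real.sqrt_nonneg q2
      have : (q1-q2)^2 = q3 * (√q1+√q2)^2 := by
        rw [e, ← s1, ← s2, Real.sqrt_sq n1, Real.sqrt_sq n2]; ring
      rw [this]
      apply mul_le_mul_of_nonneg_left _ p3
      nlinarith [mul_nonneg n1 n2]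
    rw [div_lt_iff₀ hg] at h6
    have h9 : q3 < g := by
      have q1p : 0 < q1 := by linarith
      by_contra hge
      push Not at hge
      nlinarith
    have := hz h9
    change logHeight₁ r ≤ C; linarith
  by_contra hcon
  push Not at hcon
  have h2 : ∀ᶠ n in atTop, ∀ r ∈ {x : ℚ | logHeight₁ x ≤ C}, biq A B (z n) (w n) r ≠ 0 :=
    (eventually_all_finite hfin).2 (fun r _ => by
      have := hcon r
      rw [← not_frequently]
      simpa using this)
  obtain ⟨n, ⟨r, hr, e⟩, h3⟩ := (key.and h2).exists
  exact h3 r hr e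

lemma polyz (p : Polynomial ℚ) (h : ∃ᶠ n : ℕ in atTop, p.eval (n:ℚ) = 0) : p = 0 := by
  apply Polynomial.eq_zero_of_infinite_isRoot
  have h1 := Nat.frequently_atTop_iff_infinite.1 h
  exact (h1.image (f := fun n : ℕ => (n:ℚ)) (Nat.cast_injective.injOn)).mono (by
    rintro _ ⟨n, hn, rfl⟩; exact hn)

def Bz (p q G : ℤ) : Prop := ∃ x y, x*p+y*q = G
lemma Bz.symm {p q G : ℤ} (h : Bz p q G) : Bz q p G := by
  obtain ⟨x, y, h⟩ := h; exact ⟨y, x, by linarith⟩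
lemma Bz.mul {p p' q G G' : ℤ} (h : Bz p q G) (h' : Bz p' q G') : Bz (p*p') q (G*G') := by
  obtain ⟨x, y, h⟩ := h; obtain ⟨x', y', h'⟩ := h'
  exact ⟨x*x', x*p*y'+y*x'*p'+y*q*y', by rw [← h, ← h']; ring⟩
lemma Bz.mul' {p q q' G G' : ℤ} (h : Bz p q G) (h' : Bz p q' G') : Bz p (q*q') (G*G') :=
  (h.symm.mul h'.symm).symm

lemma lh_bz {p q G : ℤ} (hq : q ≠ 0) (hG : G ≠ 0) (h : Bz p q G) :
    Real.log (max |(p:ℝ)| |(q:ℝ)|) - Real.log |(G:ℝ)| ≤ logHeight₁ ((p:ℚ)/q) ∧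
    logHeight₁ ((p:ℚ)/q) ≤ Real.log (max |(p:ℝ)| |(q:ℝ)|) := by
  have hd : 0 < Int.gcd p q := Int.gcd_pos_of_ne_zero_right _ hq
  obtain ⟨p', q', hc, hp', hq'⟩ := Int.exists_gcd_one hd
  set d := Int.gcd p q with hdd
  obtain ⟨x, y, h⟩ := h
  have hdG : (d:ℤ) ∣ G := by
    rw [← h]
    exact dvd_add (Dvd.dvd.mul_left (Int.gcd_dvd_left ..) _) (Dvd.dvd.mul_left (Int.gcd_dvd_right ..) _)
  have hdle : (d:ℝ) ≤ |(G:ℝ)| := by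
    have := Int.le_of_dvd (abs_pos.2 hG) ((dvd_abs _ _).2 hdG)
    exact_mod_cast this
  have hd1 : (1:ℝ) ≤ d := by exact_mod_cast hd
  have hq0 : q' ≠ 0 := by rintro rfl; simp at hq'; exact hq hq'
  have hdq : (d:ℚ) ≠ 0 := by exact_mod_cast hd.ne'
  have e1 : (p:ℚ)/q = p'/q' := by
    rw [hp', hq']; push_cast; rw [mul_div_mul_right _ _ hdq]
  have e2 : max |(p:ℝ)| |(q:ℝ)| = max |(p':ℝ)| |(q':ℝ)| * d := by
    rw [hp', hq']; push_cast
    rw [abs_mul, abs_mul, abs_of_nonneg (by linarith : (0:ℝ) ≤ d), max_mul_of_nonneg _ _ (by linarith)]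
  have hpos : (0:ℝ) < max |(p':ℝ)| |(q':ℝ)| :=
    lt_max_of_lt_right (abs_pos.2 (by exact_mod_cast hq0))
  rw [e1, lh_div hc hq0, e2, Real.log_mul hpos.ne' (by linarith)]
  have l1 := Real.log_nonneg hd1
  have l2 := Real.log_le_log (by linarith) hdle
  constructor <;> linarith

lemma hts {p q : ℕ → ℤ} {d : ℕ} {L L' : ℝ}
    (hp : Tendsto (fun n : ℕ => (p n:ℝ)/(n:ℝ)^d) atTop (𝓝 L))
    (hq : Tendsto (fun n : ℕ => (q n:ℝ)/(n:ℝ)^d) atTop (𝓝 L')) (hL : L ≠ 0 ∨ L' ≠ 0)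
    {G : ℤ} (hG : G ≠ 0) (hq0 : ∀ᶠ n in atTop, q n ≠ 0) (hB : ∀ᶠ n in atTop, Bz (p n) (q n) G) :
    ∃ C : ℝ, ∀ᶠ n : ℕ in atTop, |logHeight₁ ((p n:ℚ)/q n) - d * Real.log n| ≤ C := by
  have hM : 0 < max |L| |L'| := by
    rcases hL with h | h
    · exact lt_max_of_lt_left (abs_pos.2 h)
    · exact lt_max_of_lt_right (abs_pos.2 h)
  have ht := ((hp.abs.max hq.abs).log hM.ne')
  rw [Metric.tendsto_nhds] at ht
  have ht := ht 1 one_pos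
  refine ⟨|Real.log (max |L| |L'|)| + 1 + abs (Real.log |(G:ℝ)|), ?_⟩
  filter_upwards [ht, hq0, hB, eventually_gt_atTop 0] with n h1 h2 h3 hn
  have hn' : (0:ℝ) < n := by exact_mod_cast hn
  obtain ⟨h4, h5⟩ := lh_bz h2 hG h3
  have hpos : (0:ℝ) < max |(p n:ℝ)| |(q n:ℝ)| :=
    lt_max_of_lt_right (abs_pos.2 (by exact_mod_cast h2))
  have e : max |(p n:ℝ)/(n:ℝ)^d| |(q n:ℝ)/(n:ℝ)^d| = max |(p n:ℝ)| |(q n:ℝ)| / (n:ℝ)^d := by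
    rw [abs_div, abs_div, abs_of_pos (pow_pos hn' d), max_div_div_right (pow_pos hn' d).le]
  rw [e, Real.log_div hpos.ne' (pow_pos hn' d).ne', Real.log_pow, Real.dist_eq, abs_lt] at h1
  have a1 := neg_abs_le (Real.log (max |L| |L'|))
  have a2 := le_abs_self (Real.log (max |L| |L'|))
  have a3 := neg_abs_le (Real.log |(G:ℝ)|)
  have a4 := le_abs_self (Real.log |(G:ℝ)|)
  rw [abs_le]; constructor <;> linarith [h1.1, h1.2]

lemma tdF {f : ℕ → ℝ} {F : ℝ → ℝ} (hF : ContinuousAt F 0) (h : ∀ n : ℕ, 0 < n → f n = F ((n:ℝ)⁻¹)) :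
    Tendsto f atTop (𝓝 (F 0)) := by
  have h1 : Tendsto (fun n : ℕ => F ((n:ℝ)⁻¹)) atTop (𝓝 (F 0)) := hF.tendsto.comp tendsto_inv_atTop_nhds_zero_nat
  apply h1.congr'
  filter_upwards [eventually_gt_atTop 0] with n hn
  exact (h n hn).symm

lemma evne {f : ℕ → ℝ} {L : ℝ} (h : Tendsto f atTop (𝓝 L)) (hL : L ≠ 0) : ∀ᶠ n in atTop, f n ≠ 0 :=
  h.eventually_ne hL

lemma lh_mul_c {c : ℚ} (hc : c ≠ 0) (z : ℚ) : |logHeight₁ (c*z) - logHeight₁ z| ≤ logHeight₁ c := by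
  have h1 := logHeight₁_mul_le c z
  have h2 := logHeight₁_mul_le c⁻¹ (c*z)
  rw [logHeight₁_inv, inv_mul_cancel_left₀ hc] at h2
  rw [abs_le]; constructor <;> linarith

theorem caseAB {A B : ℤ} (hA : A ≠ 0) (hB : B ≠ 0) : ¬ Mst A B := by
  intro hM
  have hA' : (A:ℚ) ≠ 0 := by exact_mod_cast hA
  have hB' : (B:ℚ) ≠ 0 := by exact_mod_cast hB
  set c : ℚ := -B/A with hc
  have hc0 : c ≠ 0 := by rw [hc]; exact div_ne_zero (neg_ne_zero.2 hB') hA'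
  have hAc : A*c = -B := by rw [hc]; field_simp
  let N : ℕ → ℤ := fun t => (t:ℤ)^4+t^2+1
  let z : ℕ → ℚ := fun t => c * (N t / ((t:ℤ)^2+1 : ℤ))
  let w : ℕ → ℚ := fun t => c * (N t / ((t:ℤ)^2*(t^2+1) : ℤ))
  have hz : ∀ t : ℕ, 1 < t → logHeight₁ ((N t:ℚ) / ((t:ℤ)^2+1 : ℤ)) = Real.log (N t) := by
    intro t ht
    have ht' : (1:ℤ) < t := by exact_mod_cast ht
    have : IsCoprime (N t) ((t:ℤ)^2+1) := ⟨1, -t^2, by simp only [N]; ring⟩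
    rw [lh_div (Int.isCoprime_iff_gcd_eq_one.1 this) (by positivity)]
    have h1 : ((t:ℤ)^2+1) ≤ N t := by simp only [N]; nlinarith [sq_nonneg ((t:ℤ)^2)]
    have h2 : (0:ℤ) ≤ t^2+1 := by positivity
    rw [← Int.cast_abs, ← Int.cast_abs, abs_of_nonneg h2, abs_of_nonneg (h2.trans h1), max_eq_left (by exact_mod_cast h1)]
  have hw : ∀ t : ℕ, 1 < t → logHeight₁ ((N t:ℚ) / ((t:ℤ)^2*(t^2+1) : ℤ)) = Real.log (N t) := by
    intro t ht
    have ht' : (1:ℤ) < t := by exact_mod_cast ht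
    have : IsCoprime (N t) ((t:ℤ)^2*(t^2+1)) := ⟨1, -1, by simp only [N]; ring⟩
    rw [lh_div (Int.isCoprime_iff_gcd_eq_one.1 this) (by positivity)]
    have h1 : ((t:ℤ)^2*(t^2+1)) ≤ N t := by simp only [N]; nlinarith [sq_nonneg ((t:ℤ)^2)]
    have h2 : (0:ℤ) ≤ t^2*(t^2+1) := by positivity
    rw [← Int.cast_abs, ← Int.cast_abs, abs_of_nonneg h2, abs_of_nonneg (h2.trans h1), max_eq_left (by exact_mod_cast h1)]
  have hNt : Tendsto (fun t : ℕ => Real.log (N t)) atTop atTop := by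
    apply Real.tendsto_log_atTop.comp
    apply tendsto_atTop_mono (f := fun t : ℕ => (t:ℝ)) _ tendsto_natCast_atTop_atTop
    intro t
    have : (t:ℤ) ≤ N t := by simp only [N]; nlinarith [sq_nonneg ((t:ℤ)^2), sq_nonneg ((t:ℤ)-1)]
    exact_mod_cast this
  have hzz : ∀ t : ℕ, 1 < t → z t = (t:ℚ)^2 * w t := by
    intro t ht
    have : (t:ℚ) ≠ 0 := by positivity
    simp only [z, w]; push_cast; field_simp
  have hid : ∀ t : ℕ, 1 < t → z t ^3 + A*z t + B = ((t:ℚ)^3)^2 * (w t^3+A*w t+B) := by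
    intro t ht
    have : (t:ℚ) ≠ 0 := by positivity
    have e : A * w t * ((t:ℚ)^2*(t^2+1)) = -B * ((t:ℚ)^4+t^2+1) := by
      rw [← hAc]; simp only [w, N]; push_cast; field_simp
    rw [hzz t ht]
    linear_combination (1-(t:ℚ)^2) * e
  suffices hE : ∃ r : ℚ, ∃ᶠ n in atTop, biq A B (z n) (w n) r = 0 by
    obtain ⟨r, hr⟩ := hE
    open Polynomial in
    set p : ℚ[X] := C r^2 * C c^2 * (X^2+X+1)^2*(1-X)^2*(X+1)^2
      - 2*C r*(C c*(X^2+X+1)*X*C (A:ℚ)*(X+1)^4 + C c^3*(X^2+X+1)^3*(X+1)^2 + 2*C (B:ℚ)*X^2*(X+1)^4)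
      + (C c^2*(X^2+X+1)^2-C (A:ℚ)*X*(X+1)^2)^2 - 4*C (B:ℚ)*C c*(X^2+X+1)*X*(X+1)^4 with hp
    have h1 : p.eval (-1) = c^4 := by simp [hp]; ring
    have h0 : p.comp (Polynomial.X^2) = 0 := by
      apply polyz
      apply (hr.and_eventually (eventually_gt_atTop 1)).mono
      rintro t ⟨h, ht⟩
      have ht0 : (t:ℚ) ≠ 0 := by positivity
      have : (p.comp (Polynomial.X^2)).eval (t:ℚ) = ((t:ℚ)^2)^2*((t:ℚ)^2+1)^4 * biq A B (z t) (w t) r := by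
        simp only [hp, biq, z, w, N, Polynomial.eval_comp]
        simp
        field_simp
        ring
      rw [this, h, mul_zero]
    have h2 : p = 0 := by
      rw [Polynomial.comp_eq_zero_iff] at h0
      rcases h0 with h0 | ⟨_, h0⟩
      · exact h0
      · exfalso
        have := congrArg Polynomial.natDegree h0
        simp at this
    rw [h2] at h1
    rw [Polynomial.eval_zero] at h1
    exact hc0 (pow_eq_zero_iff (by norm_num) |>.1 h1.symm)
  refine eqh hM z w (fun t => (t:ℚ)^3) (C' := 2 * logHeight₁ c) ?_ ?_ ?_ ?_ ?_
  · filter_upwards [eventually_gt_atTop 1] with t ht h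
    have ht' : (1:ℚ) < t := by exact_mod_cast ht
    rw [hzz t ht] at h
    have hw0 : w t ≠ 0 := by
      simp only [w, N]; apply mul_ne_zero hc0; push_cast; positivity
    have : ((t:ℚ)^2-1) * w t = 0 := by linarith
    rcases mul_eq_zero.1 this with h | h
    · nlinarith
    · exact hw0 h
  · by_contra hcon
    rw [not_eventually] at hcon
    open Polynomial in
    set p : ℚ[X] := C c^3 * (X^4+X^2+1)^3 + C (A:ℚ)*C c*(X^4+X^2+1)*(X^2*(X^2+1))^2 + C (B:ℚ)*(X^2*(X^2+1))^3 with hp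
    have h0 : p = 0 := by
      apply polyz
      apply (hcon.and_eventually (eventually_gt_atTop 1)).mono
      rintro t ⟨h, ht⟩
      have ht0 : (t:ℚ) ≠ 0 := by positivity
      push Not at h
      have : p.eval (t:ℚ) = ((t:ℚ)^2*((t:ℚ)^2+1))^3 * (w t^3+A*w t+B) := by
        simp only [hp, w, N]
        simp
        field_simp
      rw [this, h, mul_zero]
    have h1 : p.eval 0 = c^3 := by simp [hp]
    rw [h0] at h1
    rw [Polynomial.eval_zero] at h1
    exact hc0 (pow_eq_zero_iff (by norm_num) |>.1 h1.symm)
  · filter_upwards [eventually_gt_atTop 1] with t ht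
    exact hid t ht
  · apply tendsto_atTop_mono' atTop _ (tendsto_atTop_add_const_right _ (-logHeight₁ c) hNt)
    filter_upwards [eventually_gt_atTop 1] with t ht
    have h1 := lh_mul_c hc0 ((N t:ℚ) / ((t:ℤ)^2+1 : ℤ))
    rw [hz t ht, abs_le] at h1
    simp only [z]; linarith [h1.1]
  · filter_upwards [eventually_gt_atTop 1] with t ht
    have h1 := lh_mul_c hc0 ((N t:ℚ) / ((t:ℤ)^2+1 : ℤ))
    have h2 := lh_mul_c hc0 ((N t:ℚ) / ((t:ℤ)^2*(t^2+1) : ℤ))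
    rw [hz t ht, abs_le] at h1
    rw [hw t ht, abs_le] at h2
    simp only [z, w]
    rw [abs_le]; constructor <;> linarith [h1.1, h1.2, h2.1, h2.2]

end RS

namespace RS
open Height Filter Topology

def g3 (m : ℤ) : ℤ := (m^2-18*m+1)*(m+1)
def p3 (m : ℤ) : ℤ := m^3+10*m^2+m+4
def q3 (m : ℤ) : ℤ := 4*m^3+m^2+10*m+1

lemma bz1 (m : ℤ) : Bz (g3 m) (p3 m) (1536*12) := by
  apply Bz.mul
  · exact ⟨24*441 + (21*m-377)*(m+28), -(21*m-377), by unfold p3; ring⟩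
  · exact ⟨-(m^2+9*m-8), 1, by unfold p3; ring⟩
lemma bz2 (m : ℤ) : Bz (g3 m) (q3 m) (1536*12) := by
  apply Bz.mul
  · exact ⟨24*3025 + (55*m-987)*(4*m+73), -(55*m-987), by unfold q3; ring⟩
  · exact ⟨4*m^2-3*m+13, -1, by unfold q3; ring⟩
lemma bz3 (A s : ℤ) : Bz (g3 (A*s^2)) (2*s*p3 (A*s^2)) (2*1*(1536*12)) := by
  apply Bz.mul' (Bz.mul' ⟨0, 1, by ring⟩ ?_) (bz1 _)
  exact ⟨1, -A*s*((A*s^2)^2-17*(A*s^2)-17), by unfold g3; ring⟩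
lemma bz4 (A s : ℤ) : Bz (A*s*g3 (A*s^2)) (2*q3 (A*s^2)) ((A*s*0+2)*(1*1*(1536*12))) := by
  apply Bz.mul'
  · exact ⟨0, 1, by ring⟩
  · apply Bz.mul (Bz.mul ?_ ?_) (bz2 _)
    · exact ⟨-s^2*(4*(A*s^2)^2+A*s^2+10), 1, by unfold q3; ring⟩
    · exact ⟨-A*s*(4*(A*s^2)^2+A*s^2+10), 1, by unfold q3; ring⟩

lemma logn_top (d : ℕ) (hd : 0 < d) : Tendsto (fun n : ℕ => (d:ℝ) * Real.log n) atTop atTop :=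
  (Real.tendsto_log_atTop.comp tendsto_natCast_atTop_atTop).const_mul_atTop (by exact_mod_cast hd)

theorem caseB0 {A : ℤ} (hA : A ≠ 0) : ¬ Mst A 0 := by
  intro hM
  have hA' : (A:ℝ) ≠ 0 := by exact_mod_cast hA
  have hAq : (A:ℚ) ≠ 0 := by exact_mod_cast hA
  let m : ℕ → ℤ := fun n => A * (n:ℤ)^2
  have tg : Tendsto (fun n : ℕ => (g3 (m n):ℝ)/(n:ℝ)^6) atTop (𝓝 ((A:ℝ)^3)) := by
    have := tdF (f := fun n : ℕ => (g3 (m n):ℝ)/(n:ℝ)^6)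
      (F := fun x => (A:ℝ)^3-17*A^2*x^2-17*A*x^4+x^6) (by fun_prop) (by
        intro n hn
        have : (n:ℝ) ≠ 0 := by positivity
        simp only [g3, m]; push_cast; field_simp; ring)
    simpa using this
  have tp : Tendsto (fun n : ℕ => (p3 (m n):ℝ)/(n:ℝ)^6) atTop (𝓝 ((A:ℝ)^3)) := by
    have := tdF (f := fun n : ℕ => (p3 (m n):ℝ)/(n:ℝ)^6)
      (F := fun x => (A:ℝ)^3+10*A^2*x^2+A*x^4+4*x^6) (by fun_prop) (by
        intro n hn
        have : (n:ℝ) ≠ 0 := by positivity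
        simp only [p3, m]; push_cast; field_simp)
    simpa using this
  have tq : Tendsto (fun n : ℕ => (q3 (m n):ℝ)/(n:ℝ)^6) atTop (𝓝 (4*(A:ℝ)^3)) := by
    have := tdF (f := fun n : ℕ => (q3 (m n):ℝ)/(n:ℝ)^6)
      (F := fun x => 4*(A:ℝ)^3+A^2*x^2+10*A*x^4+x^6) (by fun_prop) (by
        intro n hn
        have : (n:ℝ) ≠ 0 := by positivity
        simp only [q3, m]; push_cast; field_simp)
    simpa using this
  have tk : Tendsto (fun n : ℕ => ((m n)^4+20*(m n)^3+86*(m n)^2+20*(m n)+1:ℝ)/(n:ℝ)^8) atTop (𝓝 ((A:ℝ)^4)) := by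
    have := tdF (f := fun n : ℕ => ((m n)^4+20*(m n)^3+86*(m n)^2+20*(m n)+1:ℝ)/(n:ℝ)^8)
      (F := fun x => (A:ℝ)^4+20*A^3*x^2+86*A^2*x^4+20*A*x^6+x^8) (by fun_prop) (by
        intro n hn
        have : (n:ℝ) ≠ 0 := by positivity
        simp only [m]; push_cast; field_simp)
    simpa using this
  have tl : Tendsto (fun n : ℕ => ((m n)^4+6*(m n)^3-6*(m n)-1:ℝ)/(n:ℝ)^8) atTop (𝓝 ((A:ℝ)^4)) := by
    have := tdF (f := fun n : ℕ => ((m n)^4+6*(m n)^3-6*(m n)-1:ℝ)/(n:ℝ)^8)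
      (F := fun x => (A:ℝ)^4+6*A^3*x^2-6*A*x^6-x^8) (by fun_prop) (by
        intro n hn
        have : (n:ℝ) ≠ 0 := by positivity
        simp only [m]; push_cast; field_simp)
    simpa using this
  have hA3 : (A:ℝ)^3 ≠ 0 := pow_ne_zero _ hA'
  have hA4 : (A:ℝ)^4 ≠ 0 := pow_ne_zero _ hA'
  have tx : Tendsto (fun n : ℕ => ((n:ℝ))⁻¹) atTop (𝓝 0) := tendsto_inv_atTop_nhds_zero_nat
  have eg : ∀ᶠ n in atTop, g3 (m n) ≠ 0 := (evne tg hA3).mono (fun n h h0 => h (by rw [h0]; simp))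
  have ep : ∀ᶠ n in atTop, p3 (m n) ≠ 0 := (evne tp hA3).mono (fun n h h0 => h (by rw [h0]; simp))
  have eq : ∀ᶠ n in atTop, q3 (m n) ≠ 0 :=
    (evne tq (mul_ne_zero four_ne_zero hA3)).mono (fun n h h0 => h (by rw [h0]; simp))
  have ek : ∀ᶠ n in atTop, ((m n)^4+20*(m n)^3+86*(m n)^2+20*(m n)+1:ℚ) ≠ 0 :=
    (evne tk hA4).mono (fun n h h0 => h (by
      have : ((m n)^4+20*(m n)^3+86*(m n)^2+20*(m n)+1:ℝ) = 0 := by exact_mod_cast h0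
      rw [this]; simp))
  have el : ∀ᶠ n in atTop, ((m n)^4+6*(m n)^3-6*(m n)-1:ℚ) ≠ 0 :=
    (evne tl hA4).mono (fun n h h0 => h (by
      have : ((m n)^4+6*(m n)^3-6*(m n)-1:ℝ) = 0 := by exact_mod_cast h0
      rw [this]; simp))
  let z : ℕ → ℚ := fun n => ((A*n*g3 (m n) : ℤ):ℚ)/((2*q3 (m n) : ℤ):ℚ)
  let w : ℕ → ℚ := fun n => ((g3 (m n) : ℤ):ℚ)/((2*n*p3 (m n) : ℤ):ℚ)
  obtain ⟨C1, hz⟩ := hts (p := fun n : ℕ => A*n*g3 (m n)) (q := fun n : ℕ => 2*q3 (m n)) (d := 7)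
    (L := A*(A:ℝ)^3) (L' := 2*(0*(4*(A:ℝ)^3)))
    ((tg.const_mul (A:ℝ)).congr' (by
      filter_upwards [eventually_gt_atTop 0] with n hn
      have : (n:ℝ) ≠ 0 := by positivity
      push_cast; field_simp))
    (((tx.mul tq).const_mul 2).congr' (by
      filter_upwards [eventually_gt_atTop 0] with n hn
      have : (n:ℝ) ≠ 0 := by positivity
      push_cast; field_simp)) (Or.inl (mul_ne_zero hA' hA3))
    (G := 2*(1536*12)) (by norm_num) (eq.mono (fun n h => by positivity))
    (Eventually.of_forall (fun n => by simpa using bz4 A n))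
  obtain ⟨C2, hw⟩ := hts (p := fun n : ℕ => g3 (m n)) (q := fun n : ℕ => 2*n*p3 (m n)) (d := 7)
    (L := 0*(A:ℝ)^3) (L' := 2*(A:ℝ)^3)
    ((tx.mul tg).congr' (by
      filter_upwards [eventually_gt_atTop 0] with n hn
      have : (n:ℝ) ≠ 0 := by positivity
      push_cast; field_simp))
    ((tp.const_mul 2).congr' (by
      filter_upwards [eventually_gt_atTop 0] with n hn
      have : (n:ℝ) ≠ 0 := by positivity
      push_cast; field_simp)) (Or.inr (mul_ne_zero two_ne_zero hA3))
    (G := 2*(1536*12)) (by norm_num) (by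
      filter_upwards [ep, eventually_gt_atTop 0] with n h hn
      have : (n:ℤ) ≠ 0 := by positivity
      positivity)
    (Eventually.of_forall (fun n => by simpa using bz3 A n))
  suffices hE : ∃ r : ℚ, ∃ᶠ n in atTop, biq A 0 (z n) (w n) r = 0 by
    obtain ⟨r, hr⟩ := hE
    have ta : Tendsto (fun n : ℕ => (z n:ℝ)/n) atTop (𝓝 (A/8)) := by
      have h := (tg.const_mul (A:ℝ)).div (tq.const_mul 2) (by positivity)
      rw [show (A:ℝ)*A^3/(2*(4*A^3)) = A/8 by field_simp; norm_num] at h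
      apply h.congr'
      filter_upwards [eventually_gt_atTop 0, eq] with n hn hq
      have : (n:ℝ) ≠ 0 := by positivity
      have hq' : (q3 (m n):ℝ) ≠ 0 := by exact_mod_cast hq
      simp only [z, Pi.div_apply]; push_cast; field_simp
    have tb : Tendsto (fun n : ℕ => (w n:ℝ)*n) atTop (𝓝 (1/2)) := by
      have h := tg.div (tp.const_mul 2) (by positivity)
      rw [show (A:ℝ)^3/(2*A^3) = 1/2 by field_simp] at h
      apply h.congr'
      filter_upwards [eventually_gt_atTop 0, ep] with n hn hq
      have : (n:ℝ) ≠ 0 := by positivity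
      have hq' : (p3 (m n):ℝ) ≠ 0 := by exact_mod_cast hq
      simp only [w, Pi.div_apply]; push_cast; field_simp
    by_cases hr0 : r = 0
    · have t := evne (((ta.mul tb).sub_const (A:ℝ)).pow 2)
        (by rw [show (A:ℝ)/8*(1/2)-A = -(15/16)*A by ring]; positivity)
      obtain ⟨n, h1, h2, hn⟩ := (hr.and_eventually (t.and (eventually_gt_atTop 0))).exists
      apply h2
      have hn' : (n:ℝ) ≠ 0 := by positivity
      rw [hr0] at h1
      have h1' : ((z n*w n-A:ℚ):ℝ)^2 = 0 := by
        simp only [biq] at h1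
        exact_mod_cast (by linear_combination h1 : (z n*w n-A)^2 = 0)
      rw [← h1']; push_cast; field_simp
    · have hr' : (r:ℝ) ≠ 0 := by exact_mod_cast hr0
      have t := ((((ta.sub ((tx.pow 2).mul tb)).pow 2).const_mul ((r:ℝ)^2)).sub
        ((((tx.mul (ta.add ((tx.pow 2).mul tb))).mul ((ta.mul tb).const_add (A:ℝ)))).const_mul (2*(r:ℝ)))).add
        ((tx.pow 2).mul (((ta.mul tb).sub_const (A:ℝ)).pow 2))
      have t := evne t (by
        ring_nf; positivity)
      obtain ⟨n, h1, h2, hn⟩ := (hr.and_eventually (t.and (eventually_gt_atTop 0))).exists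
      apply h2
      have hn' : (n:ℝ) ≠ 0 := by positivity
      have h1' : (r:ℝ)^2*(z n-w n)^2 - 2*r*((z n+w n)*(A+z n*w n)) + (z n*w n-A)^2 = 0 := by
        simp only [biq] at h1
        exact_mod_cast (by push_cast at h1; linear_combination h1 : r^2*(z n-w n)^2 - 2*r*((z n+w n)*(A+z n*w n)) + (z n*w n-A)^2 = 0)
      have : ∀ x y ν : ℝ, ν ≠ 0 → r^2 * (x/ν - ν⁻¹^2*(y*ν))^2 - 2*r*(ν⁻¹*(x/ν+ν⁻¹^2*(y*ν))*(A+x/ν*(y*ν))) + ν⁻¹^2*(x/ν*(y*ν)-A)^2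
          = ((r:ℝ)^2*(x-y)^2 - 2*r*((x+y)*(A+x*y)) + (x*y-A)^2)/ν^2 := by
        intro x y ν hν
        field_simp
      rw [this _ _ _ hn', h1', zero_div]
  refine eqh hM z w (fun n => (m n:ℚ)*p3 (m n)^2/q3 (m n)^2) (C' := C1 + C2) ?_ ?_ ?_ ?_ ?_
  · filter_upwards [eventually_gt_atTop 0, ep, eq, eg, el] with n hn hp hq hg hl h
    have hn' : (n:ℚ) ≠ 0 := by positivity
    have hp' : (p3 (m n):ℚ) ≠ 0 := by exact_mod_cast hp
    have hq' : (q3 (m n):ℚ) ≠ 0 := by exact_mod_cast hq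
    have hg' : (g3 (m n):ℚ) ≠ 0 := by exact_mod_cast hg
    simp only [z, w] at h
    push_cast at h
    field_simp at h
    apply hl
    have e : (m n:ℚ) = A * n^2 := by simp only [m]; push_cast; ring
    rw [mul_comm, ← e] at h
    simp only [p3, q3] at h
    push_cast at h
    linear_combination h
  · filter_upwards [eventually_gt_atTop 0, ep, eq, eg, ek] with n hn hp hq hg hk h
    have hn' : (n:ℚ) ≠ 0 := by positivity
    have hp' : (p3 (m n):ℚ) ≠ 0 := by exact_mod_cast hp
    have hq' : (q3 (m n):ℚ) ≠ 0 := by exact_mod_cast hq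
    have hg' : (g3 (m n):ℚ) ≠ 0 := by exact_mod_cast hg
    have e : (m n:ℚ) = A * n^2 := by simp only [m]; push_cast; ring
    have e2 : ((g3 (m n):ℚ)^2 + 4*m n*p3 (m n)^2) = q3 (m n)*((m n)^4+20*(m n)^3+86*(m n)^2+20*(m n)+1:ℚ) := by
      simp only [g3, p3, q3]; push_cast; ring
    have e3 : (w n)^3 + A*w n + ((0:ℤ):ℚ) = g3 (m n)*((g3 (m n):ℚ)^2 + 4*m n*p3 (m n)^2)/(2*n*p3 (m n))^3 := by
      rw [e]; simp only [w]; push_cast; field_simp; ring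
    rw [e3, e2] at h
    have : (g3 (m n):ℚ)*(q3 (m n)*((m n)^4+20*(m n)^3+86*(m n)^2+20*(m n)+1:ℚ))/(2*n*p3 (m n))^3 ≠ 0 := by positivity
    exact this h
  · filter_upwards [eventually_gt_atTop 0, ep, eq] with n hn hp hq
    have hn' : (n:ℚ) ≠ 0 := by positivity
    have hp' : (p3 (m n):ℚ) ≠ 0 := by exact_mod_cast hp
    have hq' : (q3 (m n):ℚ) ≠ 0 := by exact_mod_cast hq
    have e : (m n:ℚ) = A * n^2 := by simp only [m]; push_cast; ring
    have e2 : ((g3 (m n):ℚ)^2 + 4*m n*p3 (m n)^2) = q3 (m n)*((m n)^4+20*(m n)^3+86*(m n)^2+20*(m n)+1:ℚ) := by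
      simp only [g3, p3, q3]; push_cast; ring
    have e4 : (m n*(g3 (m n):ℚ)^2 + 4*q3 (m n)^2) = p3 (m n)*((m n)^4+20*(m n)^3+86*(m n)^2+20*(m n)+1:ℚ) := by
      simp only [g3, p3, q3]; push_cast; ring
    have e3 : (w n)^3 + A*w n + ((0:ℤ):ℚ) = g3 (m n)*((g3 (m n):ℚ)^2 + 4*m n*p3 (m n)^2)/(2*n*p3 (m n))^3 := by
      rw [e]; simp only [w]; push_cast; field_simp; ring
    have e5 : (z n)^3 + A*z n + ((0:ℤ):ℚ) = A^2*n*g3 (m n)*(m n*(g3 (m n):ℚ)^2 + 4*q3 (m n)^2)/(2*q3 (m n))^3 := by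
      rw [e]; simp only [z]; push_cast; field_simp; ring
    rw [e3, e5, e2, e4]
    generalize (m n:ℚ)^4+20*(m n)^3+86*(m n)^2+20*(m n)+1 = K
    simp only [e]
    field_simp
  · apply tendsto_atTop_mono' atTop _ (tendsto_atTop_add_const_right _ (-C1) (logn_top 7 (by norm_num)))
    filter_upwards [hz] with t ht
    rw [abs_le] at ht
    simp only [z]; linarith [ht.1]
  · filter_upwards [hz, hw] with t h1 h2
    rw [abs_le] at h1 h2 ⊢
    simp only [z, w]
    constructor <;> linarith [h1.1, h1.2, h2.1, h2.2]

end RS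

namespace RS
open Height Filter Topology

def QQ (u : ℤ) : ℤ := 2*u^4+17*u^3+552*u^2-640*u-448
def RR (u : ℤ) : ℤ := u^4+103*u^3+600*u^2-320*u+640
def SS (u : ℤ) : ℤ := -u^4+86*u^3+48*u^2+320*u+1088

lemma bzSQ (u : ℤ) : Bz (SS u) (QQ u) 914550912 :=
  ⟨860310-249260*u-6292*u^2-968*u^3, 47916-59290*u+42592*u^2-484*u^3, by unfold SS QQ; ring⟩
lemma bzRQ (u : ℤ) : Bz (RR u) (QQ u) 914550912 :=
  ⟨860310-249260*u-6292*u^2-968*u^3, -812394+189970*u+48884*u^2+484*u^3, by unfold RR QQ; ring⟩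
lemma bz8Q (u : ℤ) : Bz (u-8) (QQ u) 46656 :=
  ⟨-5888-816*u-33*u^2-2*u^3, 1, by unfold QQ; ring⟩
lemma bzR1 (u : ℤ) : Bz (RR u) (u+1) 1458 :=
  ⟨1, 818-498*u-102*u^2-u^3, by unfold RR; ring⟩
lemma bz81 (u : ℤ) : Bz (u-8) (u+1) (-9) := ⟨1, -1, by ring⟩
lemma bzxQ (B n : ℤ) : Bz (B*n) (QQ (B^2*n^3)) (-448) :=
  ⟨-(B*n^2*(2*(B^2*n^3)^3+17*(B^2*n^3)^2+552*(B^2*n^3)-640)), 1, by unfold QQ; ring⟩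
lemma bzx1 (B n : ℤ) : Bz (B*n) (B^2*n^3+1) 1 := ⟨-(B*n^2), 1, by ring⟩
lemma bz4' (p : ℤ) : Bz p 4 4 := ⟨0, 1, by ring⟩

lemma bzw (B n : ℤ) : Bz (B*n*SS (B^2*n^3)) (QQ (B^2*n^3)) (-448*914550912) :=
  (bzxQ B n).mul (bzSQ _)
lemma bzz (B n : ℤ) : Bz (B*n*(B^2*n^3-8)*RR (B^2*n^3)) (4*(B^2*n^3+1)*QQ (B^2*n^3))
    (4*(1*(-9)*1458)*(-448*46656*914550912)) :=
  ((bz4' _).mul' (((bzx1 B n).mul (bz81 _)).mul (bzR1 _))).mul' (((bzxQ B n).mul (bz8Q _)).mul (bzRQ _))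

lemma log_le_lh (r : ℚ) (hr : r ≠ 0) : Real.log |(r:ℝ)| ≤ logHeight₁ r := by
  rw [Rat.logHeight₁_eq_log_max]
  apply Real.log_le_log (by positivity)
  have h1 : |(r:ℝ)| * r.den = |(r.num:ℝ)| := by
    have : (r:ℝ) * r.den = r.num := by exact_mod_cast Rat.mul_den_eq_num r
    rw [← this, abs_mul, abs_of_nonneg (by positivity : (0:ℝ) ≤ r.den)]
  have h2 : (1:ℝ) ≤ r.den := by exact_mod_cast r.den_pos
  have h3 : |(r:ℝ)| ≤ |(r.num:ℝ)| := by rw [← h1]; nlinarith [abs_nonneg (r:ℝ)]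
  push_cast
  apply h3.trans
  apply le_max_of_le_left
  rw [Nat.cast_natAbs]; push_cast; exact le_rfl

lemma quad_lb {ρ P b c : ℝ} (hP : 0 ≤ P) (hb : |b| < 1/20) (hc : 1/300 < c)
    (h : ρ^2*P - 2*ρ*b + c = 0) : 1/30 < |ρ| := by
  have h1 : ρ*b ≤ |ρ| * (1/20) := by
    calc ρ*b ≤ |ρ*b| := le_abs_self _
      _ = |ρ| * |b| := abs_mul _ _
      _ ≤ _ := by gcongr
  have h2 : 0 ≤ ρ^2*P := by positivity
  linarith

lemma sqrt_ineq {q1 q2 q3 : ℝ} (p1 : 0 ≤ q1) (p2 : 0 ≤ q2) (p3 : 0 ≤ q3) (e : q3 = (√q1-√q2)^2) :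
    q3 * q1 ≤ (q1-q2)^2 := by
  have s1 := Real.sq_sqrt p1
  have s2 := Real.sq_sqrt p2
  have n1 := Real.sqrt_nonneg q1
  have n2 := Real.sqrt_nonneg q2
  have : (q1-q2)^2 = q3 * (√q1+√q2)^2 := by
    rw [e, ← s1, ← s2, Real.sqrt_sq n1, Real.sqrt_sq n2]; ring
  rw [this]
  apply mul_le_mul_of_nonneg_left _ p3
  nlinarith [mul_nonneg n1 n2]

set_option maxHeartbeats 1000000 in
theorem keyA0 (B U Q R S : ℚ) (hQ : Q ≠ 0) (hU : U + 1 ≠ 0)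
    (id : -U*(U-8)^3*R^3*(U+1)+64*(U+1)^4*Q^3 = (U^2+20*U-8)^2*(U*S^3+Q^3)) :
    (-1)^3*(B*U*((U-8)*R/(4*(U+1)*Q))^3)+B = ((U^2+20*U-8)/(8*(U+1)^2))^2*(B*U*(S/Q)^3+B) := by
  have e1 : (-1)^3*(B*U*((U-8)*R/(4*(U+1)*Q))^3)+B
      = B*(-U*(U-8)^3*R^3*(U+1)+64*(U+1)^4*Q^3)/(64*(U+1)^4*Q^3) := by
    field_simp; ring
  have e2 : ((U^2+20*U-8)/(8*(U+1)^2))^2*(B*U*(S/Q)^3+B)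
      = B*((U^2+20*U-8)^2*(U*S^3+Q^3))/(64*(U+1)^4*Q^3) := by
    field_simp; ring
  rw [e1, e2, id]

theorem caseA0 {B : ℤ} (hB : B ≠ 0) : ¬ Mst 0 B := by
  rintro ⟨C, g, hg, hM⟩
  have hB' : (B:ℝ) ≠ 0 := by exact_mod_cast hB
  have hBq : (B:ℚ) ≠ 0 := by exact_mod_cast hB
  let u : ℕ → ℤ := fun n => B^2 * (n:ℤ)^3
  have hu0 : ∀ n : ℕ, 0 < n → u n ≠ 0 := by
    intro n hn
    have : (n:ℤ) ≠ 0 := by positivity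
    simp only [u]; positivity
  have ty : Tendsto (fun n : ℕ => ((u n:ℝ))⁻¹) atTop (𝓝 0) := by
    have := tdF (f := fun n : ℕ => ((u n:ℝ))⁻¹) (F := fun x => x^3/B^2) (by fun_prop) (by
        intro n hn
        simp only [u]; push_cast; field_simp)
    simpa using this
  have tF : ∀ (f : ℤ → ℤ) (d : ℕ) (F : ℝ → ℝ) (L : ℝ), F 0 = L → ContinuousAt F 0 → (∀ v : ℤ, v ≠ 0 → (f v:ℝ)/(v:ℝ)^d = F ((v:ℝ)⁻¹)) →
      Tendsto (fun n => (f (u n):ℝ)/(u n:ℝ)^d) atTop (𝓝 L) := by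
    intro f d F L hL hF h
    rw [← hL]
    apply (hF.tendsto.comp ty).congr'
    filter_upwards [eventually_gt_atTop 0] with n hn
    exact (h _ (hu0 n hn)).symm
  have tQ : Tendsto (fun n => (QQ (u n):ℝ)/(u n:ℝ)^4) atTop (𝓝 2) := by
    refine tF QQ 4 (fun y => 2+17*y+552*y^2-640*y^3-448*y^4) _ (by norm_num) (by fun_prop) (by
      intro v hv
      have : (v:ℝ) ≠ 0 := by exact_mod_cast hv
      simp only [QQ]; push_cast; field_simp)
  have tR : Tendsto (fun n => (RR (u n):ℝ)/(u n:ℝ)^4) atTop (𝓝 1) := by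
    refine tF RR 4 (fun y => 1+103*y+600*y^2-320*y^3+640*y^4) _ (by norm_num) (by fun_prop) (by
      intro v hv
      have : (v:ℝ) ≠ 0 := by exact_mod_cast hv
      simp only [RR]; push_cast; field_simp)
  have tS : Tendsto (fun n => (SS (u n):ℝ)/(u n:ℝ)^4) atTop (𝓝 (-1)) := by
    refine tF SS 4 (fun y => -1+86*y+48*y^2+320*y^3+1088*y^4) _ (by norm_num) (by fun_prop) (by
      intro v hv
      have : (v:ℝ) ≠ 0 := by exact_mod_cast hv
      simp only [SS]; push_cast; field_simp)
  have t8 : Tendsto (fun n => ((u n-8:ℤ):ℝ)/(u n:ℝ)^1) atTop (𝓝 1) := by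
    refine tF (fun u => u-8) 1 (fun y => 1-8*y) _ (by norm_num) (by fun_prop) (by
      intro v hv
      have : (v:ℝ) ≠ 0 := by exact_mod_cast hv
      push_cast; field_simp)
  have t1 : Tendsto (fun n => ((u n+1:ℤ):ℝ)/(u n:ℝ)^1) atTop (𝓝 1) := by
    refine tF (fun u => u+1) 1 (fun y => 1+y) _ (by norm_num) (by fun_prop) (by
      intro v hv
      have : (v:ℝ) ≠ 0 := by exact_mod_cast hv
      push_cast; field_simp)
  have eQ : ∀ᶠ n in atTop, QQ (u n) ≠ 0 := (evne tQ two_ne_zero).mono (fun n h h0 => h (by rw [h0]; simp))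
  have e1 : ∀ᶠ n in atTop, u n + 1 ≠ 0 := (evne t1 one_ne_zero).mono (fun n h h0 => h (by rw [h0]; simp))
  -- nonvanishing of two more quantities
  have eV : ∀ᶠ n in atTop, (u n:ℝ) * SS (u n)^3 + QQ (u n)^3 ≠ 0 := by
    have t := (tS.pow 3).add (ty.mul (tQ.pow 3))
    filter_upwards [evne t (by norm_num), eventually_gt_atTop 0] with n h hn h0
    apply h
    have : (u n:ℝ) ≠ 0 := by exact_mod_cast hu0 n hn
    rw [show ((SS (u n):ℝ)/(u n:ℝ)^4)^3 + (u n:ℝ)⁻¹*((QQ (u n):ℝ)/(u n:ℝ)^4)^3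
      = ((u n:ℝ) * SS (u n)^3 + QQ (u n)^3)/(u n)^13 by field_simp, h0, zero_div]
  have eW : ∀ᶠ n in atTop, ((u n-8:ℤ):ℝ) * RR (u n) + 4*(u n+1:ℤ)*SS (u n) ≠ 0 := by
    have t := (t8.mul tR).add ((t1.mul tS).const_mul 4)
    filter_upwards [evne t (by norm_num), eventually_gt_atTop 0] with n h hn h0
    apply h
    have : (u n:ℝ) ≠ 0 := by exact_mod_cast hu0 n hn
    rw [show ((u n-8:ℤ):ℝ)/(u n:ℝ)^1 * ((RR (u n):ℝ)/(u n:ℝ)^4) + 4*(((u n+1:ℤ):ℝ)/(u n:ℝ)^1 * ((SS (u n):ℝ)/(u n:ℝ)^4))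
      = (((u n-8:ℤ):ℝ) * RR (u n) + 4*(u n+1:ℤ)*SS (u n))/(u n)^5 by field_simp, h0, zero_div]
  let z0 : ℕ → ℚ := fun n => ((B*n*(u n-8)*RR (u n):ℤ):ℚ)/((4*(u n+1)*QQ (u n):ℤ):ℚ)
  let w : ℕ → ℚ := fun n => ((B*n*SS (u n):ℤ):ℚ)/((QQ (u n):ℤ):ℚ)
  have tx : Tendsto (fun n : ℕ => ((n:ℝ))⁻¹) atTop (𝓝 0) := tendsto_inv_atTop_nhds_zero_nat
  have hun : ∀ n : ℕ, (u n:ℝ) = B^2*n^3 := fun n => by simp only [u]; push_cast; ring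
  obtain ⟨C1, hz⟩ := hts (p := fun n : ℕ => B*n*(u n-8)*RR (u n)) (q := fun n : ℕ => 4*(u n+1)*QQ (u n)) (d := 16)
    (L := (B:ℝ)^11*(1*1)) (L' := 4*(B:ℝ)^10*(0*(1*2)))
    (((t8.mul tR).const_mul ((B:ℝ)^11)).congr' (by
      filter_upwards [eventually_gt_atTop 0] with n hn
      have : (n:ℝ) ≠ 0 := by positivity
      push_cast; simp only [hun]; field_simp))
    (((tx.mul (t1.mul tQ)).const_mul (4*(B:ℝ)^10)).congr' (by
      filter_upwards [eventually_gt_atTop 0] with n hn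
      have : (n:ℝ) ≠ 0 := by positivity
      push_cast; simp only [hun]; field_simp)) (Or.inl (by positivity))
    (G := (4*(1*(-9)*1458)*(-448*46656*914550912))) (by norm_num)
    (by filter_upwards [eQ, e1] with n h1 h2; positivity)
    (Eventually.of_forall (fun n => bzz B n))
  obtain ⟨C2, hw⟩ := hts (p := fun n : ℕ => B*n*SS (u n)) (q := fun n : ℕ => QQ (u n)) (d := 13)
    (L := (B:ℝ)^9*(-1)) (L' := (B:ℝ)^8*(0*2))
    ((tS.const_mul ((B:ℝ)^9)).congr' (by
      filter_upwards [eventually_gt_atTop 0] with n hn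
      have : (n:ℝ) ≠ 0 := by positivity
      push_cast; simp only [hun]; field_simp))
    (((tx.mul tQ).const_mul ((B:ℝ)^8)).congr' (by
      filter_upwards [eventually_gt_atTop 0] with n hn
      have : (n:ℝ) ≠ 0 := by positivity
      push_cast; simp only [hun]; field_simp)) (Or.inl (mul_ne_zero (by positivity) (by norm_num)))
    (G := (-448*914550912)) (by norm_num) eQ
    (Eventually.of_forall (fun n => bzw B n))
  -- limits of scaled coordinates
  have tr1 : Tendsto (fun n : ℕ => -(z0 n:ℝ)/(B*n)) atTop (𝓝 (-1/8)) := by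
    have h := (t8.mul tR).div ((t1.mul tQ).const_mul (-4)) (by norm_num)
    rw [show (1*1:ℝ)/(-4*(1*2)) = -1/8 by norm_num] at h
    apply h.congr'
    filter_upwards [eventually_gt_atTop 0, eQ, e1] with n hn hq h1
    have : (n:ℝ) ≠ 0 := by positivity
    have : (u n:ℝ) ≠ 0 := by exact_mod_cast hu0 n hn
    have hq' : (QQ (u n):ℝ) ≠ 0 := by exact_mod_cast hq
    have h1' : ((u n + 1 : ℤ):ℝ) ≠ 0 := by exact_mod_cast h1
    simp only [z0, Pi.div_apply]; push_cast at h1' ⊢; field_simp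
  have tr2 : Tendsto (fun n : ℕ => (w n:ℝ)/(B*n)) atTop (𝓝 (-1/2)) := by
    have h := tS.div tQ (by norm_num)
    apply h.congr'
    filter_upwards [eventually_gt_atTop 0, eQ] with n hn hq
    have : (n:ℝ) ≠ 0 := by positivity
    have : (u n:ℝ) ≠ 0 := by exact_mod_cast hu0 n hn
    have hq' : (QQ (u n):ℝ) ≠ 0 := by exact_mod_cast hq
    simp only [w, Pi.div_apply]; push_cast; field_simp
  have tb := ((tr1.add tr2).mul (tr1.mul tr2)).add (ty.const_mul 2)
  have tc := ((tr1.mul tr2).pow 2).sub ((tr1.add tr2).mul (ty.const_mul 4))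
  have tb' := (tb.abs).eventually_lt_const (u := 1/20) (by norm_num [abs_lt])
  have tc' := tc.eventually_const_lt (u := 1/300) (by norm_num)
  have tL : Tendsto (fun n : ℕ => Real.log n) atTop atTop :=
    Real.tendsto_log_atTop.comp tendsto_natCast_atTop_atTop
  set K : ℝ := |C| + |C1| + |C2| + Real.log 30 with hK
  have hl30 : 0 < Real.log 30 := Real.log_pos (by norm_num)
  have kC := le_abs_self C
  have kC1 := le_abs_self C1
  have kC2 := le_abs_self C2
  have nC := abs_nonneg C
  have nC1 := abs_nonneg C1
  have nC2 := abs_nonneg C2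
  obtain ⟨n, hn, hq, h1, hv, hW, hzn, hwn, hb, hc, hL⟩ := ((eventually_gt_atTop 0).and <| eQ.and <| e1.and <|
    eV.and <| eW.and <| hz.and <| hw.and <| tb'.and <| tc'.and <| tL.eventually_gt_atTop (100*K)).exists
  have hnq : (n:ℚ) ≠ 0 := by positivity
  have hnr : (n:ℝ) ≠ 0 := by positivity
  have huq : (u n:ℚ) ≠ 0 := by exact_mod_cast hu0 n hn
  have hqq : (QQ (u n):ℚ) ≠ 0 := by exact_mod_cast hq
  have h1q : ((u n:ℚ)+1) ≠ 0 := by exact_mod_cast h1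
  have hxq : (B:ℚ)*n ≠ 0 := mul_ne_zero hBq hnq
  have hux : (B:ℚ) * u n = ((B:ℚ)*n)^3 := by simp only [u]; push_cast; ring
  have hzx : z0 n = (B*n) * ((u n-8)*RR (u n)/(4*(u n+1)*QQ (u n))) := by
    simp only [z0]; push_cast; ring
  have hwx : w n = (B*n) * (SS (u n)/QQ (u n)) := by
    simp only [w]; push_cast; ring
  have hE := hM (-z0 n) (w n) (((u n:ℚ)^2+20*u n-8)/(8*(u n+1)^2)) (by
      intro h
      apply hW
      rw [hzx, hwx] at h
      have h2 : -((u n-8)*RR (u n)/(4*(u n+1)*QQ (u n))) = (SS (u n)/QQ (u n):ℚ) := by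
        apply mul_left_cancel₀ hxq; linear_combination h
      field_simp at h2
      have h3 : ((u n:ℚ)-8)*RR (u n) + 4*(u n+1)*SS (u n) = 0 := by linear_combination -h2
      have h4 : (u n-8)*RR (u n) + 4*(u n+1)*SS (u n) = 0 := by exact_mod_cast h3
      exact_mod_cast h4) (by
      intro h
      apply hv
      have h2 : (w n)^3 + ((0:ℤ):ℚ)*w n + B = B*(u n*SS (u n)^3+QQ (u n)^3)/QQ (u n)^3 := by
        rw [hwx, mul_pow, ← hux]; push_cast; field_simp; ring
      rw [h2] at h
      have h3 : (u n:ℚ)*SS (u n)^3+QQ (u n)^3 = 0 := by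
        have := (div_eq_zero_iff.1 h).resolve_right (pow_ne_zero 3 hqq)
        exact (mul_eq_zero.1 this).resolve_left hBq
      exact_mod_cast h3) (by
      rw [neg_pow, hzx, hwx, mul_pow ((B:ℚ)*n), mul_pow ((B:ℚ)*n), ← hux]
      have id : -(u n:ℚ)*(u n-8)^3*RR (u n)^3*(u n+1)+64*(u n+1)^4*QQ (u n)^3 = ((u n:ℚ)^2+20*u n-8)^2*(u n*SS (u n)^3+QQ (u n)^3) := by
        simp only [QQ, RR, SS]; push_cast; ring
      rw [Int.cast_zero, zero_mul, zero_mul, add_zero, add_zero]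
      exact keyA0 _ _ _ _ _ hqq h1q id)
  obtain ⟨r, hr, q1, q2, q3, p1, p2, p3, a1, a2, a3, e, -⟩ := hE
  -- lower bound for r
  have hxr : (B:ℝ)*n ≠ 0 := mul_ne_zero hB' hnr
  have hur : (u n:ℝ) ≠ 0 := by exact_mod_cast hu0 n hn
  have huxr : (B:ℝ) = ((B:ℝ)*n)^3 * (u n:ℝ)⁻¹ := by rw [hun]; field_simp
  have hrr : (r:ℝ)^2*(-z0 n-w n)^2 - 2*r*((-z0 n+w n)*(-z0 n*w n)+2*B) + ((-z0 n*w n)^2 - 4*B*(-z0 n+w n)) = 0 := by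
    simp only [biq] at hr
    have : r^2*(-z0 n-w n)^2 - 2*r*((-z0 n+w n)*(-z0 n*w n)+2*B) + ((-z0 n*w n)^2 - 4*B*(-z0 n+w n)) = 0 := by
      push_cast at hr; linear_combination hr
    exact_mod_cast this
  have hρ : 1/30 < |(r:ℝ)/(B*n)| := by
    apply quad_lb (P := (-(z0 n:ℝ)/(B*n) - w n/(B*n))^2) (sq_nonneg _) hb hc
    have key : ∀ x y Z W r B : ℝ, x ≠ 0 → B = x^3*y →
        (r/x)^2*(Z/x-W/x)^2 - 2*(r/x)*((Z/x+W/x)*(Z/x*(W/x))+2*y)+((Z/x*(W/x))^2-(Z/x+W/x)*(4*y))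
        = (r^2*(Z-W)^2 - 2*r*((Z+W)*(Z*W)+2*B) + ((Z*W)^2 - 4*B*(Z+W)))/x^4 := by
      intro x y Z W r B hx hB
      rw [hB]; field_simp
    rw [key _ _ _ _ _ _ hxr huxr, hrr, zero_div]
  have hr0 : r ≠ 0 := by
    rintro rfl
    norm_num at hρ
  have hn1 : (0:ℝ) < n := by positivity
  have hB1 : (1:ℝ) ≤ |(B:ℝ)| := by exact_mod_cast Int.one_le_abs hB
  have hrn : (n:ℝ)/30 ≤ |(r:ℝ)| := by
    rw [abs_div, lt_div_iff₀ (abs_pos.2 hxr), abs_mul, abs_of_pos hn1] at hρ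
    nlinarith
  have hlr : Real.log n - Real.log 30 ≤ logHeight₁ r := by
    rw [← Real.log_div hnr (by norm_num)]
    exact (Real.log_le_log (by positivity) hrn).trans (log_le_lh r hr0)
  have hz' : |logHeight₁ (z0 n) - (16:ℕ)*Real.log n| ≤ C1 := hzn
  have hw' : |logHeight₁ (w n) - (13:ℕ)*Real.log n| ≤ C2 := hwn
  rw [logHeight₁_neg] at a1
  rw [abs_le] at a1 a2 a3 hz' hw'
  push_cast at hz' hw'
  have h8 := sqrt_ineq p1 p2 p3 e
  clear_value z0 w u K
  generalize Real.log n = l at *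
  have b1 : 15*l ≤ q1 := by linarith
  have b3 : (9/10)*l ≤ q3 := by linarith
  have b2 : q1 - q2 ≤ (7/2)*l := by linarith
  have b4 : -((7/2)*l) ≤ q1 - q2 := by linarith
  have lp : 0 < l := by linarith
  have b5 : (q1-q2)^2 ≤ ((7/2)*l)^2 := sq_le_sq' b4 b2
  have b6 : (9/10)*l*(15*l) ≤ q3*q1 := mul_le_mul b3 b1 (by positivity) p3
  nlinarith only [b5, b6, h8, lp]

end RS

namespace RS
theorem no_small {a b c : ℤ} (hf : disc a b c ≠ 0) {sq : ℤ → ℤ} (hsq : IsSqfreePart sq) {j : ℝ}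
    (hj : 0 < j) (hj1 : j ≤ 1) : ¬ RankBound a b c j := by
  intro hR
  have hM := master hf hsq (dep_of hj hj1 hR)
  by_cases hA : AA a b = 0
  · by_cases hB : BB a b c = 0
    · have := disc_AB a b c
      rw [hA, hB] at this
      apply hf
      linarith
    · rw [hA] at hM
      exact caseA0 hB hM
  · by_cases hB : BB a b c = 0
    · rw [hB] at hM
      exact caseB0 hA hM
    · exact caseAB hA hB hM

theorem root_bd (a b c : ℤ) (r : ℝ) (h : r^3 + a*r^2 + b*r + c = 0) :
    |r| < 2 + |(a:ℝ)| + |(b:ℝ)| + |(c:ℝ)| := by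
  by_contra hc
  push Not at hc
  have h1 : |r|^3 ≤ |(a:ℝ)| * |r| ^ 2 + |(b:ℝ)| * |r| + |(c:ℝ)| := by
    have : r^3 = -(a*r^2 + b*r + c) := by linarith
    calc |r|^3 = |r^3| := (abs_pow _ _).symm
      _ = |(a:ℝ)*r^2 + b*r + c| := by rw [this, abs_neg]
      _ ≤ |(a:ℝ)*r^2| + |(b:ℝ)*r| + |(c:ℝ)| := abs_add_three _ _ _
      _ = _ := by rw [abs_mul, abs_mul, abs_pow]
  have ha := abs_nonneg (a:ℝ)
  have hb := abs_nonneg (b:ℝ)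
  have hcc := abs_nonneg (c:ℝ)
  generalize |(a:ℝ)| = A at *
  generalize |(b:ℝ)| = B at *
  generalize |(c:ℝ)| = C at *
  generalize |r| = t at *
  have ht : 1 ≤ t := by linarith
  have h2 : t ≤ t^2 := by nlinarith
  have h3 : 1 ≤ t^2 := by nlinarith
  have h4 : B*t ≤ B*t^2 := mul_le_mul_of_nonneg_left h2 hb
  have h5 : C*1 ≤ C*t^2 := mul_le_mul_of_nonneg_left h3 hcc
  have h6 : (2+A+B+C)*t^2 ≤ t*t^2 := mul_le_mul_of_nonneg_right hc (by positivity)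
  nlinarith

theorem broad_univ (a b c : ℤ) : Broad a b c Set.univ :=
  ⟨isOpen_univ, ⟨_, trivial, fun r h => (abs_lt.1 (root_bd a b c r h)).2⟩,
    ⟨_, trivial, fun r h => (abs_lt.1 (root_bd a b c r h)).1⟩⟩
end RS

theorem rank_tfae_S (a b c : ℤ) (hf : DistinctRoots a b c)
    (sq : ℤ → ℤ) (hsq : IsSqfreePart sq) (j : ℝ) (hj : 0 < j) :
    List.TFAE
      [RankBound a b c j,
       ∃ k : ℝ, 1 ≤ k ∧ ∃ X : Set ℝ, Broad a b c X ∧ SConv a b c sq j k X,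
       ∀ k : ℝ, 1 ≤ k → SConv a b c sq j k Set.univ] := by
  have hd := RS.disc_ne hf
  tfae_have 1 → 3 := by
    intro hR k hk
    by_cases h1 : 1 < j
    · exact RS.ac_big hd hsq h1 hR k hk
    · exact absurd hR (RS.no_small hd hsq hj (not_lt.1 h1))
  tfae_have 3 → 2 := fun h => ⟨1, le_rfl, Set.univ, RS.broad_univ a b c, h 1 le_rfl⟩
  tfae_have 2 → 1 := by
    rintro ⟨k, hk, X, hX, hS⟩
    exact RS.ba hd hsq hj hk hX hS
  tfae_finish
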